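/- arXiv:1405.6107 — 3 statements merged into one kernel-verified Lean document; each statement's English description precedes it below -/
import Mathlib

section
/- Assume the Continuum Hypothesis. If X is a productively Lindelöf topological space such that the Lindelöf number of X^ω is at most 𝔠, then X is powerfully Lindelöf. -/
open Set Cardinal Topology

universe u v

/-- A space is quasi-Lindelöf if every open cover has a countable subcover
(no separation axioms assumed). -/
def QuasiLindelofSp (X : Type u) [TopologicalSpace X] : Prop :=
  ∀ 𝒰 : Set (Set X), (∀ U ∈ 𝒰, IsOpen U) → ⋃₀ 𝒰 = Set.univ →
    ∃ 𝒱 ⊆ 𝒰, 𝒱.Countable ∧ ⋃₀ 𝒱 = Set.univ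

/-- Lindelöf in the sense of Engelking: regular (T3, including T1) and
every open cover has a countable subcover. -/
def EngLindelofSp (X : Type u) [TopologicalSpace X] : Prop :=
  RegularSpace X ∧ T1Space X ∧ QuasiLindelofSp X

/-- X is productively Lindelöf if X × Y is Lindelöf for every Lindelöf space Y. -/
def ProductivelyLindelofSp (X : Type u) [TopologicalSpace X] : Prop :=
  ∀ (Y : Type u) [TopologicalSpace Y], EngLindelofSp Y → EngLindelofSp (X × Y)

/-- X is productively quasi-Lindelöf if X × Y is quasi-Lindelöf for every Lindelöf space Y. -/
def ProductivelyQuasiLindelofSp (X : Type u) [TopologicalSpace X] : Prop :=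
  ∀ (Y : Type u) [TopologicalSpace Y], EngLindelofSp Y → QuasiLindelofSp (X × Y)

/-- X is powerfully Lindelöf if X^ω is Lindelöf. -/
def PowerfullyLindelofSp (X : Type u) [TopologicalSpace X] : Prop :=
  EngLindelofSp (ℕ → X)

/-- X is powerfully quasi-Lindelöf if X^ω is quasi-Lindelöf. -/
def PowerfullyQuasiLindelofSp (X : Type u) [TopologicalSpace X] : Prop :=
  QuasiLindelofSp (ℕ → X)

/-- Tightness of X is at most κ. -/
def TightnessLE (X : Type u) [TopologicalSpace X] (κ : Cardinal.{u}) : Prop :=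
  ∀ (A : Set X) (x : X), x ∈ closure A → ∃ B ⊆ A, #B ≤ κ ∧ x ∈ closure B

/-- X has countable tightness. -/
def CountableTightness (X : Type u) [TopologicalSpace X] : Prop :=
  ∀ (A : Set X) (x : X), x ∈ closure A → ∃ B ⊆ A, B.Countable ∧ x ∈ closure B

/-- The Lindelöf number of X is at most κ: every open cover has a subcover of size ≤ κ. -/
def LindelofNumberLE (X : Type u) [TopologicalSpace X] (κ : Cardinal.{u}) : Prop :=
  ∀ 𝒰 : Set (Set X), (∀ U ∈ 𝒰, IsOpen U) → ⋃₀ 𝒰 = Set.univ →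
    ∃ 𝒱 ⊆ 𝒰, #𝒱 ≤ κ ∧ ⋃₀ 𝒱 = Set.univ

/-- The weight of X is at most κ: there is a base of size ≤ κ. -/
def WeightLE (X : Type u) [TopologicalSpace X] (κ : Cardinal.{u}) : Prop :=
  ∃ B : Set (Set X), TopologicalSpace.IsTopologicalBasis B ∧ #B ≤ κ

/-- N is a network for X. -/
def IsNetwork (X : Type u) [TopologicalSpace X] (N : Set (Set X)) : Prop :=
  ∀ (x : X) (U : Set X), IsOpen U → x ∈ U → ∃ n ∈ N, x ∈ n ∧ n ⊆ U

/-- X is linearly Lindelöf: regular (incl. T1) and every open cover linearly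
ordered by inclusion has a countable subcover. -/
def LinearlyLindelofSp (X : Type u) [TopologicalSpace X] : Prop :=
  RegularSpace X ∧ T1Space X ∧
    ∀ 𝒰 : Set (Set X), (∀ U ∈ 𝒰, IsOpen U) → IsChain (· ⊆ ·) 𝒰 → ⋃₀ 𝒰 = Set.univ →
      ∃ 𝒱 ⊆ 𝒰, 𝒱.Countable ∧ ⋃₀ 𝒱 = Set.univ

/-- U ⊆ X^ω is a basic open set: a product of open sets, all but finitely many of
which equal X. -/
def IsBasicOpen (X : Type u) [TopologicalSpace X] (U : Set (ℕ → X)) : Prop :=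
  ∃ V : ℕ → Set X, (∀ i, IsOpen (V i)) ∧ {i | V i ≠ Set.univ}.Finite ∧
    U = Set.pi Set.univ V

/-- A family of subsets of Z is point-κ if every point belongs to at most κ members. -/
def PointLE {Z : Type u} (𝒲 : Set (Set Z)) (κ : Cardinal.{u}) : Prop :=
  ∀ z : Z, #({W ∈ 𝒲 | z ∈ W}) ≤ κ

/-- A non-empty space is zero-dimensional if it is T1 and has a base of clopen sets. -/
def ZeroDimensionalSp (Y : Type u) [TopologicalSpace Y] : Prop :=
  Nonempty Y ∧ T1Space Y ∧
    ∃ B : Set (Set Y), TopologicalSpace.IsTopologicalBasis B ∧ ∀ b ∈ B, IsClopen b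

namespace PL

/-- countable intersections of zero sets -/
def Zset {Z : Type u} [TopologicalSpace Z] (E : Set Z) : Prop :=
  ∃ F : Z → (ℕ → ℝ), Continuous F ∧ E = F ⁻¹' {0}

theorem Zset.isClosed {Z : Type u} [TopologicalSpace Z] {E : Set Z} (h : Zset E) :
    IsClosed E := by
  obtain ⟨F, hF, rfl⟩ := h
  exact isClosed_singleton.preimage hF

theorem Zset.univ {Z : Type u} [TopologicalSpace Z] : Zset (univ : Set Z) :=
  ⟨fun _ => 0, continuous_const, by ext; simp⟩

theorem Zset.iInter {Z : Type u} [TopologicalSpace Z] {J : Type v} [Countable J] {E : J → Set Z}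
    (h : ∀ j, Zset (E j)) : Zset (⋂ j, E j) := by
  choose F hF hE using h
  rcases isEmpty_or_nonempty J with hJ | hJ
  · simpa using Zset.univ
  obtain ⟨e, he⟩ := exists_surjective_nat J
  refine ⟨fun z n => F (e n.unpair.1) z n.unpair.2, by fun_prop, ?_⟩
  ext z
  simp only [mem_iInter, mem_preimage, mem_singleton_iff]
  constructor
  · intro h
    ext n
    have := h (e n.unpair.1)
    rw [hE] at this
    simp only [mem_preimage, mem_singleton_iff] at this
    simp [this]
  · intro h j
    obtain ⟨m, rfl⟩ := he j
    rw [hE]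
    simp only [mem_preimage, mem_singleton_iff]
    ext k
    have := congrFun h (Nat.pair m k)
    simpa using this

theorem Zset.biInter {Z : Type u} [TopologicalSpace Z] {J : Type v} {c : Set J} (hc : c.Countable)
    {E : J → Set Z}
    (h : ∀ j ∈ c, Zset (E j)) : Zset (⋂ j ∈ c, E j) := by
  have := hc.to_subtype
  rw [biInter_eq_iInter]
  exact Zset.iInter fun j => h j.1 j.2

theorem Zset.sep {Z : Type u} [TopologicalSpace Z] [NormalSpace Z] {K T : Set Z}
    (hK : IsClosed K) (hT : IsClosed T) (hd : Disjoint K T) :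
    ∃ Q, Zset Q ∧ K ⊆ Q ∧ Disjoint Q T := by
  obtain ⟨f, h0, h1, -⟩ := exists_continuous_zero_one_of_isClosed hK hT hd
  refine ⟨f ⁻¹' {0}, ⟨fun z _ => f z, by fun_prop, ?_⟩, fun z hz => h0 hz, ?_⟩
  · ext z
    simp [funext_iff]
  · rw [Set.disjoint_left]
    intro z hz hz'
    have a := h1 hz'
    simp only [mem_preimage, mem_singleton_iff] at hz
    simp [hz] at a

theorem csLind {Z : Type u} [TopologicalSpace Z] [CompactSpace Z] {M : Type v} [TopologicalSpace M]
    [SecondCountableTopology M] [T2Space M] {F : Z → M} (hF : Continuous F) (E : Set M) :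
    IsLindelof (F ⁻¹' E) := by
  classical
  apply isLindelof_of_countable_subcover
  intro ι U hU hsub
  have key : ∀ y ∈ E, ∃ t : Finset ι, ∃ V ∈ 𝓝 y, F ⁻¹' V ⊆ ⋃ i ∈ t, U i := by
    intro y hy
    have hc : IsCompact (F ⁻¹' {y}) := (isClosed_singleton.preimage hF).isCompact
    obtain ⟨t, ht⟩ := hc.elim_finite_subcover U hU
      (fun z hz => hsub (by simp only [mem_preimage, mem_singleton_iff] at hz ⊢; rwa [hz]))
    have ho : IsOpen (⋃ i ∈ t, U i) := isOpen_biUnion fun i _ => hU i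
    have hcl : IsClosed (F '' (⋃ i ∈ t, U i)ᶜ) := hF.isClosedMap _ ho.isClosed_compl
    refine ⟨t, (F '' (⋃ i ∈ t, U i)ᶜ)ᶜ, hcl.isOpen_compl.mem_nhds ?_, ?_⟩
    · rintro ⟨z, hz, rfl⟩
      exact hz (ht rfl)
    · intro z hz
      by_contra hcon
      exact hz ⟨z, hcon, rfl⟩
  choose! t V hV hsubV using key
  have hL : IsLindelof E := HereditarilyLindelofSpace.isLindelof E
  obtain ⟨c, hc, hcE, hcov⟩ := hL.elim_nhds_subcover V hV
  refine ⟨⋃ y ∈ c, (t y : Set ι), hc.biUnion (fun y _ => (t y).countable_toSet), ?_⟩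
  intro z hz
  obtain ⟨y, hy, hzy⟩ := mem_iUnion₂.1 (hcov hz)
  obtain ⟨i, hi, hzi⟩ := mem_iUnion₂.1 (hsubV y (hcE y hy) hzy)
  exact mem_iUnion₂.2 ⟨i, mem_iUnion₂.2 ⟨y, hy, hi⟩, hzi⟩

theorem lind_compl {Z : Type u} [TopologicalSpace Z] [CompactSpace Z] {J : Type v} [Countable J]
    {E : J → Set Z} (h : ∀ j, Zset (E j)) : IsLindelof (⋃ j, E j)ᶜ := by
  choose F hF hE using h
  have := csLind (F := fun z j => F j z) (by fun_prop) {p : J → ℕ → ℝ | ∀ j, p j ≠ 0}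
  convert this using 1
  ext z
  simp [hE]

theorem lind_compl' {Z : Type u} [TopologicalSpace Z] [CompactSpace Z] {J : Type v} {c : Set J}
    (hc : c.Countable)
    {E : J → Set Z} (h : ∀ j ∈ c, Zset (E j)) : IsLindelof (⋃ j ∈ c, E j)ᶜ := by
  have := hc.to_subtype
  rw [biUnion_eq_iUnion]
  exact lind_compl fun j => h j.1 j.2

/-- omega-one-like orders -/
structure OmLike (Ω : Type u) [LinearOrder Ω] : Prop where
  ctb : ∀ a : Ω, (Iio a).Countable
  unc : ¬ (univ : Set Ω).Countable

theorem OmLike.bdd {Ω : Type u} [LinearOrder Ω] (h : OmLike Ω) {c : Set Ω} (hc : c.Countable) :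
    ∃ b : Ω, ∀ a ∈ c, a < b := by
  by_contra hcon
  push Not at hcon
  apply h.unc
  have : (univ : Set Ω) ⊆ ⋃ a ∈ c, Iic a := by
    intro b _
    obtain ⟨a, ha, hb⟩ := hcon b
    exact mem_iUnion₂.2 ⟨a, ha, hb⟩
  refine (hc.biUnion fun a _ => ?_).mono this
  rw [← Iio_insert]
  exact (h.ctb a).insert a

theorem exists_om : ∃ (Ω : Type u) (_ : LinearOrder Ω) (_ : WellFoundedLT Ω), OmLike Ω ∧
    #Ω = Cardinal.aleph 1 := by
  refine ⟨(Cardinal.aleph 1).ord.ToType, inferInstance, inferInstance, ⟨fun a => ?_, ?_⟩, ?_⟩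
  · rw [← Cardinal.le_aleph0_iff_set_countable, ← Cardinal.lt_aleph_one_iff]
    have := Cardinal.mk_Iio_lt a (by simp)
    simpa using this
  · rw [← Cardinal.le_aleph0_iff_set_countable, ← Cardinal.lt_aleph_one_iff]
    simp
  · simp

theorem om_surj {Ω : Type u} (hΩ : #Ω = Cardinal.aleph 1) {J : Type u} [Nonempty J]
    (hJ : #J ≤ Cardinal.aleph 1) : ∃ e : Ω → J, Function.Surjective e := by
  rw [← hΩ] at hJ
  obtain ⟨e⟩ := hJ
  exact ⟨_, Function.invFun_surjective e.injective⟩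

theorem luzin {Ω : Type u} [LinearOrder Ω] (h : OmLike Ω) {Z : Type u} (P : Set Z) (C : Ω → Set Z)
    (hcov : P ⊆ ⋃ γ, C γ) (hno : ∀ c : Set Ω, c.Countable → ¬ P ⊆ ⋃ γ ∈ c, C γ) :
    ∃ A ⊆ P, ¬ A.Countable ∧ ∀ γ, (A ∩ C γ).Countable := by
  have hex : ∀ β : Ω, ∃ a ∈ P, ∀ γ < β, a ∉ C γ := by
    intro β
    have := hno (Iio β) (h.ctb β)
    rw [Set.not_subset] at this
    obtain ⟨a, ha, hn⟩ := this
    exact ⟨a, ha, fun γ hγ hh => hn (mem_iUnion₂.2 ⟨γ, hγ, hh⟩)⟩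
  choose a haP ha using hex
  have hcnt : ∀ γ, (range a ∩ C γ).Countable := by
    intro γ
    have : range a ∩ C γ ⊆ a '' (Iic γ) := by
      rintro _ ⟨⟨β, rfl⟩, hβ⟩
      refine ⟨β, ?_, rfl⟩
      by_contra hcon
      exact ha β γ (not_le.1 hcon) hβ
    refine Set.Countable.mono this (Countable.image ?_ _)
    rw [← Iio_insert]
    exact (h.ctb γ).insert γ
  refine ⟨range a, range_subset_iff.2 haP, fun hc => ?_, hcnt⟩
  have hg : ∀ z ∈ range a, ∃ γ, z ∈ C γ := by
    rintro _ ⟨β, rfl⟩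
    exact mem_iUnion.1 (hcov (haP β))
  have : Nonempty Ω := ⟨(h.bdd countable_empty).choose⟩
  choose! g hg using hg
  obtain ⟨b, hb⟩ := h.bdd (hc.image g)
  exact ha b _ (hb _ ⟨a b, ⟨b, rfl⟩, rfl⟩) (hg _ ⟨b, rfl⟩)

/-- Michael type topology on A ∪ B -/
@[reducible]
def michael {Z : Type u} [TopologicalSpace Z] (A B : Set Z) :
    TopologicalSpace (↥(A ∪ B)) where
  IsOpen W := ∀ y ∈ W, y.1 ∈ A ∨ ∃ U : Set Z, IsOpen U ∧ y.1 ∈ U ∧ ∀ w : ↥(A ∪ B), w.1 ∈ U → w ∈ W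
  isOpen_univ := fun y _ => Or.inr ⟨univ, isOpen_univ, trivial, fun _ _ => trivial⟩
  isOpen_inter := by
    intro s t hs ht y hy
    rcases hs y hy.1 with h | ⟨U, hU, hyU, h⟩
    · exact Or.inl h
    rcases ht y hy.2 with h' | ⟨V, hV, hyV, h'⟩
    · exact Or.inl h'
    exact Or.inr ⟨U ∩ V, hU.inter hV, ⟨hyU, hyV⟩, fun w hw => ⟨h w hw.1, h' w hw.2⟩⟩
  isOpen_sUnion := by
    rintro S hS y ⟨s, hs, hy⟩
    rcases hS s hs y hy with h | ⟨U, hU, hyU, h⟩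
    · exact Or.inl h
    exact Or.inr ⟨U, hU, hyU, fun w hw => ⟨s, hs, h w hw⟩⟩

theorem michael_lind {Z : Type u} [TopologicalSpace Z] [T2Space Z] [CompactSpace Z] (A B : Set Z)
    (hd : Disjoint A B)
    (hLC : ∀ U : Z → Set Z, (∀ b ∈ B, IsOpen (U b) ∧ b ∈ U b) →
      ∃ c ⊆ B, c.Countable ∧ ((A ∪ B) \ ⋃ b ∈ c, U b).Countable) :
    @EngLindelofSp _ (michael A B) := by
  let _ := michael A B
  have hop : ∀ W : Set ↥(A ∪ B), IsOpen W ↔ ∀ y ∈ W, y.1 ∈ A ∨ ∃ U : Set Z, IsOpen U ∧ y.1 ∈ U ∧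
      ∀ w : ↥(A ∪ B), w.1 ∈ U → w ∈ W := fun W => Iff.rfl
  have hcoe : Continuous (Subtype.val : ↥(A ∪ B) → Z) := by
    rw [continuous_def]
    intro U hU
    rw [hop]
    exact fun y hy => Or.inr ⟨U, hU, hy, fun w hw => hw⟩
  have hA : ∀ y : ↥(A ∪ B), y.1 ∈ A → IsOpen {y} := by
    intro y hy
    rw [hop]
    rintro _ rfl
    exact Or.inl hy
  have hT2 : T2Space ↥(A ∪ B) := T2Space.of_injective_continuous Subtype.val_injective hcoe
  refine ⟨?_, inferInstance, ?_⟩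
  · apply RegularSpace.of_exists_mem_nhds_isClosed_subset
    intro y s hs
    obtain ⟨W, hWs, hW, hyW⟩ := mem_nhds_iff.1 hs
    rcases (hop W).1 hW y hyW with h | ⟨U, hU, hyU, h⟩
    · refine ⟨{y}, (hA y h).mem_nhds rfl, isClosed_singleton, ?_⟩
      rintro _ rfl
      exact hWs hyW
    · obtain ⟨t, ht, htc, htU⟩ := exists_mem_nhds_isClosed_subset (hU.mem_nhds hyU)
      exact ⟨Subtype.val ⁻¹' t, hcoe.continuousAt.preimage_mem_nhds ht, htc.preimage hcoe,
        fun w hw => hWs (h w (htU hw))⟩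
  · intro 𝒰 hO hcov
    have hmem : ∀ y : ↥(A ∪ B), ∃ W ∈ 𝒰, y ∈ W := by
      intro y
      have : y ∈ ⋃₀ 𝒰 := hcov ▸ trivial
      exact this
    choose W hW𝒰 hyW using hmem
    have hU : ∀ z : Z, ∃ U : Set Z, ∀ hz : z ∈ B, IsOpen U ∧ z ∈ U ∧
        ∀ w : ↥(A ∪ B), w.1 ∈ U → w ∈ W ⟨z, Or.inr hz⟩ := by
      intro z
      by_cases hz : z ∈ B
      · rcases (hop _).1 (hO _ (hW𝒰 ⟨z, Or.inr hz⟩)) _ (hyW _) with h | ⟨U, h1, h2, h3⟩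
        · exact absurd hz (Set.disjoint_left.1 hd h)
        · exact ⟨U, fun _ => ⟨h1, h2, h3⟩⟩
      · exact ⟨univ, fun h => absurd h hz⟩
    choose U hU using hU
    obtain ⟨c, hcB, hc, hcnt⟩ := hLC U fun b hb => ⟨(hU b hb).1, (hU b hb).2.1⟩
    refine ⟨W '' {y | y.1 ∈ c ∨ y.1 ∈ (A ∪ B) \ ⋃ b ∈ c, U b}, ?_, ?_, ?_⟩
    · rintro _ ⟨y, _, rfl⟩
      exact hW𝒰 y
    · refine Countable.image ?_ _
      exact (hc.union hcnt).preimage_of_injOn Subtype.val_injective.injOn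
    · rw [eq_univ_iff_forall]
      intro y
      by_cases hy : y.1 ∈ ⋃ b ∈ c, U b
      · obtain ⟨b, hb, hyb⟩ := mem_iUnion₂.1 hy
        exact ⟨_, ⟨⟨b, Or.inr (hcB hb)⟩, Or.inl hb, rfl⟩, (hU b (hcB hb)).2.2 y hyb⟩
      · exact ⟨_, ⟨y, Or.inr ⟨y.2, hy⟩, rfl⟩, hyW y⟩

theorem lemmaM {X : Type u} [TopologicalSpace X] (hX : ProductivelyLindelofSp X)
    {Z : Type u} [TopologicalSpace Z] [T2Space Z] [CompactSpace Z] {f : X → Z} (hf : Continuous f)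
    {A B : Set Z} (hA : A ⊆ range f) (hB : Disjoint B (range f))
    (hLC : ∀ U : Z → Set Z, (∀ b ∈ B, IsOpen (U b) ∧ b ∈ U b) →
      ∃ c ⊆ B, c.Countable ∧ ((A ∪ B) \ ⋃ b ∈ c, U b).Countable) : A.Countable := by
  have hd : Disjoint A B := (hB.mono_right hA).symm
  let _ := michael A B
  have hcoe : Continuous (Subtype.val : ↥(A ∪ B) → Z) := by
    rw [continuous_def]
    intro U hU
    exact fun y hy => Or.inr ⟨U, hU, hy, fun w hw => hw⟩
  obtain ⟨-, -, hQ⟩ := hX _ (michael_lind A B hd hLC)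
  let N : Set (X × ↥(A ∪ B)) := {p | f p.1 ≠ p.2.1}
  let S : ↥(A ∪ B) → Set (X × ↥(A ∪ B)) := fun a => {p | p.2 = a}
  obtain ⟨𝒱, hsub, hcnt, hcov⟩ := hQ (insert N (S '' {a | a.1 ∈ A})) (by
    rintro _ (rfl | ⟨a, ha, rfl⟩)
    · exact isOpen_ne_fun (by fun_prop) (by fun_prop)
    · have : IsOpen ({a} : Set ↥(A ∪ B)) := by
        intro y hy
        rw [mem_singleton_iff] at hy
        subst hy
        exact Or.inl ha
      exact this.preimage continuous_snd) (by
    rw [eq_univ_iff_forall]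
    rintro ⟨x, y⟩
    by_cases hxy : f x = y.1
    · refine ⟨S y, Or.inr ⟨y, ?_, rfl⟩, rfl⟩
      rcases y.2 with h | h
      · exact h
      · exact absurd ⟨x, hxy⟩ (Set.disjoint_left.1 hB h)
    · exact ⟨N, Or.inl rfl, hxy⟩)
  have hinj : Function.Injective fun a : A => S ⟨a.1, Or.inl a.2⟩ := by
    intro a b hab
    obtain ⟨x, hx⟩ := hA a.2
    have : ((x, ⟨a.1, Or.inl a.2⟩) : X × ↥(A ∪ B)) ∈ S ⟨b.1, Or.inl b.2⟩ := by
      simp only at hab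
      rw [← hab]
      exact rfl
    have h2 : (⟨a.1, Or.inl a.2⟩ : ↥(A ∪ B)) = ⟨b.1, Or.inl b.2⟩ := this
    exact Subtype.ext (Subtype.mk.inj h2)
  have hpre : (fun a : A => S ⟨a.1, Or.inl a.2⟩) ⁻¹' 𝒱 = Set.univ := by
    rw [eq_univ_iff_forall]
    intro a
    obtain ⟨x, hx⟩ := hA a.2
    have : ((x, ⟨a.1, Or.inl a.2⟩) : X × ↥(A ∪ B)) ∈ ⋃₀ 𝒱 := hcov ▸ trivial
    obtain ⟨V, hV, hxV⟩ := this
    rcases hsub hV with rfl | ⟨b, hb, rfl⟩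
    · exact absurd hx hxV
    · have h2 : (⟨a.1, Or.inl a.2⟩ : ↥(A ∪ B)) = b := hxV
      rw [← h2] at hV
      exact hV
  have h3 := hcnt.preimage_of_injOn (f := fun a : A => S ⟨a.1, Or.inl a.2⟩) hinj.injOn
  rw [hpre] at h3
  exact Set.countable_coe_iff.1 (Set.countable_univ_iff.1 h3)

theorem Zset.empty {Z : Type u} [TopologicalSpace Z] : Zset (∅ : Set Z) :=
  ⟨fun _ => 1, continuous_const, by ext; simp⟩

theorem Zset.sepAll {Z : Type u} [TopologicalSpace Z] [T2Space Z] [CompactSpace Z]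
    {J : Type v} [Countable J] {L : J → Set Z} (hL : ∀ j, IsClosed (L j)) {T : Set Z}
    (hT : IsClosed T) (hd : ∀ j, Disjoint T (L j)) :
    ∃ E, Zset E ∧ (∀ j, Disjoint E (L j)) ∧ T ⊆ E := by
  choose Q hQ hTQ hQL using fun j => Zset.sep hT (hL j) (hd j)
  exact ⟨⋂ j, Q j, Zset.iInter hQ, fun j => (hQL j).mono_left (iInter_subset _ j),
    subset_iInter hTQ⟩

theorem step1 {Ω : Type u} [LinearOrder Ω] (hO : OmLike Ω) (hΩ : #Ω = Cardinal.aleph 1)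
    {X : Type u} [TopologicalSpace X] (hX : ProductivelyLindelofSp X)
    {Z : Type u} [TopologicalSpace Z] [T2Space Z] [CompactSpace Z] {f : X → Z} (hf : Continuous f)
    (hcard : #{E : Set Z // Zset E} ≤ Cardinal.aleph 1)
    {J : Type v} [Countable J] {L : J → Set Z} (hL : ∀ j, Zset (L j))
    (hd : ∀ j, Disjoint (L j) (range f)) :
    ∃ C : ℕ → Set Z, (∀ n, Zset (C n)) ∧ range f ⊆ ⋃ n, C n ∧ ∀ n j, Disjoint (C n) (L j) := by
  let 𝒞 : Type u := {E : {E : Set Z // Zset E} // ∀ j, Disjoint E.1 (L j)}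
  have hn : Nonempty 𝒞 := ⟨⟨⟨∅, Zset.empty⟩, fun j => empty_disjoint _⟩⟩
  obtain ⟨e, he⟩ := om_surj hΩ (J := 𝒞) ((Cardinal.mk_subtype_le _).trans hcard)
  have hcov : range f ⊆ ⋃ γ, (e γ).1.1 := by
    intro z hz
    obtain ⟨E, hE, hEd, hTE⟩ := Zset.sepAll (fun j => (hL j).isClosed) (T := {z})
      isClosed_singleton (fun j => by
        rw [Set.disjoint_singleton_left]
        exact fun h => Set.disjoint_left.1 (hd j) h hz)
    obtain ⟨γ, hγ⟩ := he ⟨⟨E, hE⟩, hEd⟩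
    refine mem_iUnion.2 ⟨γ, ?_⟩
    rw [hγ]
    exact hTE rfl
  by_contra hcon
  obtain ⟨A, hAf, hAu, hAC⟩ := luzin hO (range f) (fun γ => (e γ).1.1) hcov (by
    intro c hc hcc
    apply hcon
    obtain ⟨γ0⟩ : Nonempty Ω := ⟨(hO.bdd countable_empty).choose⟩
    obtain ⟨s, hs⟩ := (hc.insert γ0).exists_eq_range (insert_nonempty _ _)
    refine ⟨fun n => (e (s n)).1.1, fun n => (e (s n)).1.2, ?_, fun n => (e (s n)).2⟩
    intro z hz
    obtain ⟨γ, hγ, hzγ⟩ := mem_iUnion₂.1 (hcc hz)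
    have : γ ∈ range s := hs ▸ Or.inr hγ
    obtain ⟨n, rfl⟩ := this
    exact mem_iUnion.2 ⟨n, hzγ⟩)
  apply hAu
  refine lemmaM hX hf hAf (B := ⋃ j, L j) (disjoint_iUnion_left.2 hd) ?_
  intro U hU
  have hfin : ∀ j, ∃ t : Set Z, t ⊆ L j ∧ t.Countable ∧ L j ⊆ ⋃ b ∈ t, U b := by
    intro j
    obtain ⟨t, ht, htc⟩ := (hL j).isClosed.isCompact.elim_nhds_subcover U fun b hb =>
      (hU b (mem_iUnion.2 ⟨j, hb⟩)).1.mem_nhds (hU b (mem_iUnion.2 ⟨j, hb⟩)).2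
    exact ⟨t, ht, t.countable_toSet, htc⟩
  choose t ht htc htcov using hfin
  have htB : (⋃ j, t j) ⊆ ⋃ j, L j := iUnion_mono ht
  refine ⟨⋃ j, t j, htB, countable_iUnion htc, ?_⟩
  have hop : IsOpen (⋃ b ∈ ⋃ j, t j, U b) := isOpen_biUnion fun b hb => (hU b (htB hb)).1
  have hLsub : ∀ j, L j ⊆ ⋃ b ∈ ⋃ j, t j, U b := fun j =>
    (htcov j).trans (biUnion_subset_biUnion_left (subset_iUnion t j))
  obtain ⟨E, hE, hEd, hTE⟩ := Zset.sepAll (fun j => (hL j).isClosed) hop.isClosed_compl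
    (fun j => Set.disjoint_left.2 fun z hz hzL => hz (hLsub j hzL))
  obtain ⟨γ, hγ⟩ := he ⟨⟨E, hE⟩, hEd⟩
  refine (hAC γ).mono ?_
  rintro z ⟨hz | hz, hzn⟩
  · refine ⟨hz, ?_⟩
    simp only [hγ]
    exact hTE hzn
  · obtain ⟨j, hj⟩ := mem_iUnion.1 hz
    exact absurd (hLsub j hj) hzn

/-- covered by countably many members -/
def Ctb {Ω Z : Type u} (G : Ω → Set Z) (E : Set Z) : Prop :=
  ∃ c : Set Ω, c.Countable ∧ E ⊆ ⋃ γ ∈ c, G γ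

theorem Ctb.mono {Ω Z : Type u} {G : Ω → Set Z} {E E' : Set Z} (h : Ctb G E) (hs : E' ⊆ E) :
    Ctb G E' := by
  obtain ⟨c, hc, h⟩ := h
  exact ⟨c, hc, hs.trans h⟩

theorem Ctb.biUnion {Ω Z : Type u} {G : Ω → Set Z} {J : Type v} {E : J → Set Z} {s : Set J}
    (hs : s.Countable) (h : ∀ j ∈ s, Ctb G (E j)) : Ctb G (⋃ j ∈ s, E j) := by
  choose! c hc h using h
  refine ⟨⋃ j ∈ s, c j, hs.biUnion hc, ?_⟩
  intro z hz
  obtain ⟨j, hj, hz⟩ := mem_iUnion₂.1 hz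
  obtain ⟨γ, hγ, hz⟩ := mem_iUnion₂.1 (h j hj hz)
  exact mem_iUnion₂.2 ⟨γ, mem_iUnion₂.2 ⟨j, hj, hγ⟩, hz⟩

theorem Ctb.union {Ω Z : Type u} {G : Ω → Set Z} {E E' : Set Z} (h : Ctb G E) (h' : Ctb G E') :
    Ctb G (E ∪ E') := by
  obtain ⟨c, hc, h⟩ := h
  obtain ⟨c', hc', h'⟩ := h'
  refine ⟨c ∪ c', hc.union hc', ?_⟩
  rw [biUnion_union]
  exact union_subset_union h h'

theorem kernel {Ω Z : Type u} [TopologicalSpace Z] [T2Space Z] [CompactSpace Z]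
    {G : Ω → Set Z} (hG : ∀ γ, Zset (G γ)) {K : Set Z} (hK : IsClosed K) (hn : ¬ Ctb G K) :
    ∃ K' ⊆ K, IsClosed K' ∧ K'.Nonempty ∧
      ∀ O, IsOpen O → (O ∩ K').Nonempty → ¬ Ctb G (O ∩ K') := by
  have hcl : IsClosed {z | ∀ O, IsOpen O → z ∈ O → ¬ Ctb G (O ∩ K)} := by
    rw [← isOpen_compl_iff, isOpen_iff_forall_mem_open]
    intro z hz
    simp only [mem_compl_iff, mem_ofPred_eq, not_forall, not_not] at hz
    obtain ⟨O, hO, hzO, hC⟩ := hz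
    exact ⟨O, fun w hw hh => hh O hO hw hC, hO, hzO⟩
  refine ⟨K ∩ {z | ∀ O, IsOpen O → z ∈ O → ¬ Ctb G (O ∩ K)}, inter_subset_left,
    hK.inter hcl, ?_, ?_⟩
  · by_contra hemp
    rw [Set.not_nonempty_iff_eq_empty] at hemp
    have : ∀ z ∈ K, ∃ O, IsOpen O ∧ z ∈ O ∧ Ctb G (O ∩ K) := by
      intro z hz
      by_contra hcon
      push Not at hcon
      have : z ∈ (∅ : Set Z) := hemp ▸ ⟨hz, hcon⟩
      exact this
    choose! O hO hzO hC using this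
    obtain ⟨t, ht, hcov⟩ := hK.isCompact.elim_nhds_subcover O
      fun z hz => (hO z hz).mem_nhds (hzO z hz)
    apply hn
    refine (Ctb.biUnion t.countable_toSet (E := fun z => O z ∩ K) fun z hz => hC z (ht z hz)).mono ?_
    intro z hz
    obtain ⟨w, hw, hz'⟩ := mem_iUnion₂.1 (hcov hz)
    exact mem_iUnion₂.2 ⟨w, hw, hz', hz⟩
  · rintro O hO ⟨z, hzO, hzK, hz⟩ ⟨c, hc, hcov⟩
    obtain ⟨N, hN, hNc, hNO⟩ := exists_mem_nhds_isClosed_subset (hO.mem_nhds hzO)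
    have hL : IsLindelof ((⋃ γ ∈ c, G γ)ᶜ ∩ (N ∩ K)) :=
      (lind_compl' hc fun γ _ => hG γ).inter_right (hNc.inter hK)
    have : ∀ w ∈ (⋃ γ ∈ c, G γ)ᶜ ∩ (N ∩ K), ∃ O, IsOpen O ∧ w ∈ O ∧ Ctb G (O ∩ K) := by
      rintro w ⟨hw, hwN, hwK⟩
      by_contra hcon
      push Not at hcon
      exact hw (hcov ⟨hNO hwN, hwK, hcon⟩)
    choose! P hP hzP hC using this
    obtain ⟨t, htc, ht, htcov⟩ := hL.elim_nhds_subcover P fun z hz => (hP z hz).mem_nhds (hzP z hz)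
    apply hz (interior N) isOpen_interior (mem_interior_iff_mem_nhds.2 hN)
    refine (Ctb.union ⟨c, hc, Subset.rfl⟩
      (Ctb.biUnion htc (E := fun z => P z ∩ K) fun z hz => hC z (ht z hz))).mono ?_
    rintro w ⟨hwN, hwK⟩
    by_cases hw : w ∈ ⋃ γ ∈ c, G γ
    · exact Or.inl hw
    · obtain ⟨v, hv, h⟩ := mem_iUnion₂.1 (htcov ⟨hw, interior_subset hwN, hwK⟩)
      exact Or.inr (mem_iUnion₂.2 ⟨v, hv, h, hwK⟩)

theorem om_closure {Ω : Type u} [LinearOrder Ω] [WellFoundedLT Ω] (hO : OmLike Ω)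
    {T : Type} [Countable T] (ξ : Finset (Ω × T) → Ω) :
    ∃ α : Ω, ∀ σ : Finset (Ω × T), (∀ p ∈ σ, p.1 < α) → ξ σ < α := by
  have step : ∀ α : Ω, ∃ β, α < β ∧ ∀ σ : Finset (Ω × T), (∀ p ∈ σ, p.1 < α) → ξ σ < β := by
    intro α
    have h1 : ((Iio α) ×ˢ (Set.univ : Set T)).Countable := (hO.ctb α).prod (Set.countable_univ)
    have h2 := (Set.countable_ofPred_finite_subset h1).preimage_of_injOn
      (f := fun σ : Finset (Ω × T) => (σ : Set (Ω × T))) Finset.coe_injective.injOn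
    obtain ⟨β, hβ⟩ := hO.bdd ((h2.image ξ).insert α)
    refine ⟨β, hβ _ (Or.inl rfl), fun σ hσ => hβ _ (Or.inr ⟨σ, ⟨σ.finite_toSet, ?_⟩, rfl⟩)⟩
    intro p hp
    exact ⟨hσ p hp, trivial⟩
  choose nx hlt hnx using step
  let α0 : Ω := (hO.bdd countable_empty).choose
  let a : ℕ → Ω := fun n => nx^[n] α0
  have ha : ∀ n, a (n+1) = nx (a n) := fun n => Function.iterate_succ_apply' nx n α0
  have hne : {b | ∀ n, a n < b}.Nonempty := by
    obtain ⟨b, hb⟩ := hO.bdd (countable_range a)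
    exact ⟨b, fun n => hb _ ⟨n, rfl⟩⟩
  let α := wellFounded_lt.min {b | ∀ n, a n < b} hne
  have hα : ∀ n, a n < α := wellFounded_lt.min_mem {b | ∀ n, a n < b} hne
  have hmono : StrictMono a := strictMono_nat_of_lt_succ fun n => by rw [ha]; exact hlt _
  refine ⟨α, fun σ hσ => ?_⟩
  have h1 : ∀ p ∈ σ, ∃ n, p.1 < a n := by
    intro p hp
    by_contra hcon
    push Not at hcon
    refine wellFounded_lt.not_lt_min {b | ∀ n, a n < b} (x := p.1) ?_ (hσ p hp)
    intro n
    exact (hmono (Nat.lt_succ_self n)).trans_le (hcon (n+1))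
  choose! n hn using h1
  have h2 : ∀ p ∈ σ, p.1 < a (σ.sup n) := fun p hp =>
    (hn p hp).trans_le (hmono.monotone (Finset.le_sup hp))
  exact (hnx _ _ h2).trans_le (by rw [← ha]; exact (hα _).le)

theorem mainClaim {Ω : Type u} [LinearOrder Ω] [WellFoundedLT Ω] (hO : OmLike Ω)
    {Z : Type u} [TopologicalSpace Z] [T2Space Z] [CompactSpace Z]
    {G L : Ω → Set Z} (hG : ∀ γ, Zset (G γ)) (hL : ∀ γ, Zset (L γ))
    {C : Ω → ℕ → Set Z} (hC : ∀ α n, IsClosed (C α n))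
    (hCL : ∀ α n, ∀ ξ < α, Disjoint (C α n) (L ξ))
    (hkL : ∀ K, IsClosed K → (∀ ξ, Disjoint K (L ξ)) → ∃ γ, K ⊆ G γ)
    {K : Set Z} (hK : IsClosed K) (hKC : ∀ α, K ⊆ (⋃ n, C α n) ∪ ⋃ γ ∈ Iio α, G γ) :
    Ctb G K := by
  classical
  by_contra hn
  obtain ⟨K', hK'K, hK'c, ⟨z1, hz1⟩, hbig⟩ := kernel hG hK hn
  have hc : ∀ O, IsOpen O → (O ∩ K').Nonempty → ∃ ξ, (O ∩ K' ∩ L ξ).Nonempty := by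
    rintro O hO ⟨z, hzO, hzK⟩
    by_contra hcon
    push Not at hcon
    obtain ⟨N, hN, hNc, hNO⟩ := exists_mem_nhds_isClosed_subset (hO.mem_nhds hzO)
    obtain ⟨γ, hγ⟩ := hkL (N ∩ K') (hNc.inter hK'c) (by
      intro ξ
      rw [Set.disjoint_left]
      rintro w ⟨hwN, hwK⟩ hwL
      have : w ∈ (∅ : Set Z) := hcon ξ ▸ ⟨⟨hNO hwN, hwK⟩, hwL⟩
      exact this)
    refine hbig (interior N) isOpen_interior ⟨z, mem_interior_iff_mem_nhds.2 hN, hzK⟩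
      ⟨{γ}, countable_singleton _, ?_⟩
    rintro w ⟨hw, hwK⟩
    simpa using hγ ⟨interior_subset hw, hwK⟩
  choose g hg hgG using hG
  choose l hl hlL using hL
  let M := (ℕ → ℝ) × (ℕ → ℝ)
  let T := ↥(TopologicalSpace.countableBasis M)
  let O : Finset (Ω × T) → Set Z := fun σ => ⋂ p ∈ σ, (fun z => (l p.1 z, g p.1 z)) ⁻¹' p.2.1
  have hOo : ∀ σ, IsOpen (O σ) := by
    intro σ
    refine isOpen_biInter_finset fun p _ => ?_
    exact (TopologicalSpace.isOpen_of_mem_countableBasis p.2.2).preimage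
      ((hl p.1).prodMk (hg p.1))
  have hξ : ∀ σ, ∃ ξ, (O σ ∩ K').Nonempty → (O σ ∩ K' ∩ L ξ).Nonempty := by
    intro σ
    by_cases h : (O σ ∩ K').Nonempty
    · obtain ⟨ξ, hξ⟩ := hc _ (hOo σ) h
      exact ⟨ξ, fun _ => hξ⟩
    · exact ⟨(hO.bdd countable_empty).choose, fun h' => absurd h' h⟩
  choose ξ hξ using hξ
  obtain ⟨α, hα⟩ := om_closure hO ξ
  let F : Z → (Iio α → M) := fun z γ => (l γ.1 z, g γ.1 z)
  have hF : Continuous F := continuous_pi fun γ => (hl γ.1).prodMk (hg γ.1)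
  have hFcl : IsClosedMap F := by
    have : Countable (Iio α) := (hO.ctb α).to_subtype
    exact hF.isClosedMap
  have := (hO.ctb α).to_subtype
  have hκ : IsCompact (F '' K') := hK'c.isCompact.image hF
  have : CompactSpace ↥(F '' K') := isCompact_iff_compactSpace.1 hκ
  have : Nonempty ↥(F '' K') := ⟨⟨F z1, z1, hz1, rfl⟩⟩
  let D : ℕ ⊕ Iio α → Set Z := Sum.elim (C α) (fun γ => G γ.1)
  have hD : ∀ i, IsClosed (D i) := by
    rintro (n | γ)
    · exact hC α n
    · simp only [D, Sum.elim_inr, hgG]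
      exact isClosed_singleton.preimage (hg _)
  obtain ⟨i, ⟨y, hy⟩⟩ := nonempty_interior_of_iUnion_of_closed
    (f := fun i => (Subtype.val ⁻¹' (F '' D i) : Set ↥(F '' K')))
    (fun i => (hFcl _ (hD i)).preimage continuous_subtype_val) (by
      rw [Set.eq_univ_iff_forall]
      rintro ⟨_, z, hz, rfl⟩
      rcases hKC α (hK'K hz) with h | h
      · obtain ⟨n, hn⟩ := mem_iUnion.1 h
        exact mem_iUnion.2 ⟨Sum.inl n, z, hn, rfl⟩
      · obtain ⟨γ, hγ, hn⟩ := mem_iUnion₂.1 h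
        exact mem_iUnion.2 ⟨Sum.inr ⟨γ, hγ⟩, z, hn, rfl⟩)
  obtain ⟨_, z0, hz0, rfl⟩ := y
  obtain ⟨S, hS, hSo, hyS⟩ := mem_interior.1 hy
  obtain ⟨W, hW, rfl⟩ := isOpen_induced_iff.1 hSo
  obtain ⟨I, u, hu, huW⟩ := isOpen_pi_iff.1 hW (F z0) hyS
  have hV : ∀ a : Iio α, ∃ V : T, a ∈ I → F z0 a ∈ V.1 ∧ V.1 ⊆ u a := by
    intro a
    by_cases ha : a ∈ I
    · obtain ⟨v, hv, h1, h2⟩ := (TopologicalSpace.isBasis_countableBasis M).exists_subset_of_mem_open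
        (hu a ha).2 (hu a ha).1
      exact ⟨⟨v, hv⟩, fun _ => ⟨h1, h2⟩⟩
    · obtain ⟨v, hv, h1, h2⟩ := (TopologicalSpace.isBasis_countableBasis M).exists_subset_of_mem_open
        (mem_univ (F z0 a)) isOpen_univ
      exact ⟨⟨v, hv⟩, fun h => absurd h ha⟩
  choose V hV using hV
  let σ : Finset (Ω × T) := I.image fun a => (a.1, V a)
  have hσα : ∀ p ∈ σ, p.1 < α := by
    intro p hp
    obtain ⟨a, ha, rfl⟩ := Finset.mem_image.1 hp
    exact a.2
  have hz0σ : (O σ ∩ K').Nonempty := by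
    refine ⟨z0, ?_, hz0⟩
    refine mem_iInter₂.2 fun p hp => ?_
    obtain ⟨a, ha, rfl⟩ := Finset.mem_image.1 hp
    exact (hV a ha).1
  have hsub : ∀ z ∈ O σ ∩ K', F z ∈ F '' D i := by
    rintro z ⟨hz, hzK⟩
    have h1 : F z ∈ W := by
      apply huW
      intro a ha
      apply (hV a ha).2
      have := mem_iInter₂.1 hz (a.1, V a) (Finset.mem_image_of_mem _ ha)
      exact this
    exact hS (show (⟨F z, z, hzK, rfl⟩ : ↥(F '' K')) ∈ Subtype.val ⁻¹' W from h1)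
  rcases i with n | γ
  · obtain ⟨z, hz, hzL⟩ := hξ σ hz0σ
    obtain ⟨w, hw, hFw⟩ := hsub z hz
    have h1 := hα σ hσα
    refine Set.disjoint_left.1 (hCL α n _ h1) hw ?_
    have h2 : l (ξ σ) w = l (ξ σ) z := congrArg Prod.fst (congrFun hFw ⟨ξ σ, h1⟩)
    rw [hlL] at hzL ⊢
    simpa [h2] using hzL
  · refine hbig _ (hOo σ) hz0σ ⟨{γ.1}, countable_singleton _, ?_⟩
    intro z hz
    obtain ⟨w, hw, hFw⟩ := hsub z hz
    have h2 : g γ.1 w = g γ.1 z := congrArg Prod.snd (congrFun hFw γ)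
    simp only [mem_singleton_iff, iUnion_iUnion_eq_left]
    simp only [D, Sum.elim_inr] at hw
    rw [hgG] at hw ⊢
    simpa [h2] using hw

theorem engX {X : Type u} [TopologicalSpace X] (hX : ProductivelyLindelofSp X) :
    EngLindelofSp X := by
  have h1 : EngLindelofSp PUnit.{u+1} := by
    refine ⟨inferInstance, inferInstance, fun 𝒰 h hc => ⟨𝒰, Subset.rfl, ?_, hc⟩⟩
    exact Set.to_countable _
  obtain ⟨hr, ht, hq⟩ := hX PUnit.{u+1} h1
  have e := (Homeomorph.prodPUnit X).symm
  refine ⟨e.isInducing.regularSpace, e.isEmbedding.t1Space, ?_⟩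
  intro 𝒰 hO hc
  obtain ⟨𝒱, hs, hcnt, hcov⟩ := hq ((fun U => Prod.fst ⁻¹' U) '' 𝒰) (by
    rintro _ ⟨U, hU, rfl⟩
    exact (hO U hU).preimage continuous_fst) (by
    rw [Set.eq_univ_iff_forall]
    rintro ⟨x, y⟩
    have : x ∈ ⋃₀ 𝒰 := hc ▸ trivial
    obtain ⟨U, hU, hx⟩ := this
    exact ⟨_, ⟨U, hU, rfl⟩, hx⟩)
  obtain ⟨t, ht, htc, hh⟩ := Set.subset_image_iff.1 hs |>.imp fun t ht =>
    (⟨ht.1, ht.2⟩ : t ⊆ 𝒰 ∧ (fun U => (Prod.fst ⁻¹' U : Set (X × PUnit.{u+1}))) '' t = 𝒱)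
  refine ⟨t, ht, ?_, ?_⟩
  · refine countable_of_injective_of_countable_image (f := fun U => (Prod.fst ⁻¹' U : Set (X × PUnit.{u+1}))) ?_ hcnt
    exact (Prod.fst_surjective.preimage_injective).injOn
  · rw [Set.eq_univ_iff_forall]
    intro x
    have : ((x, PUnit.unit) : X × PUnit.{u+1}) ∈ ⋃₀ ((fun U => (Prod.fst ⁻¹' U : Set (X × PUnit.{u+1}))) '' t) := hcov ▸ trivial
    obtain ⟨_, ⟨U, hU, rfl⟩, hx⟩ := this
    exact ⟨U, hU, hx⟩

theorem engX_lind {X : Type u} [TopologicalSpace X] (hX : ProductivelyLindelofSp X) :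
    LindelofSpace X := by
  refine ⟨isLindelof_of_countable_subcover ?_⟩
  intro ι U hU hcov
  obtain ⟨𝒱, hs, hc, hc2⟩ := (engX hX).2.2 (range U) (by rintro _ ⟨i, rfl⟩; exact hU i) (by
    rw [sUnion_range]
    exact Set.univ_subset_iff.1 hcov)
  have : ∀ V ∈ 𝒱, ∃ i, U i = V := fun V hV => hs hV
  choose g hg using fun V : 𝒱 => this V.1 V.2
  have := hc.to_subtype
  refine ⟨range g, countable_range g, ?_⟩
  intro x _
  have : x ∈ ⋃₀ 𝒱 := hc2 ▸ trivial
  obtain ⟨V, hV, hx⟩ := this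
  refine mem_iUnion₂.2 ⟨g ⟨V, hV⟩, ⟨_, rfl⟩, ?_⟩
  rw [hg]
  exact hx

theorem alster {Ω : Type u} [LinearOrder Ω] [WellFoundedLT Ω] (hO : OmLike Ω)
    (hΩ : #Ω = Cardinal.aleph 1)
    {X : Type u} [TopologicalSpace X] (hX : ProductivelyLindelofSp X)
    {Z : Type u} [TopologicalSpace Z] [T2Space Z] [CompactSpace Z] {f : X → Z} (hf : Continuous f)
    (hcard : #{E : Set Z // Zset E} ≤ Cardinal.aleph 1)
    {G : Ω → Set Z} (hG : ∀ γ, Zset (G γ))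
    (hk : ∀ K, IsClosed K → K ⊆ range f → ∃ γ, K ⊆ G γ) : Ctb G (range f) := by
  have := engX_lind hX
  have hRL : IsLindelof (range f) := isLindelof_range hf
  let 𝓛 : Type u := {E : {E : Set Z // Zset E} // Disjoint E.1 (range f)}
  have hne : Nonempty 𝓛 := ⟨⟨⟨∅, Zset.empty⟩, empty_disjoint _⟩⟩
  obtain ⟨e, he⟩ := om_surj hΩ (J := 𝓛) ((Cardinal.mk_subtype_le _).trans hcard)
  let L : Ω → Set Z := fun ξ => (e ξ).1.1
  have hLcov : ∀ z, z ∉ range f → ∃ ξ, z ∈ L ξ := by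
    intro z hz
    have : ∀ y ∈ range f, ∃ Q, Zset Q ∧ {z} ⊆ Q ∧ Disjoint Q {y} := by
      intro y hy
      apply Zset.sep isClosed_singleton isClosed_singleton
      rw [Set.disjoint_singleton]
      rintro rfl
      exact hz hy
    choose! Q hQ hzQ hQy using this
    obtain ⟨t, htc, ht, hcov⟩ := hRL.elim_nhds_subcover (fun y => (Q y)ᶜ) fun y hy =>
      (hQ y hy).isClosed.isOpen_compl.mem_nhds (Set.disjoint_singleton_right.1 (hQy y hy))
    obtain ⟨ξ, hξ⟩ := he ⟨⟨⋂ y ∈ t, Q y, Zset.biInter htc fun y hy => hQ y (ht y hy)⟩, by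
      rw [Set.disjoint_right]
      intro w hw hw'
      obtain ⟨y, hy, hwy⟩ := mem_iUnion₂.1 (hcov hw)
      exact hwy (mem_iInter₂.1 hw' y hy)⟩
    refine ⟨ξ, ?_⟩
    simp only [L, hξ]
    exact mem_iInter₂.2 fun y hy => hzQ y (ht y hy) rfl
  have hstep : ∀ α : Ω, ∃ C : ℕ → Set Z, (∀ n, Zset (C n)) ∧ range f ⊆ ⋃ n, C n ∧
      ∀ n (j : Iio α), Disjoint (C n) (L j.1) := by
    intro α
    have := (hO.ctb α).to_subtype
    exact step1 hO hΩ hX hf hcard (fun j : Iio α => (e j.1).1.2) (fun j => (e j.1).2)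
  choose C hCZ hCcov hCL using hstep
  by_contra hcon
  have hcovG : range f ⊆ ⋃ γ, G γ := by
    intro z hz
    obtain ⟨γ, hγ⟩ := hk {z} isClosed_singleton (singleton_subset_iff.2 hz)
    exact mem_iUnion.2 ⟨γ, hγ rfl⟩
  obtain ⟨A, hAf, hAu, hAG⟩ := luzin hO (range f) G hcovG fun c hc hcc => hcon ⟨c, hc, hcc⟩
  apply hAu
  let B : Ω → Set Z := fun α => ((⋃ n, C α n) ∪ ⋃ γ ∈ Iio α, G γ)ᶜ
  have hBL : ∀ α, IsLindelof (B α) := by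
    intro α
    have := (hO.ctb α).to_subtype
    have := lind_compl (E := Sum.elim (C α) (fun γ : Iio α => G γ.1)) (by
      rintro (n | γ)
      · exact hCZ α n
      · exact hG _)
    convert this using 1
    simp only [B, iUnion_sum, biUnion_eq_iUnion, Sum.elim_inl, Sum.elim_inr]
  refine lemmaM hX hf hAf (B := ⋃ α, B α) ?_ ?_
  · refine disjoint_iUnion_left.2 fun α => Set.disjoint_right.2 fun z hz hzB => ?_
    exact hzB (Or.inl (hCcov α hz))
  intro U hU
  obtain ⟨c0, hc0, hKc⟩ := mainClaim hO hG (fun ξ => (e ξ).1.2) (L := L)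
    (fun α n => (hCZ α n).isClosed) (fun α n ξ hξ => hCL α n ⟨ξ, hξ⟩) (by
      intro K hK hd
      apply hk K hK
      intro z hz
      by_contra hzf
      obtain ⟨ξ, hξ⟩ := hLcov z hzf
      exact Set.disjoint_left.1 (hd ξ) hz hξ)
    (K := (⋃ b ∈ ⋃ α, B α, U b)ᶜ) (isOpen_biUnion fun b hb => (hU b hb).1).isClosed_compl (by
      intro α z hz
      by_contra hzB
      have h1 : z ∈ ⋃ α, B α := mem_iUnion.2 ⟨α, hzB⟩
      exact hz (mem_iUnion₂.2 ⟨z, h1, (hU z h1).2⟩))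
  obtain ⟨β, hβ⟩ := hO.bdd hc0
  have hL1 : IsLindelof (⋃ γ ∈ Iio β, G γ)ᶜ := lind_compl' (hO.ctb β) fun γ _ => hG γ
  obtain ⟨c1, hc1B, hc1, hcov1⟩ := hL1.elim_countable_subcover_image (b := ⋃ α, B α) (c := U)
    (fun b hb => (hU b hb).1) (by
      intro z hz
      by_contra hcon
      obtain ⟨γ, hγ, hzγ⟩ := mem_iUnion₂.1 (hKc hcon)
      exact hz (mem_iUnion₂.2 ⟨γ, hβ γ hγ, hzγ⟩))
  have h2 : ∀ α, ∃ b' ⊆ ⋃ α, B α, b'.Countable ∧ B α ⊆ ⋃ i ∈ b', U i := fun α =>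
    (hBL α).elim_countable_subcover_image (b := ⋃ α, B α) (c := U)
      (fun b hb => (hU b hb).1) (fun z hz => by
        have h1 : z ∈ ⋃ α, B α := mem_iUnion.2 ⟨α, hz⟩
        exact mem_iUnion₂.2 ⟨z, h1, (hU z h1).2⟩)
  choose c2 hc2B hc2 hcov2 using h2
  refine ⟨c1 ∪ ⋃ α ∈ Iio β, c2 α, union_subset hc1B (iUnion₂_subset fun α _ => hc2B α),
    hc1.union ((hO.ctb β).biUnion fun α _ => hc2 α), ?_⟩
  refine ((hO.ctb β).biUnion fun γ _ => hAG γ).mono ?_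
  rintro z ⟨hz, hzU⟩
  have hzH : z ∈ ⋃ γ ∈ Iio β, G γ := by
    by_contra h
    obtain ⟨b, hb, hzb⟩ := mem_iUnion₂.1 (hcov1 h)
    exact hzU (mem_iUnion₂.2 ⟨b, Or.inl hb, hzb⟩)
  obtain ⟨γ, hγ, hzγ⟩ := mem_iUnion₂.1 hzH
  rcases hz with hz | hz
  · exact mem_iUnion₂.2 ⟨γ, hγ, hz, hzγ⟩
  · exfalso
    obtain ⟨α, hα⟩ := mem_iUnion.1 hz
    by_cases hlt : α < β
    · obtain ⟨b, hb, hzb⟩ := mem_iUnion₂.1 (hcov2 α hα)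
      exact hzU (mem_iUnion₂.2 ⟨b, Or.inr (mem_iUnion₂.2 ⟨α, hlt, hb⟩), hzb⟩)
    · exact hα (Or.inr (mem_iUnion₂.2 ⟨γ, lt_of_lt_of_le hγ (not_lt.1 hlt), hzγ⟩))

/-- good initial segments -/
def Good {Z : Type u} [TopologicalSpace Z] (R : Set Z) {ι : Type v} (W : ι → Set (ℕ → Z))
    (K : ℕ → Set Z) (n : ℕ) : Prop :=
  ∃ G : ℕ → Set Z, (∀ i, Zset (G i)) ∧ (∀ i < n, K i ⊆ G i) ∧ ∃ c : Set ι, c.Countable ∧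
    ∀ p : ℕ → Z, (∀ i, p i ∈ R) → (∀ i < n, p i ∈ G i) → ∃ j ∈ c, p ∈ W j

theorem Good.congr {Z : Type u} [TopologicalSpace Z] {R : Set Z} {ι : Type v}
    {W : ι → Set (ℕ → Z)} {K K' : ℕ → Set Z} {n : ℕ} (h : Good R W K n)
    (he : ∀ i < n, K' i = K i) : Good R W K' n := by
  obtain ⟨G, h1, h2, h3⟩ := h
  exact ⟨G, h1, fun i hi => by rw [he i hi]; exact h2 i hi, h3⟩

theorem good_step {Ω : Type u} [LinearOrder Ω] [WellFoundedLT Ω] (hO : OmLike Ω)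
    (hΩ : #Ω = Cardinal.aleph 1)
    {X : Type u} [TopologicalSpace X] (hX : ProductivelyLindelofSp X)
    {Z : Type u} [TopologicalSpace Z] [T2Space Z] [CompactSpace Z] {f : X → Z} (hf : Continuous f)
    (hcard : #{E : Set Z // Zset E} ≤ Cardinal.aleph 1)
    {ι : Type v} (W : ι → Set (ℕ → Z)) (K : ℕ → Set Z) (n : ℕ) :
    ∃ C, IsClosed C ∧ C ⊆ range f ∧ (¬ Good (range f) W K n →
      ¬ Good (range f) W (Function.update K n C) (n + 1)) := by
  by_contra hcon
  push Not at hcon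
  have hbad : ¬ Good (range f) W K n := (hcon ∅ isClosed_empty (empty_subset _)).1
  apply hbad
  let J : Type u := {C : Set Z // IsClosed C ∧ C ⊆ range f}
  have h1 : ∀ C : J, Good (range f) W (Function.update K n C.1) (n + 1) :=
    fun C => (hcon C.1 C.2.1 C.2.2).2
  choose G hGZ hGK c hc hcov using h1
  let T : Type u := {E : {E : Set Z // Zset E} // ∃ C : J, G C n = E.1}
  have hT : Nonempty T := ⟨⟨⟨G ⟨∅, isClosed_empty, empty_subset _⟩ n, hGZ _ _⟩, _, rfl⟩⟩
  obtain ⟨e, he⟩ := om_surj hΩ (J := T) ((Cardinal.mk_subtype_le _).trans hcard)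
  obtain ⟨d, hd, hdcov⟩ := alster hO hΩ hX hf hcard (G := fun γ => (e γ).1.1) (fun γ => (e γ).1.2) (by
    intro C hC hCR
    obtain ⟨γ, hγ⟩ := he ⟨⟨G ⟨C, hC, hCR⟩ n, hGZ _ _⟩, _, rfl⟩
    refine ⟨γ, ?_⟩
    simp only [hγ]
    have := hGK ⟨C, hC, hCR⟩ n (Nat.lt_succ_self n)
    simpa using this)
  choose C hC using fun γ => (e γ).2
  refine ⟨fun i => ⋂ γ ∈ d, G (C γ) i, fun i => Zset.biInter hd fun γ _ => hGZ _ _, ?_,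
    ⋃ γ ∈ d, c (C γ), hd.biUnion fun γ _ => hc _, ?_⟩
  · intro i hi
    refine subset_iInter₂ fun γ _ => ?_
    have := hGK (C γ) i (hi.trans (Nat.lt_succ_self n))
    rwa [Function.update_of_ne hi.ne] at this
  · intro p hp hpG
    obtain ⟨γ, hγ, hpγ⟩ := mem_iUnion₂.1 (hdcov (hp n))
    obtain ⟨j, hj, hpj⟩ := hcov (C γ) p hp (by
      intro i hi
      rcases Nat.lt_succ_iff_lt_or_eq.1 hi with h | rfl
      · exact mem_iInter₂.1 (hpG i h) γ hγ
      · rw [hC]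
        exact hpγ)
    exact ⟨j, mem_iUnion₂.2 ⟨γ, hγ, hj⟩, hpj⟩

/-- recursion -/
def recK {Z : Type u} (c : (ℕ → Set Z) → ℕ → Set Z) : ℕ → (ℕ → Set Z)
  | 0 => fun _ => ∅
  | n + 1 => Function.update (recK c n) n (c (recK c n) n)

theorem power {Ω : Type u} [LinearOrder Ω] [WellFoundedLT Ω] (hO : OmLike Ω)
    (hΩ : #Ω = Cardinal.aleph 1)
    {X : Type u} [TopologicalSpace X] (hX : ProductivelyLindelofSp X)
    {Z : Type u} [TopologicalSpace Z] [T2Space Z] [CompactSpace Z] {f : X → Z} (hf : Continuous f)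
    (hcard : #{E : Set Z // Zset E} ≤ Cardinal.aleph 1)
    {ι : Type v} (W : ι → Set (ℕ → Z)) (hW : ∀ j, IsOpen (W j))
    (hcov : ∀ p : ℕ → Z, (∀ i, p i ∈ range f) → ∃ j, p ∈ W j) :
    ∃ c : Set ι, c.Countable ∧ ∀ p : ℕ → Z, (∀ i, p i ∈ range f) → ∃ j ∈ c, p ∈ W j := by
  classical
  by_contra hno
  choose c hcc hcR hcbad using good_step hO hΩ hX hf hcard W
  have hbad : ∀ n, ¬ Good (range f) W (recK c n) n := by
    intro n
    induction n with
    | zero =>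
      rintro ⟨G, -, -, d, hd, h⟩
      exact hno ⟨d, hd, fun p hp => h p hp (by simp)⟩
    | succ n ih => exact hcbad _ _ ih
  let K : ℕ → Set Z := fun i => c (recK c i) i
  have hK : ∀ n, ∀ i < n, recK c n i = K i := by
    intro n
    induction n with
    | zero => simp
    | succ n ih =>
      intro i hi
      rcases Nat.lt_succ_iff_lt_or_eq.1 hi with h | rfl
      · rw [recK, Function.update_of_ne h.ne, ih i h]
      · simp [recK, K]
  have hKbad : ∀ n, ¬ Good (range f) W K n := fun n h => hbad n (h.congr (hK n))
  have hcomp : IsCompact (Set.pi Set.univ K) := isCompact_univ_pi fun i => (hcc _ _).isCompact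
  obtain ⟨t, ht⟩ := hcomp.elim_finite_subcover W hW (by
    intro p hp
    exact mem_iUnion.2 (hcov p fun i => hcR _ _ (hp i trivial)))
  have hcl : IsCompact (⋃ j ∈ t, W j)ᶜ :=
    (isOpen_biUnion fun j _ => hW j).isClosed_compl.isCompact
  have hsep : ∀ p ∈ (⋃ j ∈ t, W j)ᶜ, ∃ i Q, Zset Q ∧ K i ⊆ Q ∧ p i ∉ Q := by
    intro p hp
    have : p ∉ Set.pi Set.univ K := fun h => hp (ht h)
    simp only [Set.mem_pi, mem_univ, true_imp_iff, not_forall] at this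
    obtain ⟨i, hi⟩ := this
    obtain ⟨Q, hQ, h1, h2⟩ := Zset.sep (K := K i) (T := {p i}) (hcc _ _) isClosed_singleton
      (Set.disjoint_singleton_right.2 hi)
    exact ⟨i, Q, hQ, h1, Set.disjoint_singleton_right.1 h2⟩
  choose! ix Q hQ hKQ hpQ using hsep
  obtain ⟨t', ht', hcov'⟩ := hcl.elim_nhds_subcover (fun p => {q | q (ix p) ∉ Q p}) (by
    intro p hp
    have h : IsOpen {q : ℕ → Z | q (ix p) ∉ Q p} :=
      (hQ p hp).isClosed.isOpen_compl.preimage (f := fun q : ℕ → Z => q (ix p)) (by fun_prop)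
    exact h.mem_nhds (hpQ p hp))
  apply hKbad (t'.sup ix + 1)
  refine ⟨fun i => ⋂ p ∈ {p | p ∈ t' ∧ ix p = i}, Q p, ?_, ?_, t, t.countable_toSet, ?_⟩
  · intro i
    exact Zset.biInter (t'.countable_toSet.mono fun p hp => hp.1) fun p hp => hQ p (ht' p hp.1)
  · intro i _
    refine subset_iInter₂ ?_
    rintro p ⟨hp, rfl⟩
    exact hKQ p (ht' p hp)
  · intro p hp hpG
    by_contra hcon
    have : p ∈ (⋃ j ∈ t, W j)ᶜ := by
      intro h
      obtain ⟨j, hj, hpj⟩ := mem_iUnion₂.1 h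
      exact hcon ⟨j, hj, hpj⟩
    obtain ⟨q, hq, hpq⟩ := mem_iUnion₂.1 (hcov' this)
    exact hpq (mem_iInter₂.1 (hpG (ix q) (Nat.lt_succ_of_le (Finset.le_sup hq))) q ⟨hq, rfl⟩)

theorem finset_card {A : Type u} (h : #A ≤ Cardinal.continuum) :
    #(Finset A) ≤ Cardinal.continuum := by
  classical
  refine (Cardinal.mk_le_of_surjective (List.toFinset_surjective (α := A))).trans ?_
  exact (Cardinal.mk_list_le_max A).trans (max_le Cardinal.aleph0_le_continuum h)

theorem zset_card {ι : Type u} (h : #ι ≤ Cardinal.continuum) :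
    #{E : Set (ι → unitInterval) // Zset E} ≤ Cardinal.continuum := by
  classical
  let T := ↥(TopologicalSpace.countableBasis unitInterval)
  let O : Finset (ι × T) → Set (ι → unitInterval) := fun σ => ⋂ p ∈ σ, (fun z => z p.1) ⁻¹' p.2.1
  have hOo : ∀ σ, IsOpen (O σ) := fun σ => isOpen_biInter_finset fun p _ =>
    (TopologicalSpace.isOpen_of_mem_countableBasis p.2.2).preimage
      (f := fun z : ι → unitInterval => z p.1) (by fun_prop)
  have hbase : ∀ U : Set (ι → unitInterval), IsOpen U → ∀ z ∈ U, ∃ σ, z ∈ O σ ∧ O σ ⊆ U := by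
    intro U hU z hz
    obtain ⟨I, u, hu, huW⟩ := isOpen_pi_iff.1 hU z hz
    have hV : ∀ a : ι, ∃ V : T, a ∈ I → z a ∈ V.1 ∧ V.1 ⊆ u a := by
      intro a
      by_cases ha : a ∈ I
      · obtain ⟨v, hv, h1, h2⟩ :=
          (TopologicalSpace.isBasis_countableBasis unitInterval).exists_subset_of_mem_open
            (hu a ha).2 (hu a ha).1
        exact ⟨⟨v, hv⟩, fun _ => ⟨h1, h2⟩⟩
      · obtain ⟨v, hv, h1, h2⟩ :=
          (TopologicalSpace.isBasis_countableBasis unitInterval).exists_subset_of_mem_open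
            (mem_univ (z a)) isOpen_univ
        exact ⟨⟨v, hv⟩, fun h => absurd h ha⟩
    choose V hV using hV
    refine ⟨I.image fun a => (a, V a), ?_, ?_⟩
    · refine mem_iInter₂.2 fun p hp => ?_
      obtain ⟨a, ha, rfl⟩ := Finset.mem_image.1 hp
      exact (hV a ha).1
    · intro w hw
      apply huW
      intro a ha
      apply (hV a ha).2
      exact mem_iInter₂.1 hw (a, V a) (Finset.mem_image_of_mem _ ha)
  let Φ : (ℕ → Finset (Finset (ι × T))) → Set (ι → unitInterval) :=
    fun t => ⋂ n, ⋃ σ ∈ t n, O σ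
  have hΦ : {E : Set (ι → unitInterval) | Zset E} ⊆ range Φ := by
    intro E hE
    have hEc : IsCompact E := (Zset.isClosed hE).isCompact
    obtain ⟨F, hF, rfl⟩ := hE
    obtain ⟨U, hU, hU0⟩ := (IsGδ.singleton (0 : ℕ → ℝ)).eq_iInter_nat
    have : ∀ n, ∃ t : Finset (Finset (ι × T)), F ⁻¹' {0} ⊆ ⋃ σ ∈ t, O σ ∧
        (⋃ σ ∈ t, O σ) ⊆ F ⁻¹' U n := by
      intro n
      have hz : ∀ z ∈ F ⁻¹' {0}, ∃ σ, z ∈ O σ ∧ O σ ⊆ F ⁻¹' U n := by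
        intro z hz
        apply hbase _ ((hU n).preimage hF)
        have h1 : F z ∈ ⋂ n, U n := hU0 ▸ hz
        exact mem_iInter.1 h1 n
      choose! s hs hsU using hz
      obtain ⟨t, ht, hcov⟩ := hEc.elim_nhds_subcover (fun z => O (s z)) fun z hz =>
        (hOo _).mem_nhds (hs z hz)
      refine ⟨t.image s, ?_, ?_⟩
      · intro z hz
        obtain ⟨w, hw, hzw⟩ := mem_iUnion₂.1 (hcov hz)
        exact mem_iUnion₂.2 ⟨s w, Finset.mem_image_of_mem _ hw, hzw⟩
      · refine iUnion₂_subset fun σ hσ => ?_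
        obtain ⟨w, hw, rfl⟩ := Finset.mem_image.1 hσ
        exact hsU w (ht w hw)
    choose t ht1 ht2 using this
    refine ⟨t, Subset.antisymm ?_ (subset_iInter ht1)⟩
    intro z hz
    have : F z ∈ ⋂ n, U n := mem_iInter.2 fun n => ht2 n (mem_iInter.1 hz n)
    rw [← hU0] at this
    exact this
  have h1 : #(ι × T) ≤ Cardinal.continuum := by
    have hT : #T ≤ ℵ₀ := Cardinal.mk_le_aleph0
    rw [Cardinal.mk_prod]
    refine (mul_le_mul' (Cardinal.lift_le.2 h) (Cardinal.lift_le.2 hT)).trans ?_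
    simp
  have h2 := finset_card (finset_card h1)
  calc #{E : Set (ι → unitInterval) // Zset E} ≤ #(range Φ) := Cardinal.mk_le_mk_of_subset hΦ
    _ ≤ #(ℕ → Finset (Finset (ι × T))) := Cardinal.mk_range_le
    _ ≤ Cardinal.continuum ^ (ℵ₀ : Cardinal.{u}) := by
      rw [Cardinal.mk_arrow]
      simp only [Cardinal.lift_uzero, Cardinal.mk_nat, Cardinal.lift_aleph0]
      exact Cardinal.power_le_power_right h2
    _ = Cardinal.continuum := Cardinal.continuum_power_aleph0

theorem ch_lift (h : Cardinal.continuum.{v} = Cardinal.aleph 1) :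
    Cardinal.continuum.{u} = Cardinal.aleph 1 := by
  have h1 := congrArg Cardinal.lift.{u, v} h
  rw [Cardinal.lift_continuum, Cardinal.lift_aleph, Ordinal.lift_one] at h1
  apply Cardinal.lift_injective.{v, u}
  rw [Cardinal.lift_continuum, Cardinal.lift_aleph, Ordinal.lift_one]
  exact h1

theorem final (hCH : Cardinal.continuum.{u} = Cardinal.aleph 1)
    (X : Type u) [TopologicalSpace X]
    (hprod : ProductivelyLindelofSp X)
    (hl : LindelofNumberLE (ℕ → X) Cardinal.continuum) :
    PowerfullyLindelofSp X := by
  classical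
  obtain ⟨hreg, hT1, -⟩ := engX hprod
  have hLind := engX_lind hprod
  have hnorm : NormalSpace X := inferInstance
  refine ⟨inferInstance, inferInstance, ?_⟩
  intro 𝒰 h𝒰 hcov
  let N : Finset ℕ → (ℕ → C(X, unitInterval)) → Set (ℕ → X) :=
    fun I g => {q | ∀ i ∈ I, 0 < g i (q i)}
  have hNo : ∀ I g, IsOpen (N I g) := by
    intro I g
    have : N I g = ⋂ i ∈ I, {q : ℕ → X | 0 < g i (q i)} := by ext; simp [N]
    rw [this]
    exact isOpen_biInter_finset fun i _ => isOpen_lt continuous_const (by fun_prop)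
  obtain ⟨𝒱, h𝒱, hcard, hcov𝒱⟩ := hl {V | ∃ I g, V = N I g ∧ ∃ U ∈ 𝒰, V ⊆ U} (by
    rintro _ ⟨I, g, rfl, -⟩
    exact hNo I g) (by
    rw [Set.eq_univ_iff_forall]
    intro p
    have : p ∈ ⋃₀ 𝒰 := hcov ▸ trivial
    obtain ⟨U, hU, hpU⟩ := this
    obtain ⟨I, u, hu, huU⟩ := isOpen_pi_iff.1 (h𝒰 U hU) p hpU
    have : ∀ i, ∃ g : C(X, unitInterval), i ∈ I → 0 < g (p i) ∧ ∀ x, 0 < g x → x ∈ u i := by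
      intro i
      by_cases hi : i ∈ I
      · obtain ⟨g, h0, h1, h2⟩ := exists_continuous_zero_one_of_isClosed
          (s := (u i)ᶜ) (t := {p i}) (hu i hi).1.isClosed_compl isClosed_singleton
          (Set.disjoint_singleton_right.2 (fun h => h (hu i hi).2))
        refine ⟨⟨fun x => ⟨g x, h2 x⟩, by fun_prop⟩, fun _ => ⟨?_, ?_⟩⟩
        · have : g (p i) = 1 := h1 rfl
          rw [← Subtype.coe_lt_coe]
          simp [this]
        · intro x hx
          by_contra hxu
          have : g x = 0 := h0 hxu
          rw [← Subtype.coe_lt_coe] at hx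
          simp [this] at hx
      · exact ⟨⟨fun _ => 0, continuous_const⟩, fun h => absurd h hi⟩
    choose g hg using this
    refine ⟨N I g, ⟨I, g, rfl, U, hU, ?_⟩, fun i hi => (hg i hi).1⟩
    intro q hq
    exact huU fun i hi => (hg i hi).2 _ (hq i hi))
  choose I g hVN U hU hVU using fun V : 𝒱 => h𝒱 V.2
  obtain ⟨Ω, i1, i2, hO, hΩ⟩ := exists_om.{u}
  let f : X → (𝒱 × ℕ → unitInterval) := fun x v => g v.1 v.2 x
  have hf : Continuous f := continuous_pi fun v => (g v.1 v.2).continuous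
  have hι : #(𝒱 × ℕ) ≤ Cardinal.continuum := by
    rw [Cardinal.mk_prod]
    refine (mul_le_mul' (Cardinal.lift_le.2 hcard) le_rfl).trans ?_
    simp
  obtain ⟨c, hc, hccov⟩ := power hO hΩ hprod hf ((zset_card hι).trans hCH.le)
    (fun V : 𝒱 => {p : ℕ → (𝒱 × ℕ → unitInterval) | ∀ i ∈ I V, 0 < p i (V, i)}) (by
      intro V
      have : {p : ℕ → (𝒱 × ℕ → unitInterval) | ∀ i ∈ I V, 0 < p i (V, i)} =
        ⋂ i ∈ I V, {p : ℕ → (𝒱 × ℕ → unitInterval) | 0 < p i (V, i)} := by ext; simp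
      rw [this]
      exact isOpen_biInter_finset fun i _ => isOpen_lt continuous_const (by fun_prop)) (by
      intro p hp
      choose x hx using hp
      have : x ∈ ⋃₀ 𝒱 := hcov𝒱 ▸ trivial
      obtain ⟨V, hV, hxV⟩ := this
      refine ⟨⟨V, hV⟩, ?_⟩
      intro i hi
      have h1 : x ∈ N (I ⟨V, hV⟩) (g ⟨V, hV⟩) := hVN ⟨V, hV⟩ ▸ hxV
      rw [← hx i]
      exact h1 i hi)
  refine ⟨U '' c, ?_, hc.image _, ?_⟩
  · rintro _ ⟨V, _, rfl⟩
    exact hU V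
  · rw [Set.eq_univ_iff_forall]
    intro x
    obtain ⟨V, hV, h⟩ := hccov (fun i => f (x i)) fun i => ⟨x i, rfl⟩
    refine ⟨U V, ⟨V, hV, rfl⟩, hVU V ?_⟩
    rw [hVN V]
    exact h

end PL

/-- Under CH, every productively Lindelöf space X with
ℓ(X^ω) ≤ 𝔠 is powerfully Lindelöf. -/
theorem stmt3 (hCH : Cardinal.continuum = Cardinal.aleph 1)
    (X : Type u) [TopologicalSpace X]
    (hprod : ProductivelyLindelofSp X)
    (hl : LindelofNumberLE (ℕ → X) Cardinal.continuum) :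
    PowerfullyLindelofSp X := by
  exact PL.final (PL.ch_lift hCH) X hprod hl
end

section
/- Assume the Continuum Hypothesis. If X is a productively Lindelöf topological space with network weight nw(X) ≤ 𝔠, then X is powerfully Lindelöf. -/
open Set Cardinal Topology

universe u v

/-- Properties of the index order. -/
structure OmOne (Ω : Type u) [LinearOrder Ω] : Prop where
  wf : WellFoundedLT Ω
  unc : Uncountable Ω
  ctb : ∀ a : Ω, (Iio a).Countable
  card : #Ω = continuum

theorem OmOne.bdd {Ω : Type u} [LinearOrder Ω] (h : OmOne Ω) {A : Set Ω} (hA : A.Countable) :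
    ∃ β, ∀ a ∈ A, a < β := by
  by_contra hcon
  push Not at hcon
  have h1 : (univ : Set Ω) ⊆ ⋃ a ∈ A, (insert a (Iio a)) := by
    intro β _
    obtain ⟨a, ha, hle⟩ := hcon β
    simp only [mem_iUnion]
    refine ⟨a, ha, ?_⟩
    rcases hle.eq_or_lt with h | h
    · left; exact h
    · right; exact h
  have h2 : (⋃ a ∈ A, (insert a (Iio a))).Countable :=
    hA.biUnion fun a _ => (h.ctb a).insert a
  have := h.unc
  exact not_countable_univ (h2.mono h1)

theorem OmOne.bddF {Ω : Type u} [LinearOrder Ω] (h : OmOne Ω) {ι : Sort*} [Countable ι] (f : ι → Ω) :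
    ∃ β, ∀ i, f i < β := by
  obtain ⟨β, hβ⟩ := h.bdd (countable_range f)
  exact ⟨β, fun i => hβ _ ⟨i, rfl⟩⟩

/-- productively Lindelof subset -/
def PLS {K : Type u} [TopologicalSpace K] (S : Set K) : Prop :=
  ∀ (Y : Type u) [TopologicalSpace Y] [RegularSpace Y] [T1Space Y] [LindelofSpace Y],
    LindelofSpace (S × Y)

theorem PLS.isLindelof {K : Type u} [TopologicalSpace K] {S : Set K} (h : PLS S) :
    IsLindelof S := by
  have := h PUnit.{u+1}
  have h2 : IsLindelof (Set.range (fun p : S × PUnit.{u+1} => (p.1 : K))) := by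
    rw [← image_univ]
    exact isLindelof_univ.image (by fun_prop)
  convert h2
  ext x; simp

theorem PLS.image {K : Type u} [TopologicalSpace K] {S : Set K} (h : PLS S)
    {M : Type u} [TopologicalSpace M] {f : K → M} (hf : Continuous f) : PLS (f '' S) := by
  intro Y _ _ _ _
  have := h Y
  have h2 : IsLindelof (Set.range (fun p : S × Y => ((⟨f p.1, p.1, p.1.2, rfl⟩ : f '' S), p.2))) := by
    rw [← image_univ]
    exact isLindelof_univ.image (by fun_prop)
  rw [← isLindelof_univ_iff]
  convert h2
  symm
  rw [eq_univ_iff_forall]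
  rintro ⟨⟨_, s, hs, rfl⟩, y⟩
  exact ⟨⟨⟨s, hs⟩, y⟩, rfl⟩

theorem rects {K : Type u} [TopologicalSpace K] {Ω : Type u} [TopologicalSpace Ω]
    [DiscreteTopology Ω] {A : Set K} (hA : IsLindelof A) {ι : Type*}
    (U : ι → Set (K × OnePoint Ω)) (hU : ∀ i, IsOpen (U i))
    (hAU : ∀ y ∈ A, (y, OnePoint.infty) ∈ ⋃ i, U i) :
    ∃ t : Set ι, t.Countable ∧ ∃ E : Set Ω, E.Countable ∧
      ∀ y ∈ A, (∃ i ∈ t, (y, OnePoint.infty) ∈ U i) ∧ ∀ α ∉ E, ∃ i ∈ t, (y, (α : OnePoint Ω)) ∈ U i := by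
  rcases A.eq_empty_or_nonempty with rfl | ⟨z0, hz0⟩
  · exact ⟨∅, countable_empty, ∅, countable_empty, fun y hy => absurd hy (notMem_empty y)⟩
  have h1 : ∀ y, ∃ i, ∃ V : Set K, ∃ E : Set Ω, y ∈ A → V ∈ 𝓝 y ∧ E.Countable ∧
      ∀ z ∈ V, (z, OnePoint.infty) ∈ U i ∧ ∀ α ∉ E, (z, (α : OnePoint Ω)) ∈ U i := by
    intro y
    by_cases hy : y ∈ A
    · obtain ⟨i, hi⟩ := mem_iUnion.1 (hAU y hy)
      obtain ⟨V, C, hV, hC, hyV, hC', hsub⟩ := isOpen_prod_iff.1 (hU i) _ _ hi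
      refine ⟨i, V, (((↑) : Ω → OnePoint Ω) ⁻¹' C)ᶜ, fun _ => ⟨hV.mem_nhds hyV, ?_, ?_⟩⟩
      · have := ((OnePoint.isOpen_iff_of_mem hC').1 hC).2
        exact this.finite_of_discrete.countable
      · intro z hz
        refine ⟨hsub ⟨hz, hC'⟩, fun α hα => hsub ⟨hz, ?_⟩⟩
        simpa using hα
    · obtain ⟨i, _⟩ := mem_iUnion.1 (hAU z0 hz0)
      exact ⟨i, ∅, ∅, fun h => absurd h hy⟩
  choose i V E hE using h1
  obtain ⟨t, ht, htA, hcov⟩ := hA.elim_nhds_subcover V (fun y hy => (hE y hy).1)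
  refine ⟨i '' t, ht.image i, ⋃ y ∈ t, E y, ht.biUnion fun y hy => (hE y (htA y hy)).2.1, ?_⟩
  intro y hy
  obtain ⟨z, hz, hyz⟩ := mem_iUnion₂.1 (hcov hy)
  refine ⟨⟨i z, ⟨z, hz, rfl⟩, ((hE z (htA z hz)).2.2 y hyz).1⟩, fun α hα => ⟨i z, ⟨z, hz, rfl⟩, ((hE z (htA z hz)).2.2 y hyz).2 α ?_⟩⟩
  intro h
  exact hα (mem_iUnion₂.2 ⟨z, hz, h⟩)

theorem lemmaM {K : Type u} [TopologicalSpace K] [CompactSpace K] [T2Space K]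
    {Ω : Type u} [LinearOrder Ω] (hΩ : OmOne Ω) {S B : Set K} (hS : PLS S)
    (hSB : ∀ s ∈ S, s ∉ B) (N : Ω → Set K) (hN : Monotone N)
    (H1 : ∀ β, IsLindelof (B ∩ N β))
    (H2 : ∀ D : Set K, IsClosed D → (∀ y ∈ D, y ∉ B) → ∃ β, D ⊆ N β)
    (H3 : ∀ β, IsLindelof (N β)ᶜ) : ∃ β, S ⊆ N β := by
  by_contra hcon
  push Not at hcon
  have hcon' : ∀ α, ∃ x ∈ S, x ∉ N α := fun α => not_subset.1 (hcon α)
  choose x hxS hxN using hcon'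
  let _ : TopologicalSpace Ω := ⊥
  have : DiscreteTopology Ω := ⟨rfl⟩
  let Y : Set (K × OnePoint Ω) :=
    {p | (∃ α, p = (x α, (α : OnePoint Ω))) ∨ (p.1 ∈ B ∧ p.2 = OnePoint.infty)}
  have hYL : IsLindelof Y := by
    rw [isLindelof_iff_countable_subcover]
    intro ι U hU hYU
    have hD : IsClosed {y : K | (y, OnePoint.infty) ∉ ⋃ i, U i} := by
      have : IsOpen {y : K | (y, (OnePoint.infty : OnePoint Ω)) ∈ ⋃ i, U i} :=
        (isOpen_iUnion hU).preimage (f := fun y : K => (y, (OnePoint.infty : OnePoint Ω))) (by fun_prop)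
      exact isClosed_compl_iff.2 this
    obtain ⟨β, hβ⟩ := H2 _ hD (fun y hy hB => hy (hYU (Or.inr ⟨hB, rfl⟩)))
    obtain ⟨t1, ht1, E, hE, h1⟩ := rects (H3 β) U hU (fun y hy => by
      by_contra h; exact hy (hβ h))
    obtain ⟨t2, ht2, E2, hE2, h2⟩ := rects (H1 β) U hU (fun y hy => hYU (Or.inr ⟨hy.1, rfl⟩))
    have hch : ∀ α, ∃ i, (x α, (α : OnePoint Ω)) ∈ U i := fun α => by
      simpa using hYU (Or.inl ⟨α, rfl⟩)
    choose i hi using hch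
    refine ⟨t1 ∪ t2 ∪ i '' (E ∪ Iio β), (ht1.union ht2).union ((hE.union (hΩ.ctb β)).image i), ?_⟩
    rintro ⟨y, p⟩ (⟨α, hα⟩ | ⟨hB, hp⟩)
    · rw [hα]
      by_cases hα' : α ∈ E ∪ Iio β
      · exact mem_iUnion₂.2 ⟨i α, Or.inr ⟨α, hα', rfl⟩, hi α⟩
      · have hb : β ≤ α := by
          by_contra h; exact hα' (Or.inr (not_le.1 h))
        obtain ⟨j, hj, hm⟩ := (h1 (x α) (fun h => hxN α (hN hb h))).2 α (fun h => hα' (Or.inl h))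
        exact mem_iUnion₂.2 ⟨j, Or.inl (Or.inl hj), hm⟩
    · simp only at hB hp
      subst hp
      by_cases hy : y ∈ N β
      · obtain ⟨j, hj, hm⟩ := (h2 y ⟨hB, hy⟩).1
        exact mem_iUnion₂.2 ⟨j, Or.inl (Or.inr hj), hm⟩
      · obtain ⟨j, hj, hm⟩ := (h1 y hy).1
        exact mem_iUnion₂.2 ⟨j, Or.inl (Or.inl hj), hm⟩
  have : LindelofSpace Y := isLindelof_iff_lindelofSpace.1 hYL
  have hSY := hS Y
  let d : Ω → S × Y := fun α => (⟨x α, hxS α⟩, ⟨(x α, (α : OnePoint Ω)), Or.inl ⟨α, rfl⟩⟩)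
  have hO : ∀ p : S × Y, ∃ O ∈ 𝓝 p, ∀ α α', d α ∈ O → d α' ∈ O → α = α' := by
    rintro ⟨s, ⟨⟨y, p⟩, (⟨α, hα⟩ | ⟨hB, hp⟩)⟩⟩
    · simp only [Prod.mk.injEq] at hα
      obtain ⟨rfl, rfl⟩ := hα
      refine ⟨{q | q.2.1.2 ∈ ({(α : OnePoint Ω)} : Set (OnePoint Ω))}, IsOpen.mem_nhds ?_ ?_, ?_⟩
      · refine IsOpen.preimage (f := fun q : S × Y => q.2.1.2) (by fun_prop) ?_
        have := OnePoint.isOpen_image_coe.2 (isOpen_discrete {α})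
        simpa using this
      · simp
      · intro a a' h1 h2
        simp only [mem_singleton_iff, mem_ofPred_eq, d, OnePoint.coe_eq_coe] at h1 h2
        rw [h1, h2]
    · simp only at hB hp
      have hne : (s : K) ≠ y := fun h => hSB s s.2 (h ▸ hB)
      obtain ⟨W, V, hW, hV, hsW, hyV, hd⟩ := t2_separation hne
      refine ⟨{q | (q.1 : K) ∈ W ∧ q.2.1.1 ∈ V}, IsOpen.mem_nhds ?_ ⟨hsW, hyV⟩, ?_⟩
      · exact (hW.preimage (f := fun q : S × Y => (q.1 : K)) (by fun_prop)).inter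
          (hV.preimage (f := fun q : S × Y => q.2.1.1) (by fun_prop))
      · rintro a a' ⟨h1, h2⟩ _
        exact absurd h2 (fun h => Set.disjoint_left.1 hd h1 h)
  choose O hOn hOd using hO
  obtain ⟨t, ht, -, hcov⟩ := (isLindelof_univ (X := S × Y)).elim_nhds_subcover O (fun p _ => hOn p)
  have hch : ∀ α, ∃ p : t, d α ∈ O p := fun α => by
    obtain ⟨p, hp, h⟩ := mem_iUnion₂.1 (hcov (mem_univ (d α)))
    exact ⟨⟨p, hp⟩, h⟩
  choose p hp using hch
  have hinj : Function.Injective p := fun a a' h => hOd (p a) a a' (hp a) (h ▸ hp a')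
  have := ht.to_subtype
  have := hinj.countable
  have := hΩ.unc
  exact not_countable (α := Ω) inferInstance

theorem OmOne.surj {Ω : Type u} [LinearOrder Ω] (h : OmOne Ω) (T : Type u) [Nonempty T]
    (hT : #T ≤ continuum) : ∃ f : Ω → T, Function.Surjective f := by
  rw [← h.card] at hT
  obtain ⟨e⟩ := Cardinal.le_def _ _ |>.1 hT
  exact ⟨Function.invFun e, Function.invFun_surjective e.injective⟩

theorem card_closed {M : Type u} [TopologicalSpace M] [SecondCountableTopology M] (P : Set M → Prop)
    (hP : ∀ C, P C → IsClosed C) :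
    #{C : Set M // P C} ≤ continuum := by
  let b := TopologicalSpace.countableBasis M
  have hb := TopologicalSpace.isBasis_countableBasis M
  have hc : #b ≤ ℵ₀ := Cardinal.le_aleph0_iff_set_countable.2 (TopologicalSpace.countable_countableBasis M)
  let f : {C : Set M // P C} → Set b := fun C => {U | (U : Set M) ⊆ C.1ᶜ}
  have hf : Function.Injective f := by
    have key : ∀ C : {C : Set M // P C}, C.1ᶜ = ⋃ U ∈ f C, (U : Set M) := by
      intro C
      ext x
      simp only [mem_iUnion]
      constructor
      · intro hx
        obtain ⟨U, hU, hxU, hs⟩ := hb.exists_subset_of_mem_open hx (hP _ C.2).isOpen_compl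
        exact ⟨⟨U, hU⟩, hs, hxU⟩
      · rintro ⟨U, hU, hx⟩
        exact hU hx
    intro C D h
    apply Subtype.ext
    rw [← compl_inj_iff, key C, key D, h]
  calc #{C : Set M // P C} ≤ #(Set b) := Cardinal.mk_le_of_injective hf
    _ = 2 ^ #b := Cardinal.mk_set
    _ ≤ 2 ^ ℵ₀ := Cardinal.power_le_power_left two_ne_zero hc
    _ = continuum := Cardinal.two_power_aleph0

theorem lemmaSigma {M : Type u} [TopologicalSpace M] [CompactSpace M] [T2Space M]
    [SecondCountableTopology M]
    {Ω : Type u} [LinearOrder Ω] (hΩ : OmOne Ω) {S : Set M} (hS : PLS S) :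
    ∃ 𝒞 : Set (Set M), 𝒞.Countable ∧ (∀ C ∈ 𝒞, IsCompact C) ∧ S = ⋃₀ 𝒞 := by
  have hne : Nonempty {C : Set M // IsCompact C ∧ C ⊆ S} := ⟨∅, isCompact_empty, empty_subset _⟩
  obtain ⟨Z, hZ⟩ := hΩ.surj {C : Set M // IsCompact C ∧ C ⊆ S}
    (card_closed _ (fun C hC => hC.1.isClosed))
  have hL : ∀ A : Set M, IsLindelof A := fun A => HereditarilyLindelofSpace.isLindelof A
  obtain ⟨β, hβ⟩ := lemmaM hΩ hS (B := Sᶜ) (fun s hs h => h hs)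
    (fun β => ⋃ γ ∈ Iio β, (Z γ).1)
    (fun a b hab => biUnion_subset_biUnion_left (Iio_subset_Iio hab))
    (fun _ => hL _)
    (fun D hD hDS => by
      obtain ⟨γ, hγ⟩ := hZ ⟨D, hD.isCompact, fun y hy => not_not.1 (hDS y hy)⟩
      obtain ⟨β, hβ⟩ := hΩ.bdd (countable_singleton γ)
      refine ⟨β, fun y hy => mem_iUnion₂.2 ⟨γ, hβ γ rfl, ?_⟩⟩
      rw [hγ]; exact hy) (fun _ => hL _)
  refine ⟨(fun γ => (Z γ).1) '' Iio β, (hΩ.ctb β).image _, ?_, ?_⟩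
  · rintro _ ⟨γ, _, rfl⟩
    exact (Z γ).2.1
  · apply Subset.antisymm
    · rw [sUnion_image]; exact hβ
    · rw [sUnion_image]
      exact iUnion₂_subset fun γ _ => (Z γ).2.2

theorem exists_OO : ∃ O : ℕ → Set unitInterval,
    TopologicalSpace.IsTopologicalBasis (range O) ∧ ∃ n, O n = ∅ := by
  have hb := (TopologicalSpace.isBasis_countableBasis unitInterval).insert_empty
  have hc : (insert ∅ (TopologicalSpace.countableBasis unitInterval)).Countable :=
    (TopologicalSpace.countable_countableBasis unitInterval).insert _
  obtain ⟨O, hO⟩ := hc.exists_eq_range (insert_nonempty _ _)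
  refine ⟨O, hO ▸ hb, ?_⟩
  have : (∅ : Set unitInterval) ∈ range O := hO ▸ mem_insert _ _
  exact this

/-- enumerated base of the unit interval -/
noncomputable def OO : ℕ → Set unitInterval := exists_OO.choose

theorem OO_basis : TopologicalSpace.IsTopologicalBasis (range OO) := exists_OO.choose_spec.1

theorem OO_empty : ∃ n, OO n = ∅ := exists_OO.choose_spec.2

/-- box -/
def bx {Ω : Type u} (F : Finset (Ω × ℕ)) : Set (Ω → unitInterval) := {y | ∀ p ∈ F, y p.1 ∈ OO p.2}

theorem isOpen_bx {Ω : Type u} (F : Finset (Ω × ℕ)) : IsOpen (bx F) := by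
  have : bx F = ⋂ p ∈ F, {y : Ω → unitInterval | y p.1 ∈ OO p.2} := by
    ext y; simp [bx]
  rw [this]
  exact isOpen_biInter_finset fun p _ =>
    (OO_basis.isOpen ⟨p.2, rfl⟩).preimage (f := fun y : Ω → unitInterval => y p.1) (by fun_prop)

theorem bx_empty {Ω : Type u} [Nonempty Ω] : ∃ F : Finset (Ω × ℕ), bx F = ∅ := by
  obtain ⟨n, hn⟩ := OO_empty
  refine ⟨{(Classical.arbitrary Ω, n)}, ?_⟩
  ext y
  simp [bx, hn]

theorem bx_nhdsJ {Ω : Type u} (J : Set Ω) {U : Set (J → unitInterval)} (hU : IsOpen U)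
    {y : Ω → unitInterval} (hy : J.domRestrict y ∈ U) :
    ∃ F : Finset (Ω × ℕ), (∀ p ∈ F, p.1 ∈ J) ∧ y ∈ bx F ∧ ∀ z ∈ bx F, J.domRestrict z ∈ U := by
  classical
  obtain ⟨I, w, hw, hs⟩ := isOpen_pi_iff.1 hU _ hy
  have h1 : ∀ a, ∃ n, a ∈ I → J.domRestrict y a ∈ OO n ∧ OO n ⊆ w a := by
    intro a
    by_cases ha : a ∈ I
    · obtain ⟨V, ⟨n, rfl⟩, h1, h2⟩ := OO_basis.exists_subset_of_mem_open (hw a ha).2 (hw a ha).1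
      exact ⟨n, fun _ => ⟨h1, h2⟩⟩
    · exact ⟨0, fun h => absurd h ha⟩
  choose n hn using h1
  refine ⟨I.image fun a => (a.1, n a), ?_, ?_, ?_⟩
  · intro p hp
    obtain ⟨a, _, rfl⟩ := Finset.mem_image.1 hp
    exact a.2
  · intro p hp
    obtain ⟨a, ha, rfl⟩ := Finset.mem_image.1 hp
    exact (hn a ha).1
  · intro z hz
    apply hs
    intro a ha
    exact (hn a ha).2 (hz _ (Finset.mem_image.2 ⟨a, ha, rfl⟩))

theorem bx_nhds {Ω : Type u} {U : Set (Ω → unitInterval)} (hU : IsOpen U)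
    {y : Ω → unitInterval} (hy : y ∈ U) :
    ∃ F : Finset (Ω × ℕ), y ∈ bx F ∧ bx F ⊆ U := by
  let g : (↥(univ : Set Ω) → unitInterval) → (Ω → unitInterval) := fun f i => f ⟨i, mem_univ i⟩
  have hg : Continuous g := by fun_prop
  obtain ⟨F, _, h1, h2⟩ := bx_nhdsJ univ (hU.preimage hg) (y := y) hy
  exact ⟨F, h1, fun z hz => h2 z hz⟩

/-- saturated -/
def Sat {Ω : Type u} [LinearOrder Ω] (l : Ω) (T : Set (Ω → unitInterval)) : Prop :=
  ∀ y z, (∀ i < l, y i = z i) → y ∈ T → z ∈ T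

theorem Sat.mono {Ω : Type u} [LinearOrder Ω] {l m : Ω} {T : Set (Ω → unitInterval)}
    (h : Sat l T) (hlm : l ≤ m) : Sat m T :=
  fun y z hyz hy => h y z (fun i hi => hyz i (hi.trans_le hlm)) hy

theorem Sat.compl {Ω : Type u} [LinearOrder Ω] {l : Ω} {T : Set (Ω → unitInterval)}
    (h : Sat l T) : Sat l Tᶜ :=
  fun y z hyz hy hz => hy (h z y (fun i hi => (hyz i hi).symm) hz)

theorem Sat.inter {Ω : Type u} [LinearOrder Ω] {l : Ω} {T T' : Set (Ω → unitInterval)}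
    (h : Sat l T) (h' : Sat l T') : Sat l (T ∩ T') :=
  fun y z hyz hy => ⟨h y z hyz hy.1, h' y z hyz hy.2⟩

theorem Sat.iUnion {Ω : Type u} [LinearOrder Ω] {l : Ω} {ι : Sort*} {T : ι → Set (Ω → unitInterval)}
    (h : ∀ i, Sat l (T i)) : Sat l (⋃ i, T i) := by
  intro y z hyz hy
  obtain ⟨i, hi⟩ := mem_iUnion.1 hy
  exact mem_iUnion.2 ⟨i, h i y z hyz hi⟩

theorem lindelof_preimage {X Y : Type*} [TopologicalSpace X] [CompactSpace X] [TopologicalSpace Y]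
    [T2Space Y] {f : X → Y} (hf : Continuous f) {A : Set Y} (hA : IsLindelof A) :
    IsLindelof (f ⁻¹' A) := by
  rw [isLindelof_iff_countable_subcover]
  intro ι U hU hAU
  have h1 : ∀ y, ∃ t : Finset ι, y ∈ A → f ⁻¹' {y} ⊆ ⋃ i ∈ t, U i := by
    intro y
    by_cases hy : y ∈ A
    · have hc : IsCompact (f ⁻¹' {y}) := (isClosed_singleton.preimage hf).isCompact
      obtain ⟨t, ht⟩ := hc.elim_finite_subcover U hU (fun x hx => hAU (by
        have : f x = y := hx
        change f x ∈ A
        rw [this]; exact hy))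
      exact ⟨t, fun _ => ht⟩
    · exact ⟨∅, fun h => absurd h hy⟩
  choose t ht using h1
  let V : Y → Set Y := fun y => (f '' (⋃ i ∈ t y, U i)ᶜ)ᶜ
  obtain ⟨r, hr, hrA, hcov⟩ := hA.elim_nhds_subcover V (fun y hy => by
    apply IsOpen.mem_nhds
    · apply isOpen_compl_iff.2
      exact hf.isClosedMap _ (isOpen_biUnion fun i _ => hU i).isClosed_compl
    · rintro ⟨x, hx, hxy⟩
      exact hx (ht y hy hxy))
  refine ⟨⋃ y ∈ r, (t y : Set ι), hr.biUnion fun y _ => (t y).countable_toSet, ?_⟩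
  intro x hx
  obtain ⟨y, hy, hxy⟩ := mem_iUnion₂.1 (hcov hx)
  by_contra hcon
  apply hxy
  refine ⟨x, ?_, rfl⟩
  intro hx'
  obtain ⟨i, hi, hxi⟩ := mem_iUnion₂.1 hx'
  exact hcon (mem_iUnion₂.2 ⟨i, mem_iUnion₂.2 ⟨y, hy, hi⟩, hxi⟩)

theorem Sat.isLindelof {Ω : Type u} [LinearOrder Ω] (hΩ : OmOne Ω) {l : Ω}
    {T : Set (Ω → unitInterval)} (h : Sat l T) : IsLindelof T := by
  have := (hΩ.ctb l).to_subtype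
  let p : (Ω → unitInterval) → (Iio l → unitInterval) := (Iio l).domRestrict
  have hp : Continuous p := by
    apply continuous_pi; intro i; exact continuous_apply _
  have : T = p ⁻¹' (p '' T) := by
    apply Subset.antisymm (subset_preimage_image _ _)
    rintro y ⟨z, hz, hzy⟩
    exact h z y (fun i hi => congrFun hzy ⟨i, hi⟩) hz
  rw [this]
  exact lindelof_preimage hp (HereditarilyLindelofSpace.isLindelof _)

/-- basic closed G-delta type set -/
def ZZ {Ω : Type u} (w : ℕ → Finset (Ω × ℕ)) : Set (Ω → unitInterval) := {y | ∀ n, y ∉ bx (w n)}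

theorem isClosed_ZZ {Ω : Type u} (w : ℕ → Finset (Ω × ℕ)) : IsClosed (ZZ w) := by
  have : ZZ w = ⋂ n, (bx (w n))ᶜ := by ext y; simp [ZZ]
  rw [this]
  exact isClosed_iInter fun n => (isOpen_bx _).isClosed_compl

theorem ZZ_sat {Ω : Type u} [LinearOrder Ω] (hΩ : OmOne Ω) (w : ℕ → Finset (Ω × ℕ)) :
    ∃ l, Sat l (ZZ w) := by
  obtain ⟨l, hl⟩ := hΩ.bdd (A := ⋃ n, Prod.fst '' (w n : Set (Ω × ℕ)))
    (countable_iUnion fun n => (w n).countable_toSet.image _)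
  refine ⟨l, fun y z hyz hy n hz => hy n ?_⟩
  intro p hp
  rw [hyz p.1 (hl _ (mem_iUnion.2 ⟨n, p, hp, rfl⟩))]
  exact hz p hp

theorem card_codes {Ω : Type u} [LinearOrder Ω] (hΩ : OmOne Ω) :
    #(ℕ → Finset (Ω × ℕ)) ≤ continuum := by
  have := hΩ.unc
  have : Infinite Ω := inferInstance
  have h1 : #(Finset (Ω × ℕ)) = continuum := by
    rw [Cardinal.mk_finset_of_infinite, Cardinal.mk_prod]
    simp [hΩ.card]
  rw [Cardinal.mk_arrow]
  simp [h1]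

/-- the saturation of S -/
def EE {Ω : Type u} [LinearOrder Ω] (S : Set (Ω → unitInterval)) (β : Ω) :
    Set (Ω → unitInterval) := {y | ∃ s ∈ S, ∀ i < β, s i = y i}

theorem EE_anti {Ω : Type u} [LinearOrder Ω] {S : Set (Ω → unitInterval)} {β γ : Ω} (h : β ≤ γ)
    {y : Ω → unitInterval} (hy : y ∈ EE S γ) : y ∈ EE S β := by
  obtain ⟨s, hs, hsy⟩ := hy
  exact ⟨s, hs, fun i hi => hsy i (hi.trans_le h)⟩

theorem EE_sat {Ω : Type u} [LinearOrder Ω] (S : Set (Ω → unitInterval)) (β : Ω) :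
    Sat β (EE S β) := by
  rintro y z hyz ⟨s, hs, hsy⟩
  exact ⟨s, hs, fun i hi => (hsy i hi).trans (hyz i hi)⟩

theorem EE_inter {Ω : Type u} [LinearOrder Ω] (hΩ : OmOne Ω) {S : Set (Ω → unitInterval)}
    (hS : IsLindelof S) {y : Ω → unitInterval} (hy : ∀ β, y ∈ EE S β) : y ∈ S := by
  by_contra hyS
  have := hΩ.unc
  have h1 : ∀ s : Ω → unitInterval, ∃ i, s ∈ S → s i ≠ y i := by
    intro s
    by_cases hs : s ∈ S
    · have : s ≠ y := fun h => hyS (h ▸ hs)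
      obtain ⟨i, hi⟩ := Function.ne_iff.1 this
      exact ⟨i, fun _ => hi⟩
    · exact ⟨Classical.arbitrary Ω, fun h => absurd h hs⟩
  choose i hi using h1
  obtain ⟨t, ht, htS, hcov⟩ := hS.elim_nhds_subcover (fun s => {z | z (i s) ≠ y (i s)})
    (fun s hs => IsOpen.mem_nhds (isOpen_compl_singleton.preimage
      (f := fun z : Ω → unitInterval => z (i s)) (by fun_prop)) (hi s hs))
  obtain ⟨β, hβ⟩ := hΩ.bdd (ht.image i)
  obtain ⟨s, hs, hsy⟩ := hy β
  obtain ⟨s', hs', h⟩ := mem_iUnion₂.1 (hcov hs)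
  exact h (hsy _ (hβ _ ⟨s', hs', rfl⟩))

theorem closed_pt {Ω : Type u} [LinearOrder Ω] (hΩ : OmOne Ω) (g : Ω → Ω) (hg : ∀ β, β < g β) :
    ∃ l : Ω, ∃ b : ℕ → Ω, (∀ n, b (n+1) = g (b n)) ∧ (∀ n, b n < l) ∧ ∀ i < l, ∃ n, i < b n := by
  have := hΩ.unc
  have := hΩ.wf
  let b : ℕ → Ω := fun n => g^[n] (Classical.arbitrary Ω)
  have hb : ∀ n, b (n+1) = g (b n) := fun n => Function.iterate_succ_apply' _ _ _
  obtain ⟨l, hl, hmin⟩ := WellFounded.has_min (wellFounded_lt (α := Ω)) {l | ∀ n, b n < l}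
    (hΩ.bddF b)
  refine ⟨l, b, hb, hl, fun i hi => ?_⟩
  by_contra hcon
  push Not at hcon
  refine hmin i (fun n => ?_) hi
  calc b n < g (b n) := hg _
    _ = b (n+1) := (hb n).symm
    _ ≤ i := hcon _

theorem bx_sat {Ω : Type u} [LinearOrder Ω] (hΩ : OmOne Ω) (F : Finset (Ω × ℕ)) :
    ∃ l, Sat l (bx F) := by
  obtain ⟨l, hl⟩ := hΩ.bdd (A := Prod.fst '' (F : Set (Ω × ℕ))) (F.countable_toSet.image _)
  refine ⟨l, fun y z hyz hy p hp => ?_⟩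
  rw [← hyz p.1 (hl _ ⟨p, hp, rfl⟩)]
  exact hy p hp

/-- partial unions -/
def NN {Ω : Type u} [LinearOrder Ω] (Z : Ω → Set (Ω → unitInterval)) (β : Ω) :
    Set (Ω → unitInterval) := ⋃ γ ∈ Iio β, Z γ

theorem NN_mono {Ω : Type u} [LinearOrder Ω] (Z : Ω → Set (Ω → unitInterval)) : Monotone (NN Z) :=
  fun _ _ hab => biUnion_subset_biUnion_left (Iio_subset_Iio hab)

theorem NN_sat {Ω : Type u} [LinearOrder Ω] (hΩ : OmOne Ω) {Z : Ω → Set (Ω → unitInterval)}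
    {lz : Ω → Ω} (hZ : ∀ γ, Sat (lz γ) (Z γ)) (β : Ω) : ∃ l, Sat l (NN Z β) := by
  obtain ⟨l, hl⟩ := hΩ.bdd ((hΩ.ctb β).image lz)
  exact ⟨l, Sat.iUnion fun γ => Sat.iUnion fun hγ => (hZ γ).mono (hl _ ⟨γ, hγ, rfl⟩).le⟩

theorem alsterH2 {Ω : Type u} [LinearOrder Ω] (hΩ : OmOne Ω) {S : Set (Ω → unitInterval)}
    (hS : PLS S) (Z : Ω → Set (Ω → unitInterval)) (hZc : ∀ γ, IsClosed (Z γ))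
    (lz : Ω → Ω) (hZs : ∀ γ, Sat (lz γ) (Z γ))
    (hZ : ∀ C, IsCompact C → C ⊆ S → ∃ γ, C ⊆ Z γ)
    (D : Set (Ω → unitInterval)) (hDc : IsClosed D)
    (hD : ∀ β, ∀ y ∈ D, y ∉ NN Z β → y ∈ EE S β) : ∃ β, D ⊆ NN Z β := by
  classical
  by_contra hcon
  let small : Finset (Ω × ℕ) → Prop := fun F => ∃ β, bx F ∩ D ⊆ NN Z β
  let L : Set (Ω → unitInterval) := {y | y ∈ D ∧ ∀ F, small F → y ∉ bx F}
  have hLc : IsClosed L := by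
    have : L = D ∩ ⋂ F, ⋂ (_ : small F), (bx F)ᶜ := by
      ext y; simp [L]
    rw [this]
    exact hDc.inter (isClosed_iInter fun F => isClosed_iInter fun _ => (isOpen_bx F).isClosed_compl)
  have Sm : ∀ F β, bx F ∩ L ⊆ NN Z β → small F := by
    intro F β hF
    obtain ⟨l1, hl1⟩ := bx_sat hΩ F
    obtain ⟨l2, hl2⟩ := NN_sat hΩ hZs β
    have hsat : Sat (max l1 l2) (bx F ∩ (NN Z β)ᶜ) :=
      (hl1.mono (le_max_left _ _)).inter (hl2.compl.mono (le_max_right _ _))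
    have hlin : IsLindelof (bx F ∩ (NN Z β)ᶜ ∩ D) := (hsat.isLindelof hΩ).inter_right hDc
    have h1 : ∀ y, ∃ G, ∃ b, y ∈ bx F ∩ (NN Z β)ᶜ ∩ D → y ∈ bx G ∧ bx G ∩ D ⊆ NN Z b := by
      intro y
      by_cases hy : y ∈ bx F ∩ (NN Z β)ᶜ ∩ D
      · have hyL : y ∉ L := fun h => hy.1.2 (hF ⟨hy.1.1, h⟩)
        have : ∃ G, small G ∧ y ∈ bx G := by
          by_contra hh
          push Not at hh
          exact hyL ⟨hy.2, hh⟩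
        obtain ⟨G, ⟨b, hb⟩, hyG⟩ := this
        exact ⟨G, b, fun _ => ⟨hyG, hb⟩⟩
      · exact ⟨∅, β, fun h => absurd h hy⟩
    choose G b hGb using h1
    obtain ⟨t, ht, htA, hcov⟩ := hlin.elim_nhds_subcover (fun y => bx (G y))
      (fun y hy => (isOpen_bx _).mem_nhds (hGb y hy).1)
    obtain ⟨β', hβ'⟩ := hΩ.bdd ((ht.image b).insert β)
    refine ⟨β', fun z hz => ?_⟩
    by_cases hzN : z ∈ NN Z β
    · exact NN_mono Z (hβ' _ (mem_insert _ _)).le hzN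
    · obtain ⟨y, hy, hzy⟩ := mem_iUnion₂.1 (hcov ⟨⟨hz.1, hzN⟩, hz.2⟩)
      exact NN_mono Z (hβ' _ (mem_insert_of_mem _ ⟨y, hy, rfl⟩)).le ((hGb y (htA y hy)).2 ⟨hzy, hz.2⟩)
  have hLne : L.Nonempty := by
    by_contra hne
    rw [not_nonempty_iff_eq_empty] at hne
    have := hΩ.unc
    obtain ⟨β, hβ⟩ := Sm ∅ (Classical.arbitrary Ω) (by rw [hne]; simp)
    exact hcon ⟨β, fun y hy => hβ ⟨by simp [bx], hy⟩⟩
  have hrho : ∀ F, ∃ r, (bx F ∩ L).Nonempty → ∃ y ∈ bx F ∩ L, y ∉ EE S r := by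
    intro F
    by_contra hh
    push Not at hh
    have hsub : bx F ∩ L ⊆ S := fun z hz => EE_inter hΩ hS.isLindelof fun β => (hh β).2 z hz
    have := hΩ.unc
    obtain ⟨y, hyF, hyL⟩ := (hh (Classical.arbitrary Ω)).1
    obtain ⟨T, hT, hTc, hTF⟩ := exists_mem_nhds_isClosed_subset ((isOpen_bx F).mem_nhds hyF)
    obtain ⟨F', hyF', hF'⟩ := bx_nhds isOpen_interior (mem_interior_iff_mem_nhds.2 hT)
    obtain ⟨γ, hγ⟩ := hZ (T ∩ L) (hTc.inter hLc).isCompact (fun z hz => hsub ⟨hTF hz.1, hz.2⟩)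
    obtain ⟨γ', hγ'⟩ := hΩ.bdd (countable_singleton γ)
    exact hyL.2 F' (Sm F' γ' fun z hz =>
      mem_iUnion₂.2 ⟨γ, hγ' γ rfl, hγ ⟨interior_subset (hF' hz.1), hz.2⟩⟩) hyF'
  choose r hr using hrho
  have hg : ∀ β, ∃ g, β < g ∧ (∀ F : Finset (Ω × ℕ), (∀ p ∈ F, p.1 < β) → r F < g) ∧
      ∀ γ < β, lz γ < g := by
    intro β
    have hc1 : {F : Finset (Ω × ℕ) | ∀ p ∈ F, p.1 < β}.Countable := by
      have h2 : (Iio β ×ˢ (univ : Set ℕ)).Countable := (hΩ.ctb β).prod countable_univ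
      have := Set.countable_ofPred_finite_subset h2
      refine (this.preimage (f := fun F : Finset (Ω × ℕ) => (F : Set (Ω × ℕ)))
        Finset.coe_injective).mono ?_
      intro F hF
      exact ⟨F.finite_toSet, fun p hp => ⟨hF p hp, mem_univ _⟩⟩
    obtain ⟨g, hg⟩ := hΩ.bdd ((((hc1.image r).union ((hΩ.ctb β).image lz))).insert β)
    exact ⟨g, hg _ (mem_insert _ _), fun F hF => hg _ (mem_insert_of_mem _ (Or.inl ⟨F, hF, rfl⟩)),
      fun γ hγ => hg _ (mem_insert_of_mem _ (Or.inr ⟨γ, hγ, rfl⟩))⟩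
  choose g hg1 hg2 hg3 using hg
  obtain ⟨l, b, hb, hbl, hl⟩ := closed_pt hΩ g hg1
  have hlr : ∀ F : Finset (Ω × ℕ), (∀ p ∈ F, p.1 < l) → r F < l := by
    intro F hF
    have : ∃ n, ∀ p ∈ F, p.1 < b n := by
      rcases F.eq_empty_or_nonempty with rfl | hne
      · exact ⟨0, by simp⟩
      · obtain ⟨q, hq, hmax⟩ := F.exists_max_image Prod.fst hne
        obtain ⟨n, hn⟩ := hl _ (hF q hq)
        exact ⟨n, fun p hp => (hmax p hp).trans_lt hn⟩
    obtain ⟨n, hn⟩ := this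
    exact (hg2 _ F hn).trans (hb n ▸ hbl (n+1))
  have hlz : ∀ γ < l, lz γ < l := by
    intro γ hγ
    obtain ⟨n, hn⟩ := hl γ hγ
    exact (hg3 _ γ hn).trans (hb n ▸ hbl (n+1))
  have hcl := (hΩ.ctb l).to_subtype
  let p : (Ω → unitInterval) → (Iio l → unitInterval) := (Iio l).domRestrict
  have hp : Continuous p := by
    apply continuous_pi; intro i; exact continuous_apply _
  obtain ⟨𝒞, h𝒞, h𝒞c, h𝒞S⟩ := lemmaSigma hΩ (hS.image hp)
  let 𝒢 : Set (Set (Iio l → unitInterval)) := (fun γ => p '' Z γ) '' Iio l ∪ 𝒞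
  have h𝒢 : 𝒢.Countable := ((hΩ.ctb l).image _).union h𝒞
  have h𝒢c : ∀ G ∈ 𝒢, IsClosed G := by
    rintro G (⟨γ, _, rfl⟩ | hG)
    · exact ((hZc γ).isCompact.image hp).isClosed
    · exact (h𝒞c G hG).isClosed
  have hcov : ∀ y ∈ L, ∃ G ∈ 𝒢, p y ∈ G := by
    intro y hy
    by_cases hyN : y ∈ NN Z l
    · obtain ⟨γ, hγ, hyγ⟩ := mem_iUnion₂.1 hyN
      exact ⟨p '' Z γ, Or.inl ⟨γ, hγ, rfl⟩, y, hyγ, rfl⟩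
    · obtain ⟨s, hs, hsy⟩ := hD l y hy.1 hyN
      have : p y ∈ p '' S := ⟨s, hs, funext fun i => hsy i i.2⟩
      rw [h𝒞S] at this
      obtain ⟨C, hC, hyC⟩ := this
      exact ⟨C, Or.inr hC, hyC⟩
  have hcF : CompactSpace (p '' L) := isCompact_iff_compactSpace.1 (hLc.isCompact.image hp)
  have hnF : Nonempty (p '' L) := (hLne.image p).to_subtype
  have h𝒢' := h𝒢.to_subtype
  obtain ⟨⟨G, hG⟩, ⟨⟨q, y, hy, rfl⟩, hq⟩⟩ := nonempty_interior_of_iUnion_of_closed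
    (X := p '' L) (f := fun G : 𝒢 => Subtype.val ⁻¹' (G : Set (Iio l → unitInterval)))
    (fun G => (h𝒢c G G.2).preimage continuous_subtype_val)
    (by
      rw [eq_univ_iff_forall]
      rintro ⟨_, y, hy, rfl⟩
      obtain ⟨G, hG, hyG⟩ := hcov y hy
      exact mem_iUnion.2 ⟨⟨G, hG⟩, hyG⟩)
  obtain ⟨W, hWG, hWo, hyW⟩ := mem_interior.1 hq
  obtain ⟨U, hU, rfl⟩ := isOpen_induced_iff.1 hWo
  obtain ⟨F, hFl, hyF, hFU⟩ := bx_nhdsJ (Iio l) hU (y := y) hyW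
  have key : ∀ z ∈ bx F ∩ L, p z ∈ G := fun z hz =>
    hWG (a := ⟨p z, z, hz.2, rfl⟩) (hFU z hz.1)
  rcases hG with ⟨γ, hγ, rfl⟩ | hG
  · refine hy.2 F (Sm F l fun z hz => mem_iUnion₂.2 ⟨γ, hγ, ?_⟩) hyF
    obtain ⟨z', hz', hzz⟩ := key z hz
    exact (hZs γ).mono (hlz γ hγ).le z' z (fun i hi => congrFun hzz ⟨i, hi⟩) hz'
  · obtain ⟨z, hz, hzE⟩ := hr F ⟨y, hyF, hy⟩
    have : p z ∈ p '' S := by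
      rw [h𝒞S]; exact ⟨G, hG, key z hz⟩
    obtain ⟨s, hs, hsz⟩ := this
    exact hzE (EE_anti (hlr F hFl).le ⟨s, hs, fun i hi => congrFun hsz ⟨i, hi⟩⟩)

theorem alster {Ω : Type u} [LinearOrder Ω] (hΩ : OmOne Ω) {S : Set (Ω → unitInterval)}
    (hS : PLS S) (𝒟 : Set (ℕ → Finset (Ω × ℕ)))
    (h𝒟 : ∀ C, IsCompact C → C ⊆ S → ∃ w ∈ 𝒟, C ⊆ ZZ w) :
    ∃ 𝒟' ⊆ 𝒟, 𝒟'.Countable ∧ S ⊆ ⋃ w ∈ 𝒟', ZZ w := by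
  have hne : Nonempty 𝒟 := by
    obtain ⟨w, hw, _⟩ := h𝒟 ∅ isCompact_empty (empty_subset _)
    exact ⟨w, hw⟩
  obtain ⟨w, hw⟩ := hΩ.surj 𝒟 ((Cardinal.mk_set_le _).trans (card_codes hΩ))
  let Z : Ω → Set (Ω → unitInterval) := fun γ => ZZ (w γ).1
  have hZc : ∀ γ, IsClosed (Z γ) := fun γ => isClosed_ZZ _
  have hZs : ∀ γ, ∃ l, Sat l (Z γ) := fun γ => ZZ_sat hΩ _
  choose lz hZs using hZs
  have hZ : ∀ C, IsCompact C → C ⊆ S → ∃ γ, C ⊆ Z γ := by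
    intro C hC hCS
    obtain ⟨v, hv, h⟩ := h𝒟 C hC hCS
    obtain ⟨γ, hγ⟩ := hw ⟨v, hv⟩
    exact ⟨γ, by simp only [Z, hγ]; exact h⟩
  obtain ⟨β, hβ⟩ := lemmaM hΩ hS (B := ⋃ β, (EE S β)ᶜ ∩ (NN Z β)ᶜ)
    (by
      intro s hs hsB
      obtain ⟨β, h1, _⟩ := mem_iUnion.1 hsB
      exact h1 ⟨s, hs, fun _ _ => rfl⟩)
    (NN Z) (NN_mono Z)
    (by
      intro β
      have hc := (hΩ.ctb β).to_subtype
      have : (⋃ β, (EE S β)ᶜ ∩ (NN Z β)ᶜ) ∩ NN Z β =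
          ⋃ γ : Iio β, (EE S γ)ᶜ ∩ (NN Z γ)ᶜ ∩ NN Z β := by
        ext y
        simp only [mem_inter_iff, mem_iUnion]
        constructor
        · rintro ⟨⟨γ, h1⟩, h2⟩
          refine ⟨⟨γ, ?_⟩, h1, h2⟩
          by_contra hlt
          exact h1.2 (NN_mono Z (not_lt.1 hlt) h2)
        · rintro ⟨γ, h1, h2⟩
          exact ⟨⟨γ, h1⟩, h2⟩
      rw [this]
      apply isLindelof_iUnion
      intro γ
      obtain ⟨l1, hl1⟩ := NN_sat hΩ hZs γ
      obtain ⟨l2, hl2⟩ := NN_sat hΩ hZs β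
      obtain ⟨l, hl⟩ := hΩ.bdd (A := {γ.1, l1, l2}) (Set.toFinite _).countable
      have a1 := hl γ.1 (by simp)
      have a2 := hl l1 (by simp)
      have a3 := hl l2 (by simp)
      exact ((((EE_sat S γ).compl.mono a1.le).inter (hl1.compl.mono a2.le)).inter
        (hl2.mono a3.le)).isLindelof hΩ)
    (by
      intro D hDc hDB
      refine alsterH2 hΩ hS Z hZc lz hZs hZ D hDc fun β y hy hyN => ?_
      by_contra hE
      exact hDB y hy (mem_iUnion.2 ⟨β, hE, hyN⟩))
    (fun β => by
      obtain ⟨l, hl⟩ := NN_sat hΩ hZs β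
      exact hl.compl.isLindelof hΩ)
  refine ⟨(fun γ => (w γ).1) '' Iio β, ?_, (hΩ.ctb β).image _, ?_⟩
  · rintro _ ⟨γ, _, rfl⟩
    exact (w γ).2
  · rw [biUnion_image]
    exact hβ

theorem isOpen_Wn {K : Type*} [TopologicalSpace K] {V : ℕ → Set K} (hV : ∀ n, IsOpen (V n))
    (hk : ∃ k, ∀ n ≥ k, V n = Set.univ) : IsOpen {y : ℕ → K | ∀ n, y n ∈ V n} := by
  obtain ⟨k, hk⟩ := hk
  have : {y : ℕ → K | ∀ n, y n ∈ V n} = ⋂ n ∈ Finset.range k, {y : ℕ → K | y n ∈ V n} := by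
    ext y
    simp only [mem_ofPred_eq, mem_iInter, Finset.mem_range]
    refine ⟨fun h n _ => h n, fun h n => ?_⟩
    by_cases hn : n < k
    · exact h n hn
    · rw [hk n (not_lt.1 hn)]; trivial
  rw [this]
  exact isOpen_biInter_finset fun n _ => (hV n).preimage (continuous_apply n)

theorem tubeStep {Ω : Type u} [Nonempty Ω] {S : Set (Ω → unitInterval)} {ι : Type*}
    (V : ι → ℕ → Set (Ω → unitInterval)) (hVo : ∀ j n, IsOpen (V j n))
    (hVk : ∀ j, ∃ k, ∀ n ≥ k, V j n = Set.univ)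
    (n : ℕ) (L : ℕ → Set (Ω → unitInterval)) (hL : ∀ i, IsCompact (L i)) (hLS : ∀ i, L i ⊆ S)
    (C : Set (Ω → unitInterval)) (hC : IsCompact C) (hCS : C ⊆ S)
    (J : Set ι) (hJ : J.Countable)
    (hJC : ∀ x : ℕ → Ω → unitInterval, (∀ i, x i ∈ S) → (∀ i < n, x i ∈ L i) → x n ∈ C →
      ∃ j ∈ J, ∀ m, x m ∈ V j m) :
    ∃ w : ℕ → Finset (Ω × ℕ), C ⊆ ZZ w ∧
      ∀ x : ℕ → Ω → unitInterval, (∀ i, x i ∈ S) → (∀ i < n, x i ∈ L i) → x n ∈ ZZ w →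
      ∃ j ∈ J, ∀ m, x m ∈ V j m := by
  classical
  have hB : ∀ F : Finset ι, ∃ 𝓑 : Set (Finset (Ω × ℕ)), 𝓑.Countable ∧ (∀ G ∈ 𝓑, ∀ y ∈ C, y ∉ bx G) ∧
      ((∀ y : ℕ → Ω → unitInterval, (∀ i < n, y i ∈ L i) → y n ∈ C →
        ∃ j ∈ F, ∀ i ≤ n, y i ∈ V j i) →
      ∀ y : ℕ → Ω → unitInterval, (∀ i < n, y i ∈ L i) → (∀ G ∈ 𝓑, y n ∉ bx G) →
        ∃ j ∈ F, ∀ i ≤ n, y i ∈ V j i) := by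
    intro F
    by_cases hok : ∀ y : ℕ → Ω → unitInterval, (∀ i < n, y i ∈ L i) → y n ∈ C →
        ∃ j ∈ F, ∀ i ≤ n, y i ∈ V j i
    swap
    · exact ⟨∅, countable_empty, by simp, fun h => absurd h hok⟩
    have hA : IsCompact ((Iio n).pi L) :=
      (isClosed_set_pi fun i _ => (hL i).isClosed).isCompact
    let G : Set ((ℕ → Ω → unitInterval) × (Ω → unitInterval)) :=
      ⋃ j ∈ F, ((Iio n).pi (V j)) ×ˢ (V j n)
    have hG : IsOpen G := isOpen_biUnion fun j _ =>
      (isOpen_set_pi (finite_Iio n) fun i _ => hVo j i).prod (hVo j n)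
    have hsub : ((Iio n).pi L) ×ˢ C ⊆ G := by
      rintro ⟨y, c⟩ ⟨hy, hc⟩
      obtain ⟨j, hj, h⟩ := hok (Function.update y n c)
        (fun i hi => by rw [Function.update_of_ne (ne_of_lt hi)]; exact hy i hi)
        (by rw [Function.update_self]; exact hc)
      refine mem_iUnion₂.2 ⟨j, hj, fun i hi => ?_, ?_⟩
      · have := h i (le_of_lt hi)
        rwa [Function.update_of_ne (ne_of_lt hi)] at this
      · have := h n le_rfl
        rwa [Function.update_self] at this
    obtain ⟨a, O, ha, hO, haA, hOC, haO⟩ := generalized_tube_lemma hA hC hG hsub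
    have h1 : ∀ y : Ω → unitInterval, ∃ H : Finset (Ω × ℕ), y ∈ Oᶜ → y ∈ bx H ∧ bx H ⊆ Cᶜ := by
      intro y
      by_cases hy : y ∈ Oᶜ
      · obtain ⟨H, h⟩ := bx_nhds hC.isClosed.isOpen_compl (y := y) (fun h => hy (hOC h))
        exact ⟨H, fun _ => h⟩
      · exact ⟨∅, fun h => absurd h hy⟩
    choose H hH using h1
    obtain ⟨t, ht, hcov⟩ := hO.isClosed_compl.isCompact.elim_nhds_subcover (fun y => bx (H y))
      (fun y hy => (isOpen_bx _).mem_nhds (hH y hy).1)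
    refine ⟨H '' t, t.countable_toSet.image _, ?_, fun _ y hy hyn => ?_⟩
    · rintro _ ⟨z, hz, rfl⟩ y hy hyz
      exact (hH z (ht z hz)).2 hyz hy
    · have hyO : y n ∈ O := by
        by_contra h
        obtain ⟨z, hz, hyz⟩ := mem_iUnion₂.1 (hcov h)
        exact hyn _ ⟨z, hz, rfl⟩ hyz
      obtain ⟨j, hj, h1, h2⟩ := mem_iUnion₂.1 (haO (show (y, y n) ∈ a ×ˢ O from ⟨haA hy, hyO⟩))
      refine ⟨j, hj, fun i hi => ?_⟩
      rcases hi.lt_or_eq with h | rfl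
      · exact h1 i h
      · exact h2
  choose 𝓑 h𝓑c h𝓑C h𝓑 using hB
  obtain ⟨F0, hF0⟩ := bx_empty (Ω := Ω)
  have hfin : {F : Finset ι | (F : Set ι) ⊆ J}.Countable := by
    refine ((Set.countable_ofPred_finite_subset hJ).preimage (f := fun F : Finset ι => (F : Set ι))
        Finset.coe_injective).mono ?_
    intro F hF
    exact ⟨F.finite_toSet, hF⟩
  obtain ⟨w, hw⟩ := ((hfin.biUnion fun F _ => h𝓑c F).insert F0).exists_eq_range (insert_nonempty _ _)
  refine ⟨w, ?_, ?_⟩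
  · intro y hy m hm
    have : w m ∈ range w := ⟨m, rfl⟩
    rw [← hw] at this
    rcases this with h | h
    · rw [h, hF0] at hm; exact hm
    · obtain ⟨F, _, hF⟩ := mem_iUnion₂.1 h
      exact h𝓑C F _ hF y hy hm
  · intro x hxS hxL hxn
    let P : Set (ℕ → Ω → unitInterval) :=
      Set.pi Set.univ (fun i => if i < n then L i else if i = n then C else {x i})
    have hPc : IsCompact P := by
      apply isCompact_univ_pi
      intro i
      split_ifs
      · exact hL i
      · exact hC
      · exact isCompact_singleton
    have hP : ∀ y ∈ P, (∀ i < n, y i ∈ L i) ∧ y n ∈ C ∧ ∀ i, y i ∈ S := by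
      intro y hy
      have h1 : ∀ i < n, y i ∈ L i := fun i hi => by
        have := hy i (mem_univ i); simpa only [hi, if_true] using this
      have h2 : y n ∈ C := by
        have := hy n (mem_univ n); simpa using this
      refine ⟨h1, h2, fun i => ?_⟩
      rcases lt_trichotomy i n with h | rfl | h
      · exact hLS i (h1 i h)
      · exact hCS h2
      · have := hy i (mem_univ i)
        simp only [not_lt_of_gt h, h.ne', if_false, mem_singleton_iff] at this
        rw [this]; exact hxS i
    obtain ⟨b, hbJ, hbf, hbcov⟩ := hPc.elim_finite_subcover_image (b := J)
      (c := fun j => {y : ℕ → Ω → unitInterval | ∀ m, y m ∈ V j m})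
      (fun j _ => isOpen_Wn (hVo j) (hVk j))
      (fun y hy => by
        obtain ⟨h1, h2, h3⟩ := hP y hy
        obtain ⟨j, hj, h⟩ := hJC y h3 h1 h2
        exact mem_iUnion₂.2 ⟨j, hj, h⟩)
    let F : Finset ι := hbf.toFinset.filter (fun j => ∀ i > n, x i ∈ V j i)
    have hFJ : (F : Set ι) ⊆ J := fun j hj => hbJ (by
      have := (Finset.mem_filter.1 hj).1
      simpa using this)
    obtain ⟨j, hj, h⟩ := h𝓑 F (by
      intro y hy hyn
      have hy' : (fun i => if i ≤ n then y i else x i) ∈ P := by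
        intro i _
        rcases lt_trichotomy i n with h | rfl | h
        · simp only [h, h.le, if_true]; exact hy i h
        · simpa using hyn
        · simp [not_lt_of_gt h, h.ne', not_le_of_gt h]
      obtain ⟨j, hj, h⟩ := mem_iUnion₂.1 (hbcov hy')
      refine ⟨j, Finset.mem_filter.2 ⟨by simpa using hj, fun i hi => ?_⟩, fun i hi => ?_⟩
      · have := h i
        simpa only [not_le_of_gt hi, if_false] using this
      · have := h i
        simpa only [hi, if_true] using this) x hxL (by
      intro G hG hx
      have : G ∈ range w := by
        rw [← hw]
        exact mem_insert_of_mem _ (mem_iUnion₂.2 ⟨F, hFJ, hG⟩)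
      obtain ⟨m, rfl⟩ := this
      exact hxn m hx)
    refine ⟨j, hFJ hj, fun m => ?_⟩
    rcases le_or_gt m n with hm | hm
    · exact h m hm
    · exact (Finset.mem_filter.1 hj).2 m hm

theorem powC {Ω : Type u} [LinearOrder Ω] (hΩ : OmOne Ω) {S : Set (Ω → unitInterval)}
    (hS : PLS S) {ι : Type*}
    (V : ι → ℕ → Set (Ω → unitInterval)) (hVo : ∀ j n, IsOpen (V j n))
    (hVk : ∀ j, ∃ k, ∀ n ≥ k, V j n = Set.univ)
    (hcov : ∀ x : ℕ → Ω → unitInterval, (∀ i, x i ∈ S) → ∃ j, ∀ m, x m ∈ V j m) :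
    ∃ J : Set ι, J.Countable ∧
      ∀ x : ℕ → Ω → unitInterval, (∀ i, x i ∈ S) → ∃ j ∈ J, ∀ m, x m ∈ V j m := by
  classical
  have := hΩ.unc
  let Good : ℕ → (ℕ → Set (Ω → unitInterval)) → Prop := fun n L =>
    ∃ J : Set ι, J.Countable ∧
      ∀ x : ℕ → Ω → unitInterval, (∀ i, x i ∈ S) → (∀ i < n, x i ∈ L i) → ∃ j ∈ J, ∀ m, x m ∈ V j m
  have step : ∀ n (L : ℕ → Set (Ω → unitInterval)), ∃ C : Set (Ω → unitInterval),
      (∀ i, IsCompact (L i) ∧ L i ⊆ S) → ¬ Good n L →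
      (IsCompact C ∧ C ⊆ S) ∧ ¬ Good (n+1) (Function.update L n C) := by
    intro n L
    by_contra hcon
    push Not at hcon
    obtain ⟨hL, hbad, -⟩ := hcon ∅
    have hg : ∀ C, IsCompact C → C ⊆ S → Good (n+1) (Function.update L n C) :=
      fun C h1 h2 => (hcon C).2.2 ⟨h1, h2⟩
    obtain ⟨𝒟', hsub, hc, hcovS⟩ := alster hΩ hS
      {w | ∃ J : Set ι, J.Countable ∧
        ∀ x : ℕ → Ω → unitInterval, (∀ i, x i ∈ S) → (∀ i < n, x i ∈ L i) → x n ∈ ZZ w →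
        ∃ j ∈ J, ∀ m, x m ∈ V j m} (by
      intro C hC hCS
      obtain ⟨J, hJ, h⟩ := hg C hC hCS
      obtain ⟨w, hw, h2⟩ := tubeStep V hVo hVk n L (fun i => (hL i).1) (fun i => (hL i).2) C hC hCS J hJ
        (by
          intro x hxS hxL hxC
          refine h x hxS fun i hi => ?_
          rcases (Nat.lt_succ_iff.1 hi).lt_or_eq with h' | rfl
          · rw [Function.update_of_ne h'.ne]; exact hxL i h'
          · rw [Function.update_self]; exact hxC)
      exact ⟨w, ⟨J, hJ, h2⟩, hw⟩)
    have hch : ∀ w, ∃ J : Set ι, w ∈ 𝒟' → J.Countable ∧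
        ∀ x : ℕ → Ω → unitInterval, (∀ i, x i ∈ S) → (∀ i < n, x i ∈ L i) → x n ∈ ZZ w →
        ∃ j ∈ J, ∀ m, x m ∈ V j m := by
      intro w
      by_cases hw : w ∈ 𝒟'
      · obtain ⟨J, hJ⟩ := hsub hw
        exact ⟨J, fun _ => hJ⟩
      · exact ⟨∅, fun h => absurd h hw⟩
    choose J hJ using hch
    refine hbad ⟨⋃ w ∈ 𝒟', J w, hc.biUnion fun w hw => (hJ w hw).1, fun x hxS hxL => ?_⟩
    obtain ⟨w, hw, hxw⟩ := mem_iUnion₂.1 (hcovS (hxS n))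
    obtain ⟨j, hj, h⟩ := (hJ w hw).2 x hxS hxL hxw
    exact ⟨j, mem_iUnion₂.2 ⟨w, hw, hj⟩, h⟩
  choose f hf using step
  by_contra hcon
  have hbad0 : ∀ L, ¬ Good 0 L := by
    rintro L ⟨J, hJ, h⟩
    exact hcon ⟨J, hJ, fun x hx => h x hx (fun i hi => absurd hi (Nat.not_lt_zero i))⟩
  let Ls : ℕ → ℕ → Set (Ω → unitInterval) := fun n => Nat.rec (fun _ => ∅)
    (fun n L => Function.update L n (f n L)) n
  have hLs : ∀ n, Ls (n+1) = Function.update (Ls n) n (f n (Ls n)) := fun n => rfl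
  have hinv : ∀ n, (∀ i, IsCompact (Ls n i) ∧ Ls n i ⊆ S) ∧ ¬ Good n (Ls n) := by
    intro n
    induction n with
    | zero => exact ⟨fun i => ⟨isCompact_empty, empty_subset _⟩, hbad0 _⟩
    | succ n ih =>
      obtain ⟨h1, h2⟩ := hf n (Ls n) ih.1 ih.2
      rw [hLs]
      refine ⟨fun i => ?_, h2⟩
      by_cases hi : i = n
      · subst hi; rw [Function.update_self]; exact h1
      · rw [Function.update_of_ne hi]; exact ih.1 i
  have hst : ∀ n, ∀ i < n, Ls n i = Ls (i+1) i := by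
    intro n
    induction n with
    | zero => intro i hi; exact absurd hi (Nat.not_lt_zero i)
    | succ n ih =>
      intro i hi
      rcases (Nat.lt_succ_iff.1 hi).lt_or_eq with h' | rfl
      · rw [hLs n, Function.update_of_ne h'.ne]; exact ih i h'
      · rfl
  let M : ℕ → Set (Ω → unitInterval) := fun i => Ls (i+1) i
  have hM : ∀ i, IsCompact (M i) ∧ M i ⊆ S := fun i => (hinv (i+1)).1 i
  have hbad : ∀ n, ¬ Good n M := by
    rintro n ⟨J, hJ, h⟩
    exact (hinv n).2 ⟨J, hJ, fun x hx hxL => h x hx fun i hi => by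
      have := hxL i hi; rwa [hst n i hi] at this⟩
  have hMne : ∀ i, (M i).Nonempty := by
    intro i
    by_contra hne
    rw [not_nonempty_iff_eq_empty] at hne
    exact hbad (i+1) ⟨∅, countable_empty, fun x _ hxL => by
      have := hxL i (Nat.lt_succ_self i)
      rw [hne] at this
      exact absurd this (notMem_empty _)⟩
  choose z hz using hMne
  obtain ⟨b, hb⟩ := (isCompact_univ_pi fun i => (hM i).1).elim_finite_subcover
    (fun j => {y : ℕ → Ω → unitInterval | ∀ m, y m ∈ V j m})
    (fun j => isOpen_Wn (hVo j) (hVk j))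
    (fun y hy => by
      obtain ⟨j, h⟩ := hcov y fun i => (hM i).2 (hy i (mem_univ i))
      exact mem_iUnion.2 ⟨j, h⟩)
  choose k hk using hVk
  refine hbad (b.sup k) ⟨b, b.countable_toSet, fun x hxS hxM => ?_⟩
  have hy : (fun i => if i < b.sup k then x i else z i) ∈ Set.pi Set.univ M := by
    intro i _
    dsimp only
    split_ifs with h
    · exact hxM i h
    · exact hz i
  obtain ⟨j, hj, h⟩ := mem_iUnion₂.1 (hb hy)
  refine ⟨j, hj, fun m => ?_⟩
  by_cases hm : m < b.sup k
  · have := h m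
    simpa only [hm, if_true] using this
  · rw [hk j m ((Finset.le_sup hj).trans (not_lt.1 hm))]
    trivial

theorem quasi_iff (X : Type u) [TopologicalSpace X] : QuasiLindelofSp X ↔ LindelofSpace X := by
  constructor
  · intro h
    rw [← isLindelof_univ_iff, isLindelof_iff_countable_subcover]
    intro ι U hU hcov
    obtain ⟨𝒱, hsub, hc, h𝒱⟩ := h (range U) (by rintro _ ⟨i, rfl⟩; exact hU i)
      (by rw [sUnion_range]; exact univ_subset_iff.1 hcov)
    have : ∀ W : 𝒱, ∃ i, U i = W := fun W => hsub W.2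
    choose i hi using this
    have := hc.to_subtype
    refine ⟨range i, countable_range i, ?_⟩
    intro x _
    have hx : x ∈ ⋃₀ 𝒱 := by rw [h𝒱]; trivial
    obtain ⟨W, hW, hxW⟩ := hx
    exact mem_iUnion₂.2 ⟨i ⟨W, hW⟩, ⟨⟨W, hW⟩, rfl⟩, by rw [hi]; exact hxW⟩
  · intro h 𝒰 hU hcov
    obtain ⟨t, ht, hc⟩ := (isLindelof_univ (X := X)).elim_countable_subcover
      (fun U : 𝒰 => (U : Set X)) (fun U => hU U U.2) (by rw [← sUnion_eq_iUnion, hcov])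
    refine ⟨Subtype.val '' t, ?_, ht.image _, ?_⟩
    · rintro _ ⟨U, _, rfl⟩; exact U.2
    · rw [sUnion_image]; exact univ_subset_iff.1 hc

theorem exists_OmOne (hCH : (continuum : Cardinal.{u}) = aleph 1) :
    OmOne (aleph 1 : Cardinal.{u}).ord.ToType where
  wf := inferInstance
  unc := by
    rw [← Cardinal.aleph0_lt_mk_iff, Cardinal.mk_ord_toType]
    exact Cardinal.aleph0_lt_aleph_one
  ctb := fun a => by
    rw [Cardinal.countable_iff_lt_aleph_one]
    exact Cardinal.mk_Iio_toType_ord_lt a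
  card := by rw [Cardinal.mk_ord_toType, hCH]

theorem prod_facts (X : Type u) [TopologicalSpace X] (h : ProductivelyLindelofSp X) :
    RegularSpace X ∧ T1Space X ∧ LindelofSpace X ∧ PLS (Set.univ : Set X) := by
  obtain ⟨h1, h2, h3⟩ := h PUnit.{u+1} ⟨inferInstance, inferInstance,
    (quasi_iff _).2 inferInstance⟩
  rw [quasi_iff] at h3
  have e : X ≃ₜ X × PUnit.{u+1} := (Homeomorph.prodPUnit X).symm
  refine ⟨e.isEmbedding.isInducing.regularSpace, e.isEmbedding.t1Space, ?_, ?_⟩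
  · rw [← isLindelof_univ_iff]
    have := (isLindelof_univ (X := X × PUnit.{u+1})).image e.symm.continuous
    rwa [image_univ, e.symm.surjective.range_eq] at this
  · intro Y _ _ _ hY
    obtain ⟨_, _, h3⟩ := h Y ⟨inferInstance, inferInstance, (quasi_iff _).2 hY⟩
    rw [quasi_iff] at h3
    rw [← isLindelof_univ_iff]
    have := (isLindelof_univ (X := X × Y)).image
      (f := fun p : X × Y => ((⟨p.1, mem_univ _⟩ : (Set.univ : Set X)), p.2)) (by fun_prop)
    rw [image_univ] at this
    convert this
    symm
    rw [eq_univ_iff_forall]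
    rintro ⟨⟨x, _⟩, y⟩
    exact ⟨(x, y), rfl⟩

/-- good codes -/
def GoodC {X : Type u} [TopologicalSpace X] (𝒰 : Set (Set (ℕ → X))) (N : Set (Set X))
    (t : ℕ × (ℕ → N)) (f : ℕ → X → unitInterval) (U : Set (ℕ → X)) : Prop :=
  U ∈ 𝒰 ∧ (∀ i < t.1, ∀ x ∈ (t.2 i : Set X), 0 < f i x) ∧
    ∀ y : ℕ → X, (∀ i < t.1, 0 < f i (y i)) → y ∈ U

theorem exists_good {X : Type u} [TopologicalSpace X] [CompletelyRegularSpace X]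
    (𝒰 : Set (Set (ℕ → X))) (h𝒰 : ∀ U ∈ 𝒰, IsOpen U) (hcov : ⋃₀ 𝒰 = Set.univ)
    (N : Set (Set X)) (hN : IsNetwork X N) (x : ℕ → X) :
    ∃ t : ℕ × (ℕ → N), (∀ i, x i ∈ (t.2 i : Set X)) ∧
      ∃ f, (∀ i, Continuous (f i)) ∧ ∃ U, GoodC 𝒰 N t f U := by
  have hx : x ∈ ⋃₀ 𝒰 := by rw [hcov]; trivial
  obtain ⟨U, hU, hxU⟩ := hx
  obtain ⟨I, w, hw, hs⟩ := isOpen_pi_iff.1 (h𝒰 U hU) _ hxU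
  have h1 : ∀ i, ∃ f : X → unitInterval, Continuous f ∧ 0 < f (x i) ∧
      (i ∈ I → ∀ y, 0 < f y → y ∈ w i) := by
    intro i
    by_cases hi : i ∈ I
    · obtain ⟨g, hg, hg0, hg1⟩ := CompletelyRegularSpace.completely_regular (x i) (w i)ᶜ
        (hw i hi).1.isClosed_compl (fun h => h (hw i hi).2)
      refine ⟨fun y => unitInterval.symm (g y), by fun_prop, by simp [hg0], fun _ y hy => ?_⟩
      by_contra h
      have := hg1 h
      simp [this] at hy
    · exact ⟨fun _ => 1, continuous_const, by simp, fun h => absurd h hi⟩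
  choose f hfc hfx hfw using h1
  have h2 : ∀ i, ∃ n ∈ N, x i ∈ n ∧ n ⊆ {y | 0 < f i y} := fun i =>
    hN (x i) _ (isOpen_lt continuous_const (hfc i)) (hfx i)
  choose n hnN hxn hnf using h2
  refine ⟨(I.sup id + 1, fun i => ⟨n i, hnN i⟩), hxn, f, hfc, U, hU, fun i _ y hy => hnf i hy, ?_⟩
  intro y hy
  apply hs
  intro i hi
  exact hfw i hi _ (hy i (Nat.lt_succ_of_le (Finset.le_sup (f := id) hi)))

theorem main_aux {Ω : Type u} [LinearOrder Ω] (hΩ : OmOne Ω)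
    (X : Type u) [TopologicalSpace X] [CompletelyRegularSpace X] (hX : PLS (Set.univ : Set X))
    (N : Set (Set X)) (hN : IsNetwork X N) (hc : #N ≤ continuum) : QuasiLindelofSp (ℕ → X) := by
  classical
  intro 𝒰 h𝒰 hcov
  by_cases hne : Nonempty X
  swap
  · refine ⟨∅, empty_subset _, countable_empty, ?_⟩
    ext y
    exact absurd ⟨y 0⟩ hne
  have hNne : Nonempty N := by
    obtain ⟨n, hn, _⟩ := hN hne.some Set.univ isOpen_univ trivial
    exact ⟨n, hn⟩
  have hcard : #((ℕ × (ℕ → N)) × ℕ) ≤ continuum := by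
    have h1 : #(ℕ → N) ≤ continuum := by
      rw [Cardinal.mk_arrow]
      simp only [Cardinal.lift_uzero, Cardinal.mk_nat, Cardinal.lift_aleph0]
      calc #N ^ ℵ₀ ≤ continuum ^ ℵ₀ := Cardinal.power_le_power_right hc
        _ = continuum := by simp
    simp only [Cardinal.mk_prod, Cardinal.mk_nat, Cardinal.lift_uzero, Cardinal.lift_aleph0]
    calc ℵ₀ * #(ℕ → N) * ℵ₀ ≤ ℵ₀ * continuum * ℵ₀ := by gcongr
      _ = continuum := by simp
  obtain ⟨c, hcs⟩ := hΩ.surj ((ℕ × (ℕ → N)) × ℕ) hcard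
  have hch : ∀ t : ℕ × (ℕ → N), ∃ f : ℕ → X → unitInterval, ∃ U : Set (ℕ → X),
      (∀ i, Continuous (f i)) ∧ ((∃ f, (∀ i, Continuous (f i)) ∧ ∃ U, GoodC 𝒰 N t f U) →
        GoodC 𝒰 N t f U) := by
    intro t
    by_cases h : ∃ f, (∀ i, Continuous (f i)) ∧ ∃ U, GoodC 𝒰 N t f U
    · obtain ⟨f, hf, U, hU⟩ := h
      exact ⟨f, U, hf, fun _ => hU⟩
    · exact ⟨fun _ _ => 0, ∅, fun _ => continuous_const, fun h' => absurd h' h⟩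
  choose f U hf hG using hch
  let e : X → Ω → unitInterval := fun x a => f (c a).1 (c a).2 x
  have he : Continuous e := continuous_pi fun a => hf _ _
  choose a ha using hcs
  have hea : ∀ t i x, e x (a (t, i)) = f t i x := fun t i x => by simp only [e, ha]
  let ι := {t : ℕ × (ℕ → N) // GoodC 𝒰 N t (f t) (U t)}
  let V : ι → ℕ → Set (Ω → unitInterval) := fun t i =>
    if i < t.1.1 then {y | 0 < y (a (t.1, i))} else Set.univ
  obtain ⟨J, hJ, hJc⟩ := powC hΩ (hX.image he) V
    (by
      intro t i
      dsimp only [V]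
      split_ifs
      · exact isOpen_lt continuous_const (continuous_apply _)
      · exact isOpen_univ)
    (fun t => ⟨t.1.1, fun i hi => by simp only [V, not_lt.2 hi, if_false]⟩)
    (by
      intro z hz
      choose x _ hx using hz
      obtain ⟨t, htx, hg⟩ := exists_good 𝒰 h𝒰 hcov N hN x
      have hg' := hG t hg
      refine ⟨⟨t, hg'⟩, fun i => ?_⟩
      dsimp only [V]
      split_ifs with hi
      · change 0 < z i (a (t, i))
        rw [← hx i, hea]
        exact hg'.2.1 i hi _ (htx i)
      · trivial)
  refine ⟨(fun t : ι => U t.1) '' J, ?_, hJ.image _, ?_⟩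
  · rintro _ ⟨t, _, rfl⟩
    exact t.2.1
  · rw [eq_univ_iff_forall]
    intro y
    obtain ⟨t, ht, h⟩ := hJc (fun i => e (y i)) (fun i => ⟨y i, trivial, rfl⟩)
    refine ⟨U t.1, ⟨t, ht, rfl⟩, t.2.2.2 y fun i hi => ?_⟩
    have := h i
    simp only [V, hi, if_true] at this
    have h2 : 0 < e (y i) (a (t.1, i)) := this
    rwa [hea] at h2

/-- Under CH, every productively Lindelöf space with network weight
at most 𝔠 is powerfully Lindelöf. -/
theorem stmt4 (hCH : Cardinal.continuum = Cardinal.aleph 1)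
    (X : Type u) [TopologicalSpace X]
    (hprod : ProductivelyLindelofSp X)
    (hnw : ∃ N : Set (Set X), IsNetwork X N ∧ #N ≤ Cardinal.continuum) :
    PowerfullyLindelofSp X := by
  have hCH' : (continuum : Cardinal.{u}) = aleph 1 := by
    have h := congrArg Cardinal.lift.{u} hCH
    rw [Cardinal.lift_continuum, Cardinal.lift_aleph] at h
    apply Cardinal.lift_injective
    rw [Cardinal.lift_continuum, Cardinal.lift_aleph]
    simpa using h
  obtain ⟨h1, h2, h3, h4⟩ := prod_facts X hprod
  obtain ⟨N, hN, hc⟩ := hnw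
  have hnorm : NormalSpace X := NormalSpace.of_regularSpace_lindelofSpace
  have hcr : CompletelyRegularSpace X := inferInstance
  exact ⟨inferInstance, inferInstance, main_aux (exists_OmOne hCH') X h4 N hN hc⟩
end

section
/- Assume the Continuum Hypothesis. Let X be a productively quasi-Lindelöf topological space. Then every cover of X^ω of size 𝔠 consisting of basic open sets has a countable subcover. -/
open Set Cardinal Topology

universe u v

/-- upward hull of the image of `X` in the Cantor cube. -/
def ZSet {X : Type u} {J : Type u} (B : J → Set X) : Set (J → Bool) :=
  {y | ∃ x, ∀ j, x ∈ B j → y j = true}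

theorem quasi_of_lindelof {Y : Type u} [TopologicalSpace Y] [LindelofSpace Y] :
    QuasiLindelofSp Y := by
  intro 𝒰 ho hc
  obtain ⟨r, hr, hs⟩ := (isLindelof_univ (X := Y)).elim_countable_subcover
    (fun U : 𝒰 => U.1) (fun U => ho _ U.2) (by rw [← sUnion_eq_iUnion, hc])
  refine ⟨Subtype.val '' r, by rintro _ ⟨a, _, rfl⟩; exact a.2, hr.image _, ?_⟩
  refine eq_univ_of_univ_subset (hs.trans ?_)
  intro y hy
  simp only [mem_iUnion] at hy
  obtain ⟨i, hi, hy⟩ := hy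
  exact ⟨i, ⟨i, hi, rfl⟩, hy⟩

theorem michael {X : Type u} [TopologicalSpace X] (hprod : ProductivelyQuasiLindelofSp X)
    {I J : Type u} [LinearOrder I]
    (hI : ∀ γ : I, (Iio γ).Countable)
    (hb : ∀ s : Set I, s.Countable → ∃ γ, ∀ ξ ∈ s, ξ < γ)
    (B : J → Set X) (hB : ∀ j, IsOpen (B j)) (G : I → Set (J → Bool))
    (h1 : ZSet B ⊆ ⋃ α, G α)
    (h2 : ∀ C : Set (J → Bool), IsClosed C → C ⊆ ⋃ α, G α → ∃ δ, C ⊆ ⋃ α ∈ Iio δ, G α)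
    (h3 : ∀ δ, IsLindelof (⋃ α ∈ Iio δ, G α)ᶜ) :
    ∃ δ, ZSet B ⊆ ⋃ α ∈ Iio δ, G α := by
  by_contra hcon
  push Not at hcon
  have hz : ∀ δ, ∃ z ∈ ZSet B, z ∉ ⋃ α ∈ Iio δ, G α := fun δ => not_subset.1 (hcon δ)
  choose z hzZ hzG using hz
  choose w hw using hzZ
  let _ : TopologicalSpace I := ⊥
  have : DiscreteTopology I := ⟨rfl⟩
  let YS : Set ((J → Bool) × OnePoint I) :=
    {q | (q.2 = OnePoint.infty ∧ q.1 ∉ ⋃ α, G α) ∨ ∃ δ : I, q = (z δ, (δ : OnePoint I))}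
  have hL : IsLindelof YS := by
    apply isLindelof_of_countable_subcover
    intro ι U hUo hUc
    let C : Set (J → Bool) := {k | (k, OnePoint.infty) ∉ ⋃ i, U i}
    have hCc : IsClosed C := by
      have : IsOpen {k : J → Bool | (k, (OnePoint.infty : OnePoint I)) ∈ ⋃ i, U i} :=
        (isOpen_iUnion hUo).preimage (by fun_prop)
      exact isClosed_compl_iff.2 this
    obtain ⟨δ, hδ⟩ := h2 C hCc (by
      intro k hk
      by_contra hkG
      exact hk (hUc (Or.inl ⟨rfl, hkG⟩)))
    set N : Set (J → Bool) := (⋃ α ∈ Iio δ, G α)ᶜ with hN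
    have hNU : ∀ k : N, ∃ i, ∃ O : Set (J → Bool), ∃ F : Set I, IsOpen O ∧ k.1 ∈ O ∧ F.Countable ∧
        (∀ y ∈ O, (y, OnePoint.infty) ∈ U i) ∧ ∀ y ∈ O, ∀ β ∉ F, (y, (β : OnePoint I)) ∈ U i := by
      rintro ⟨k, hk⟩
      have : (k, (OnePoint.infty : OnePoint I)) ∈ ⋃ i, U i := by
        by_contra h
        exact hk (hδ h)
      obtain ⟨i, hi⟩ := mem_iUnion.1 this
      obtain ⟨O, P, hO, hP, hkO, hiP, hOP⟩ := isOpen_prod_iff.1 (hUo i) _ _ hi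
      refine ⟨i, O, {β | (β : OnePoint I) ∉ P}, hO, hkO, ?_, fun y hy => hOP ⟨hy, hiP⟩, ?_⟩
      · have := ((OnePoint.isOpen_iff_of_mem hiP).1 hP).2
        have h2 := isCompact_iff_finite.1 this
        refine Set.Finite.countable (h2.subset ?_)
        intro β hβ
        exact hβ
      · intro y hy β hβ
        exact hOP ⟨hy, by simpa using hβ⟩
    choose i O F hO hkO hF hOi hOF using hNU
    obtain ⟨r, hr, hrN⟩ := (h3 δ).elim_countable_subcover O hO
      (fun k hk => mem_iUnion.2 ⟨⟨k, hk⟩, hkO _⟩)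
    have hE : (Iio δ ∪ ⋃ k ∈ r, F k).Countable :=
      (hI δ).union (hr.biUnion fun k _ => hF k)
    have hzU : ∀ β, ∃ j, (z β, (β : OnePoint I)) ∈ U j := fun β =>
      mem_iUnion.1 (hUc (Or.inr ⟨β, rfl⟩))
    choose j hj using hzU
    refine ⟨i '' r ∪ j '' (Iio δ ∪ ⋃ k ∈ r, F k), (hr.image _).union (hE.image _), ?_⟩
    rintro ⟨y, q⟩ (⟨rfl, hy⟩ | ⟨β, hβ⟩)
    · have hyN : y ∈ N := by
        intro h
        apply hy
        simp only [mem_iUnion] at h ⊢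
        obtain ⟨α, _, h⟩ := h
        exact ⟨α, h⟩
      have := hrN hyN
      simp only [mem_iUnion] at this
      obtain ⟨k, hk, hky⟩ := this
      exact mem_biUnion (Or.inl ⟨k, hk, rfl⟩) (hOi k y hky)
    · rw [hβ]
      by_cases hβE : β ∈ Iio δ ∪ ⋃ k ∈ r, F k
      · exact mem_biUnion (Or.inr ⟨β, hβE, rfl⟩) (hj β)
      · have hβ1 : δ ≤ β := by
          by_contra h
          exact hβE (Or.inl (lt_of_not_ge h))
        have hzN : z β ∈ N := by
          intro h
          apply hzG β
          simp only [mem_iUnion] at h ⊢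
          obtain ⟨α, h', h⟩ := h
          exact ⟨α, lt_of_lt_of_le h' hβ1, h⟩
        have := hrN hzN
        simp only [mem_iUnion] at this
        obtain ⟨k, hk, hky⟩ := this
        refine mem_biUnion (Or.inl ⟨k, hk, rfl⟩) (hOF k _ hky β ?_)
        intro h
        exact hβE (Or.inr (mem_biUnion hk h))
  have : LindelofSpace YS := isLindelof_iff_lindelofSpace.1 hL
  have hYE : EngLindelofSp YS := ⟨inferInstance, inferInstance, quasi_of_lindelof⟩
  have hq := hprod YS hYE
  let a : J → Set (X × YS) := fun j => {p | p.1 ∈ B j ∧ p.2.1.1 j = false}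
  let b : I → Set (X × YS) := fun δ => {p | p.2.1.2 = (δ : OnePoint I)}
  obtain ⟨𝒱, hV, hVc, hVU⟩ := hq (range a ∪ range b) (by
    rintro _ (⟨j, rfl⟩ | ⟨δ, rfl⟩)
    · apply IsOpen.inter
      · exact (hB j).preimage continuous_fst
      · exact (isOpen_discrete {false}).preimage
          (by fun_prop : Continuous fun p : X × YS => p.2.1.1 j)
    · have : IsOpen ({(δ : OnePoint I)} : Set (OnePoint I)) := by
        have := OnePoint.isOpenEmbedding_coe (X := I) |>.isOpenMap {δ} (isOpen_discrete _)
        simpa using this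
      exact this.preimage (by fun_prop : Continuous fun p : X × YS => p.2.1.2)) (by
    apply eq_univ_of_forall
    rintro ⟨x, ⟨⟨y, q⟩, hy⟩⟩
    rcases hy with ⟨hq, hy⟩ | ⟨δ, hδ⟩
    · have : y ∉ ZSet B := fun h => hy (h1 h)
      have h' : ∃ j, x ∈ B j ∧ y j = false := by
        by_contra h
        push Not at h
        exact this ⟨x, fun j hj => by simpa using h j hj⟩
      obtain ⟨j, hj⟩ := h'
      exact ⟨_, Or.inl ⟨j, rfl⟩, hj⟩
    · refine ⟨_, Or.inr ⟨δ, rfl⟩, ?_⟩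
      exact congrArg Prod.snd hδ)
  have hinj : Function.Injective b := by
    intro δ δ' h
    have : ((w δ, ⟨(z δ, (δ : OnePoint I)), Or.inr ⟨δ, rfl⟩⟩) : X × YS) ∈ b δ := rfl
    rw [h] at this
    exact OnePoint.coe_injective this
  have hcd : (b ⁻¹' 𝒱).Countable := hVc.preimage hinj
  obtain ⟨γ, hγ⟩ := hb _ hcd
  have hm : ((w γ, ⟨(z γ, (γ : OnePoint I)), Or.inr ⟨γ, rfl⟩⟩) : X × YS) ∈ ⋃₀ 𝒱 := by
    rw [hVU]; trivial
  obtain ⟨S, hS, hmS⟩ := hm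
  rcases hV hS with ⟨j, rfl⟩ | ⟨δ, rfl⟩
  · have := hw γ j hmS.1
    have h' : z γ j = false := hmS.2
    simp [this] at h'
  · have h' : γ = δ := OnePoint.coe_injective hmS
    subst h'
    exact lt_irrefl _ (hγ γ hS)

/-- `S` depends only on the coordinates below `η`. -/
def DetBy {I : Type u} [LinearOrder I] (η : I) (S : Set (I → Bool)) : Prop :=
  ∀ x y : I → Bool, (∀ ξ < η, x ξ = y ξ) → x ∈ S → y ∈ S

/-- restriction. -/
def resTo {I : Type u} [LinearOrder I] (η : I) (x : I → Bool) : Iio η → Bool := fun ξ => x ξ.1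

theorem resTo_continuous {I : Type u} [LinearOrder I] (η : I) : Continuous (resTo η) := by
  unfold resTo; fun_prop

theorem resTo_eq {I : Type u} [LinearOrder I] {η : I} {x y : I → Bool} :
    resTo η x = resTo η y ↔ ∀ ξ < η, x ξ = y ξ := by
  constructor
  · intro h ξ hξ
    exact congrFun h ⟨ξ, hξ⟩
  · intro h
    funext ξ
    exact h ξ.1 ξ.2

theorem DetBy.mono {I : Type u} [LinearOrder I] {η η' : I} {S : Set (I → Bool)}
    (h : DetBy η S) (hh : η ≤ η') : DetBy η' S :=
  fun x y hxy hx => h x y (fun ξ hξ => hxy ξ (hξ.trans_le hh)) hx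

theorem DetBy.compl {I : Type u} [LinearOrder I] {η : I} {S : Set (I → Bool)}
    (h : DetBy η S) : DetBy η Sᶜ :=
  fun x y hxy hx hy => hx (h y x (fun ξ hξ => (hxy ξ hξ).symm) hy)

theorem DetBy.eq_preimage {I : Type u} [LinearOrder I] {η : I} {S : Set (I → Bool)}
    (h : DetBy η S) : S = resTo η ⁻¹' (resTo η '' S) := by
  apply Subset.antisymm (subset_preimage_image _ _)
  rintro y ⟨x, hx, hxy⟩
  exact h x y (resTo_eq.1 hxy) hx

theorem DetBy.isLindelof {I : Type u} [LinearOrder I] (hI : ∀ γ : I, (Iio γ).Countable)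
    {η : I} {S : Set (I → Bool)} (h : DetBy η S) : IsLindelof S := by
  have : Countable (Iio η) := (hI η).to_subtype
  intro f hf hcf hfS
  have hL := HereditarilyLindelofSpace.isLindelof (resTo η '' S)
  have hle : Filter.map (resTo η) f ≤ Filter.principal (resTo η '' S) := by
    rw [← Filter.map_principal]
    exact Filter.map_mono hfS
  obtain ⟨y, hy, hyc⟩ := hL hle
  obtain ⟨x, hxy, hx⟩ :=
    (resTo_continuous η).isProperMap.clusterPt_of_mapClusterPt hyc
  refine ⟨x, ?_, hx⟩
  rw [h.eq_preimage]
  change resTo η x ∈ resTo η '' S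
  rw [hxy]
  exact hy

/-- closed sets with countable support. -/
def CDet {I : Type u} [LinearOrder I] (S : Set (I → Bool)) : Prop :=
  IsClosed S ∧ ∃ η, DetBy η S

theorem card_closed_le {Y : Type u} [TopologicalSpace Y] [SecondCountableTopology Y] :
    #{S : Set Y // IsClosed S} ≤ Cardinal.continuum.{u} := by
  let b := TopologicalSpace.countableBasis Y
  have hb := TopologicalSpace.isBasis_countableBasis Y
  have hbc : Countable b := (TopologicalSpace.countable_countableBasis Y).to_subtype
  let f : {S : Set Y // IsClosed S} → Set b := fun S => {v | v.1 ⊆ S.1ᶜ}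
  have hf : Function.Injective f := by
    intro S T h
    have key : ∀ S : {S : Set Y // IsClosed S}, S.1ᶜ = ⋃ v ∈ f S, v.1 := by
      intro S
      apply Subset.antisymm
      · intro y hy
        obtain ⟨v, hv, hyv, hvS⟩ := hb.exists_subset_of_mem_open hy S.2.isOpen_compl
        exact mem_biUnion (show (⟨v, hv⟩ : b) ∈ f S from hvS) hyv
      · exact iUnion₂_subset fun v hv => hv
    apply Subtype.ext
    rw [← compl_inj_iff, key S, key T, h]
  refine (Cardinal.mk_le_of_injective hf).trans ?_
  rw [Cardinal.mk_set, ← Cardinal.two_power_aleph0]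
  exact Cardinal.power_le_power_left two_ne_zero (Cardinal.mk_le_aleph0)

theorem card_cdet_le {I : Type u} [LinearOrder I] (hI : ∀ γ : I, (Iio γ).Countable)
    (hc : #I = Cardinal.continuum.{u}) :
    #{S : Set (I → Bool) // CDet S} ≤ #I := by
  let f : {S : Set (I → Bool) // CDet S} → (Σ η : I, {T : Set (Iio η → Bool) // IsClosed T}) :=
    fun S => ⟨S.2.2.choose, resTo _ '' S.1,
      (S.2.1.isCompact.image (resTo_continuous _)).isClosed⟩
  let g : (Σ η : I, {T : Set (Iio η → Bool) // IsClosed T}) → Set (I → Bool) :=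
    fun p => resTo p.1 ⁻¹' p.2.1
  have hgf : ∀ S, g (f S) = S.1 := fun S => (S.2.2.choose_spec.eq_preimage).symm
  have hf : Function.Injective f := by
    intro S T h
    apply Subtype.ext
    rw [← hgf, h, hgf]
  refine (Cardinal.mk_le_of_injective hf).trans ?_
  rw [Cardinal.mk_sigma]
  refine (Cardinal.sum_le_sum _ (fun _ => Cardinal.continuum.{u}) ?_).trans ?_
  · intro η
    have : Countable (Iio η) := (hI η).to_subtype
    exact card_closed_le
  · rw [Cardinal.sum_const', hc, Cardinal.continuum_mul_self]

/-- enumeration of a nonempty small set. -/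
theorem exists_enum {I A : Type u} (P : A → Prop) (hP : ∃ a, P a) (h : #{a // P a} ≤ #I) :
    ∃ f : I → A, (∀ i, P (f i)) ∧ ∀ a, P a → ∃ i, f i = a := by
  have : Nonempty {a // P a} := let ⟨a, ha⟩ := hP; ⟨⟨a, ha⟩⟩
  obtain ⟨e⟩ := h
  refine ⟨fun i => (Function.invFun e i).1, fun i => (Function.invFun e i).2, fun a ha => ?_⟩
  exact ⟨e ⟨a, ha⟩, congrArg Subtype.val (Function.leftInverse_invFun e.injective ⟨a, ha⟩)⟩

/-- the saturation of Z at level γ. -/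
def ASet {X I : Type u} [LinearOrder I] (B : I → Set X) (γ : I) : Set (I → Bool) :=
  {y | ∃ x, ∀ ξ < γ, x ∈ B ξ → y ξ = true}

theorem sigma_compact {X : Type u} [TopologicalSpace X] (hprod : ProductivelyQuasiLindelofSp X)
    {I : Type u} [LinearOrder I]
    (hI : ∀ γ : I, (Iio γ).Countable)
    (hb : ∀ s : Set I, s.Countable → ∃ γ, ∀ ξ ∈ s, ξ < γ)
    (hc : #I = Cardinal.continuum.{u})
    (B : I → Set X) (hB : ∀ j, IsOpen (B j)) (γ : I) :
    ∃ H : ℕ → Set (I → Bool), (∀ n, IsClosed (H n)) ∧ (∀ n, DetBy γ (H n)) ∧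
      ⋃ n, H n = ASet B γ := by
  have : Countable (Iio γ) := (hI γ).to_subtype
  let B' : Iio γ → Set X := fun ξ => B ξ.1
  obtain ⟨G, hG, hGs⟩ := exists_enum (I := I)
    (fun C : Set (Iio γ → Bool) => IsClosed C ∧ C ⊆ ZSet B')
    ⟨∅, isClosed_empty, empty_subset _⟩ (by
      rw [hc]
      refine le_trans (Cardinal.mk_le_of_injective
        (f := fun S => (⟨S.1, S.2.1⟩ : {S : Set (Iio γ → Bool) // IsClosed S})) ?_) card_closed_le
      intro S T h
      exact Subtype.ext (congrArg (fun q => q.1) h))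
  obtain ⟨δ, hδ⟩ := michael hprod hI hb B' (fun j => hB _) G
    (by
      intro z hz
      obtain ⟨i, hi⟩ := hGs {z} ⟨isClosed_singleton, by simpa using hz⟩
      exact mem_iUnion.2 ⟨i, by rw [hi]; rfl⟩)
    (by
      intro C hC hCG
      obtain ⟨i, hi⟩ := hGs C ⟨hC, hCG.trans (iUnion_subset fun i => (hG i).2)⟩
      obtain ⟨δ, hδ⟩ := hb {i} (countable_singleton _)
      refine ⟨δ, ?_⟩
      rw [← hi]
      exact subset_biUnion_of_mem (u := G) (hδ i rfl))
    (fun δ => HereditarilyLindelofSpace.isLindelof _)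
  have hcount : (insert ∅ (G '' Iio δ)).Countable := ((hI δ).image _).insert _
  obtain ⟨f, hf⟩ := hcount.exists_eq_range (insert_nonempty _ _)
  have hfp : ∀ n, IsClosed (f n) ∧ f n ⊆ ZSet B' := by
    intro n
    have : f n ∈ insert ∅ (G '' Iio δ) := by rw [hf]; exact mem_range_self n
    rcases this with h | ⟨i, _, h⟩
    · rw [h]; exact ⟨isClosed_empty, empty_subset _⟩
    · rw [← h]; exact hG i
  refine ⟨fun n => resTo γ ⁻¹' f n, fun n => (hfp n).1.preimage (resTo_continuous γ), ?_, ?_⟩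
  · intro n x y hxy hx
    change resTo γ y ∈ f n
    rw [← resTo_eq.2 hxy]
    exact hx
  · apply Subset.antisymm
    · apply iUnion_subset
      intro n y hy
      obtain ⟨x, hx⟩ := (hfp n).2 hy
      exact ⟨x, fun ξ hξ hxξ => hx ⟨ξ, hξ⟩ hxξ⟩
    · rintro y ⟨x, hx⟩
      have : resTo γ y ∈ ZSet B' := ⟨x, fun j hj => hx j.1 j.2 hj⟩
      have := hδ this
      simp only [mem_iUnion] at this
      obtain ⟨α, hα, hy⟩ := this
      have : G α ∈ range f := by rw [← hf]; exact Or.inr ⟨α, hα, rfl⟩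
      obtain ⟨n, hn⟩ := this
      refine mem_iUnion.2 ⟨n, ?_⟩
      change resTo γ y ∈ f n
      rw [hn]; exact hy

theorem asub {X : Type u} [TopologicalSpace X] (hprod : ProductivelyQuasiLindelofSp X)
    {I : Type u} [LinearOrder I]
    (hb : ∀ s : Set I, s.Countable → ∃ γ, ∀ ξ ∈ s, ξ < γ)
    (B : I → Set X) (hB : ∀ j, IsOpen (B j)) (y : I → Bool) (hy : ∀ γ, y ∈ ASet B γ) :
    y ∈ ZSet B := by
  by_contra hn
  have hX : QuasiLindelofSp (X × PUnit.{u+1}) :=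
    hprod _ ⟨inferInstance, inferInstance, quasi_of_lindelof⟩
  let a : I → Set (X × PUnit.{u+1}) := fun j => Prod.fst ⁻¹' (B j)
  obtain ⟨𝒱, hV, hVc, hVU⟩ := hX (a '' {j | y j = false}) (by
    rintro _ ⟨j, _, rfl⟩
    exact (hB j).preimage continuous_fst) (by
    apply eq_univ_of_forall
    rintro ⟨x, q⟩
    by_contra h
    apply hn
    refine ⟨x, fun j hj => ?_⟩
    by_contra hyj
    exact h ⟨_, ⟨j, by simpa using hyj, rfl⟩, hj⟩)
  have : Nonempty I := let ⟨γ, _⟩ := hb ∅ countable_empty; ⟨γ⟩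
  have hV2 : ∀ S ∈ 𝒱, ∃ j, y j = false ∧ a j = S := fun S hS => hV hS
  choose! g hg using hV2
  obtain ⟨γ, hγ⟩ := hb (g '' 𝒱) (hVc.image _)
  obtain ⟨x, hx⟩ := hy γ
  have hm : ((x, PUnit.unit) : X × PUnit.{u+1}) ∈ ⋃₀ 𝒱 := by rw [hVU]; trivial
  obtain ⟨S, hS, hxS⟩ := hm
  have h1 := (hg S hS).1
  have h2 := (hg S hS).2
  rw [← h2] at hxS
  have := hx (g S) (hγ _ ⟨S, hS, rfl⟩) hxS
  rw [this] at h1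
  cases h1

theorem exists_closed_under {I : Type u} [LinearOrder I] [WellFoundedLT I]
    (hI : ∀ γ : I, (Iio γ).Countable)
    (hb : ∀ s : Set I, s.Countable → ∃ γ, ∀ ξ ∈ s, ξ < γ) (f : I → I) :
    ∃ γ, (∃ ξ, ξ < γ) ∧ ∀ ξ < γ, f ξ < γ := by
  have hstep : ∀ a : I, ∃ a', ∀ ξ ≤ a, f ξ < a' := by
    intro a
    have : (Iic a).Countable := by
      rw [← Iio_insert]
      exact (hI a).insert _
    obtain ⟨γ, hγ⟩ := hb (f '' Iic a) (this.image _)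
    exact ⟨γ, fun ξ hξ => hγ _ ⟨ξ, hξ, rfl⟩⟩
  choose g hg using hstep
  obtain ⟨a0, _⟩ := hb ∅ countable_empty
  let s : ℕ → I := fun n => g^[n] a0
  let P : Set I := {γ | ∀ n, s n < γ}
  have hP : P.Nonempty := by
    obtain ⟨γ, hγ⟩ := hb (range s) (countable_range s)
    exact ⟨γ, fun n => hγ _ ⟨n, rfl⟩⟩
  have hmem := WellFounded.min_mem (wellFounded_lt (α := I)) P hP
  refine ⟨WellFounded.min (wellFounded_lt (α := I)) P hP, ⟨s 0, hmem 0⟩, fun ξ hξ => ?_⟩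
  have : ξ ∉ P := fun h => WellFounded.not_lt_min (wellFounded_lt (α := I)) P h hξ
  simp only [P, mem_setOf_eq, not_forall, not_lt] at this
  obtain ⟨n, hn⟩ := this
  have h1 : f ξ < s (n + 1) := by
    simp only [s, Function.iterate_succ_apply']
    exact hg _ _ hn
  exact h1.trans (hmem (n + 1))

/-- cylinder. -/
def cylS {I : Type u} (p : Finset (I × Bool)) : Set (I → Bool) := {x | ∀ q ∈ p, x q.1 = q.2}

theorem isClosed_cylS {I : Type u} (p : Finset (I × Bool)) : IsClosed (cylS p) := by
  have : cylS p = ⋂ q ∈ p, {x : I → Bool | x q.1 = q.2} := by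
    ext x; simp [cylS]
  rw [this]
  refine isClosed_biInter fun q _ => isClosed_eq (by fun_prop) continuous_const

/-- saturation of a set. -/
def satS {I : Type u} [LinearOrder I] (η : I) (C : Set (I → Bool)) : Set (I → Bool) :=
  resTo η ⁻¹' (resTo η '' C)

theorem satS_closed {I : Type u} [LinearOrder I] (η : I) {C : Set (I → Bool)} (hC : IsClosed C) :
    IsClosed (satS η C) :=
  (hC.isCompact.image (resTo_continuous η)).isClosed.preimage (resTo_continuous η)

theorem satS_det {I : Type u} [LinearOrder I] (η : I) (C : Set (I → Bool)) :
    DetBy η (satS η C) := by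
  intro x y hxy hx
  change resTo η y ∈ resTo η '' C
  rw [← resTo_eq.2 hxy]
  exact hx

/-- The Baire category step. -/
theorem baire_step {I : Type u} [LinearOrder I]
    (γ : I) (C T A : Set (I → Bool)) (hC : IsClosed C)
    (H : ℕ → Set (I → Bool)) (hH : ∀ n, IsClosed (H n)) (hHd : ∀ n, DetBy γ (H n))
    (hHA : ⋃ n, H n = A) {κ : Type} [Countable κ] (t : κ → Set (I → Bool))
    (ht : ∀ k, IsClosed (t k)) (hT : ⋃ k, t k = T) (hTd : DetBy γ T)
    (hCT : C \ T ⊆ A) (hne : (C \ T).Nonempty) :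
    ∃ n, ∃ p : Finset (I × Bool), (∀ q ∈ p, q.1 < γ) ∧ ((C \ T) ∩ cylS p).Nonempty ∧
      (C \ T) ∩ cylS p ⊆ H n := by
  classical
  set R : Set (I → Bool) := satS γ C \ T with hR
  have hAd : DetBy γ A := by
    intro x y hxy hx
    rw [← hHA] at hx ⊢
    obtain ⟨n, hn⟩ := mem_iUnion.1 hx
    exact mem_iUnion.2 ⟨n, hHd n x y hxy hn⟩
  have hRC : ∀ y ∈ R, ∃ c ∈ C \ T, ∀ ξ < γ, c ξ = y ξ := by
    rintro y ⟨⟨c, hc, hcy⟩, hyT⟩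
    have h := resTo_eq.1 hcy
    exact ⟨c, ⟨hc, fun hcT => hyT (hTd c y h hcT)⟩, h⟩
  have hRA : R ⊆ A := by
    intro y hy
    obtain ⟨c, hc, h⟩ := hRC y hy
    exact hAd c y h (hCT hc)
  have hRd : DetBy γ R := by
    intro x y hxy hx
    exact ⟨satS_det γ C x y hxy hx.1, hTd.compl x y hxy hx.2⟩
  have hCR : C \ T ⊆ R := fun c hc => ⟨subset_preimage_image _ _ hc.1, hc.2⟩
  set Q := closure R with hQ
  have hQs : Q ⊆ satS γ C := closure_minimal diff_subset (satS_closed γ hC)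
  have : CompactSpace Q := isCompact_iff_compactSpace.1 isClosed_closure.isCompact
  have : Nonempty Q := let ⟨c, hc⟩ := hne; ⟨⟨c, subset_closure (hCR hc)⟩⟩
  let F : ℕ ⊕ κ → Set Q := fun s => Subtype.val ⁻¹' (Sum.elim H t s)
  obtain ⟨s, hs⟩ := nonempty_interior_of_iUnion_of_closed (f := F)
    (by
      rintro (n | k)
      · exact (hH n).preimage continuous_subtype_val
      · exact (ht k).preimage continuous_subtype_val)
    (by
      apply eq_univ_of_forall
      rintro ⟨y, hy⟩
      by_cases hyT : y ∈ T
      · rw [← hT] at hyT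
        obtain ⟨k, hk⟩ := mem_iUnion.1 hyT
        exact mem_iUnion.2 ⟨Sum.inr k, hk⟩
      · have : y ∈ A := hRA ⟨hQs hy, hyT⟩
        rw [← hHA] at this
        obtain ⟨k, hk⟩ := mem_iUnion.1 this
        exact mem_iUnion.2 ⟨Sum.inl k, hk⟩)
  obtain ⟨W, hW, hWi⟩ := isOpen_induced_iff.1 (isOpen_interior (s := F s))
  obtain ⟨⟨y, hyQ⟩, hy⟩ := hs
  have hyW : y ∈ W := by
    rw [← hWi] at hy; exact hy
  obtain ⟨r, hrW, hrR⟩ := mem_closure_iff.1 hyQ W hW hyW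
  have hWF : ∀ x ∈ W, ∀ hx : x ∈ R, (⟨x, subset_closure hx⟩ : Q) ∈ F s := by
    intro x hxW hx
    apply interior_subset
    rw [← hWi]
    exact hxW
  rcases s with n | k
  · obtain ⟨S, u, hu, hSu⟩ := isOpen_pi_iff.1 hW r hrW
    let p : Finset (I × Bool) := (S.filter (· < γ)).image fun i => (i, r i)
    have hp : ∀ x : I → Bool, x ∈ cylS p ↔ ∀ i ∈ S, i < γ → x i = r i := by
      intro x
      simp only [cylS, p, mem_setOf_eq, Finset.mem_image, Finset.mem_filter]
      constructor
      · intro h i hi hiγ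
        exact h (i, r i) ⟨i, ⟨hi, hiγ⟩, rfl⟩
      · rintro h _ ⟨i, ⟨hi, hiγ⟩, rfl⟩
        exact h i hi hiγ
    refine ⟨n, p, ?_, ?_, ?_⟩
    · intro q hq
      simp only [p, Finset.mem_image, Finset.mem_filter] at hq
      obtain ⟨i, hi, rfl⟩ := hq
      exact hi.2
    · obtain ⟨c, hc, h⟩ := hRC r hrR
      exact ⟨c, hc, (hp c).2 fun i _ hi => h i hi⟩
    · rintro x ⟨hx, hxp⟩
      let x' : I → Bool := fun i => if i < γ then x i else r i
      have hxx : ∀ ξ < γ, x ξ = x' ξ := fun ξ hξ => by simp [x', hξ]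
      have hx'R : x' ∈ R := hRd x x' hxx (hCR hx)
      have hx'W : x' ∈ W := by
        apply hSu
        intro i hi
        have : x' i = r i := by
          by_cases hiγ : i < γ
          · simp only [x', hiγ, if_true]
            exact (hp x).1 hxp i hi hiγ
          · simp [x', hiγ]
        rw [this]
        exact (hu i hi).2
      exact hHd n x' x (fun ξ hξ => (hxx ξ hξ).symm) (hWF x' hx'W hx'R)
  · exfalso
    apply hrR.2
    rw [← hT]
    exact mem_iUnion.2 ⟨k, hWF r hrW hrR⟩

theorem alster_s10 {X : Type u} [TopologicalSpace X] (hprod : ProductivelyQuasiLindelofSp X)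
    {I : Type u} [LinearOrder I] [WellFoundedLT I]
    (hI : ∀ γ : I, (Iio γ).Countable)
    (hb : ∀ s : Set I, s.Countable → ∃ γ, ∀ ξ ∈ s, ξ < γ)
    (hc : #I = Cardinal.continuum.{u})
    (B : I → Set X) (hB : ∀ j, IsOpen (B j))
    (Φ : Set (I → Bool) → Prop)
    (hΦ : ∀ C, IsClosed C → C ⊆ ZSet B → ∃ D, CDet D ∧ C ⊆ D ∧ Φ D) :
    ∃ 𝒟 : Set (Set (I → Bool)), 𝒟.Countable ∧ (∀ D ∈ 𝒟, CDet D ∧ Φ D) ∧ ZSet B ⊆ ⋃₀ 𝒟 := by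
  obtain ⟨F, hF, hFs⟩ := exists_enum (I := I) (fun D => CDet D ∧ Φ D)
    (by
      obtain ⟨D, h1, _, h2⟩ := hΦ ∅ isClosed_empty (empty_subset _)
      exact ⟨D, h1, h2⟩)
    (by
      refine le_trans (Cardinal.mk_le_of_injective
        (f := fun S => (⟨S.1, S.2.1⟩ : {S : Set (I → Bool) // CDet S})) ?_) (card_cdet_le hI hc)
      intro S T h
      exact Subtype.ext (congrArg (fun q => q.1) h))
  choose H hHc hHd hHA using sigma_compact hprod hI hb hc B hB
  have hHsub : ∀ γ n, H γ n ⊆ ASet B γ := fun γ n => hHA γ ▸ subset_iUnion (H γ) n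
  have hAanti : ∀ γ δ, γ ≤ δ → ASet B δ ⊆ ASet B γ := by
    rintro γ δ h y ⟨x, hx⟩
    exact ⟨x, fun ξ hξ => hx ξ (hξ.trans_le h)⟩
  have hAdet : ∀ γ, DetBy γ (ASet B γ) := by
    rintro γ x y hxy ⟨w, hw⟩
    exact ⟨w, fun ξ hξ h => by rw [← hxy ξ hξ]; exact hw ξ hξ h⟩
  have hZA : ∀ γ, ZSet B ⊆ ASet B γ := by
    rintro γ y ⟨x, hx⟩
    exact ⟨x, fun ξ _ => hx ξ⟩
  let G : I → Set (I → Bool) := fun γ => {y | y ∈ ASet B γ ∧ ∃ β ≤ γ, y ∈ F β}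
  let T : I → Set (I → Bool) := fun γ => ⋃ α ∈ Iio γ, G α
  have hTmem : ∀ γ y, y ∈ T γ ↔ ∃ α < γ, y ∈ G α := by
    intro γ y; simp [T]
  have hTmono : ∀ γ δ, γ ≤ δ → T γ ⊆ T δ := by
    intro γ δ h y hy
    rw [hTmem] at hy ⊢
    obtain ⟨α, hα, hy⟩ := hy
    exact ⟨α, hα.trans_le h, hy⟩
  choose s hs using fun β => (hF β).1.2
  have hTdet : ∀ δ η, δ ≤ η → (∀ β < δ, s β ≤ η) → DetBy η (T δ) := by
    intro δ η hδ hβ x y hxy hx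
    rw [hTmem] at hx ⊢
    obtain ⟨α, hα, hxA, β, hβα, hxF⟩ := hx
    exact ⟨α, hα, (hAdet α).mono (hα.le.trans hδ) x y hxy hxA, β, hβα,
      (hs β).mono (hβ β (hβα.trans_lt hα)) x y hxy hxF⟩
  obtain ⟨δ, hδ⟩ := michael hprod hI hb B hB G
    (by
      intro z hz
      obtain ⟨D, hD1, hD2, hD3⟩ := hΦ {z} isClosed_singleton (by simpa using hz)
      obtain ⟨β, hβ⟩ := hFs D ⟨hD1, hD3⟩
      refine mem_iUnion.2 ⟨β, hZA β hz, β, le_rfl, ?_⟩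
      rw [hβ]; exact hD2 rfl)
    (by
      intro C hC hCG
      by_contra hcon
      push Not at hcon
      have hne : ∀ γ, (C \ T γ).Nonempty := fun γ => by
        obtain ⟨c, h1, h2⟩ := not_subset.1 (hcon γ)
        exact ⟨c, h1, h2⟩
      have hCA : ∀ γ, C \ T γ ⊆ ASet B γ := by
        rintro γ c ⟨hc1, hc2⟩
        obtain ⟨α, hα⟩ := mem_iUnion.1 (hCG hc1)
        have : γ ≤ α := by
          by_contra h
          exact hc2 ((hTmem _ _).2 ⟨α, lt_of_not_ge h, hα⟩)
        exact hAanti _ _ this hα.1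
      let Γ : Finset (I × Bool) → ℕ → Set I := fun p n =>
        {γ | ((C \ T γ) ∩ cylS p).Nonempty ∧ (C \ T γ) ∩ cylS p ⊆ H γ n}
      -- every Γ p n is bounded
      have hbd : ∀ p n, ∃ γ, ∀ ξ ∈ Γ p n, ξ < γ := by
        intro p n
        by_contra hub
        push Not at hub
        let C0 : Set (I → Bool) := ⋂ γ ∈ Γ p n, H γ n
        obtain ⟨D, hD1, hD2, hD3⟩ := hΦ C0
          (isClosed_biInter fun γ _ => hHc γ n)
          (by
            intro y hy
            apply asub hprod hb B hB
            intro γ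
            obtain ⟨γ', hγ', hle⟩ := hub γ
            exact hAanti _ _ hle (hHsub _ _ (mem_iInter₂.1 hy γ' hγ')))
        obtain ⟨β, hβ⟩ := hFs D ⟨hD1, hD3⟩
        obtain ⟨η, hη⟩ := hD1.2
        have hL : IsLindelof Dᶜ := hη.compl.isLindelof hI
        obtain ⟨r, hr, hrD⟩ := hL.elim_countable_subcover
          (fun γ : Γ p n => (H γ.1 n)ᶜ) (fun γ => (hHc γ.1 n).isOpen_compl)
          (by
            intro y hy
            by_contra hyn
            apply hy
            apply hD2
            refine mem_iInter₂.2 fun γ hγ => ?_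
            by_contra hh
            exact hyn (mem_iUnion.2 ⟨⟨γ, hγ⟩, hh⟩))
        obtain ⟨γ0, hγ0⟩ := hb (insert β (Subtype.val '' r)) ((hr.image _).insert _)
        obtain ⟨γ, hγ, hγle⟩ := hub γ0
        obtain ⟨γ1, hγ1⟩ := hb {γ} (countable_singleton _)
        obtain ⟨γ', hγ', hγ'le⟩ := hub γ1
        have hlt : γ < γ' := (hγ1 γ rfl).trans_le hγ'le
        obtain ⟨c, ⟨hcC, hcT⟩, hcp⟩ := hγ'.1
        have hcH : ∀ ζ ∈ Γ p n, ζ ≤ γ' → c ∈ H ζ n := fun ζ hζ hle =>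
          hζ.2 ⟨⟨hcC, fun h => hcT (hTmono _ _ hle h)⟩, hcp⟩
        have hcD : c ∈ D := by
          by_contra hcD
          have := hrD hcD
          simp only [mem_iUnion] at this
          obtain ⟨ζ, hζ, hcζ⟩ := this
          apply hcζ
          apply hcH ζ.1 ζ.2
          exact ((hγ0 ζ.1 (Or.inr ⟨ζ, hζ, rfl⟩)).le.trans hγle).trans hlt.le
        apply hcT
        rw [hTmem]
        refine ⟨γ, hlt, hHsub _ _ (hcH γ hγ hlt.le), β, ?_, ?_⟩
        · exact (hγ0 β (Or.inl rfl)).le.trans hγle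
        · rw [hβ]; exact hcD
      choose g hg using hbd
      have hf : ∀ ξ : I, ∃ ξ', ξ < ξ' ∧ s ξ < ξ' ∧
          ∀ p : Finset (I × Bool), (∀ q ∈ p, q.1 < ξ) → ∀ n, g p n < ξ' := by
        intro ξ
        have hcnt : {p : Finset (I × Bool) | ∀ q ∈ p, q.1 < ξ}.Countable := by
          have h1 : ((Iio ξ) ×ˢ (Set.univ : Set Bool)).Countable :=
            (hI ξ).prod (Set.countable_univ)
          have h2 := Set.countable_setOf_finite_subset h1
          have h3 : (((↑) : Finset (I × Bool) → Set (I × Bool)) ⁻¹'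
              {t | t.Finite ∧ t ⊆ (Iio ξ) ×ˢ (Set.univ : Set Bool)}).Countable :=
            h2.preimage Finset.coe_injective
          refine h3.mono ?_
          intro p hp
          refine ⟨p.finite_toSet, fun q hq => ⟨hp q hq, trivial⟩⟩
        obtain ⟨ξ', h⟩ := hb (insert ξ (insert (s ξ)
          (⋃ p ∈ {p : Finset (I × Bool) | ∀ q ∈ p, q.1 < ξ}, range (g p))))
          (((hcnt.biUnion fun p _ => countable_range _).insert _).insert _)
        refine ⟨ξ', h _ (Or.inl rfl), h _ (Or.inr (Or.inl rfl)), fun p hp n => h _ ?_⟩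
        exact Or.inr (Or.inr (mem_biUnion (show p ∈ {p : Finset (I × Bool) | ∀ q ∈ p, q.1 < ξ}
          from hp) ⟨n, rfl⟩))
      choose f hf1 hf2 hf3 using hf
      obtain ⟨γ, ⟨ξ0, hξ0⟩, hγ⟩ := exists_closed_under hI hb f
      have hcγ : Countable (Iio γ) := (hI γ).to_subtype
      obtain ⟨e, he⟩ := exists_injective_nat (Iio γ)
      have hTd : DetBy γ (T γ) := hTdet γ γ le_rfl fun β hβ => ((hf2 β).trans (hγ β hβ)).le
      -- decompose T γ as a countable union of closed sets
      let tt : (Iio γ × Iio γ) × ℕ → Set (I → Bool) := fun k =>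
        {y | k.1.2.1 ≤ k.1.1.1} ∩ (H k.1.1.1 k.2 ∩ F k.1.2.1)
      have htt : ∀ k, IsClosed (tt k) := fun k =>
        isClosed_const.inter ((hHc _ _).inter (hF _).1.1)
      have httT : ⋃ k, tt k = T γ := by
        ext y
        rw [hTmem, mem_iUnion]
        constructor
        · rintro ⟨⟨⟨α, β⟩, n⟩, h1, h2, h3⟩
          exact ⟨α.1, α.2, hHsub _ _ h2, β.1, h1, h3⟩
        · rintro ⟨α, hα, h1, β, hβ, h3⟩
          rw [← hHA α] at h1
          obtain ⟨n, hn⟩ := mem_iUnion.1 h1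
          exact ⟨⟨⟨⟨α, hα⟩, ⟨β, hβ.trans_lt hα⟩⟩, n⟩, hβ, hn, h3⟩
      have hnek : Nonempty ((Iio γ × Iio γ) × ℕ) := ⟨⟨⟨⟨ξ0, hξ0⟩, ⟨ξ0, hξ0⟩⟩, 0⟩⟩
      obtain ⟨en, hen⟩ := exists_surjective_nat ((Iio γ × Iio γ) × ℕ)
      obtain ⟨n, p, hp, hpne, hpH⟩ := baire_step γ C (T γ) (ASet B γ) hC (H γ) (hHc γ) (hHd γ)
        (hHA γ) (fun k : ℕ => tt (en k)) (fun k => htt _)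
        (by rw [← httT]; exact hen.iUnion_comp tt) hTd (hCA γ) (hne γ)
      have hpξ : ∃ ξ < γ, ∀ q ∈ p, q.1 < ξ := by
        clear hpne hpH
        induction p using Finset.induction_on with
        | empty => exact ⟨ξ0, hξ0, by simp⟩
        | insert q p _ ih =>
          obtain ⟨ξ, hξ, h⟩ := ih fun q' hq' => hp q' (Finset.mem_insert_of_mem hq')
          have hq := hp q (Finset.mem_insert_self _ _)
          refine ⟨max ξ (f q.1), max_lt hξ (hγ _ hq), fun q' hq' => ?_⟩
          rcases Finset.mem_insert.1 hq' with rfl | hq'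
          · exact (hf1 _).trans_le (le_max_right _ _)
          · exact (h q' hq').trans_le (le_max_left _ _)
      obtain ⟨ξ, hξ, hpξ⟩ := hpξ
      have h1 : γ < g p n := hg p n γ ⟨hpne, hpH⟩
      exact lt_asymm h1 ((hf3 ξ p hpξ n).trans (hγ ξ hξ)))
    (by
      intro δ
      obtain ⟨η, hη⟩ := hb (insert δ (s '' Iio δ)) (((hI δ).image _).insert _)
      exact (hTdet δ η (hη δ (Or.inl rfl)).le
        fun β hβ => (hη _ (Or.inr ⟨β, hβ, rfl⟩)).le).compl.isLindelof hI)
  refine ⟨F '' Iio δ, (hI δ).image _, ?_, ?_⟩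
  · rintro _ ⟨β, _, rfl⟩
    exact hF β
  · intro z hz
    obtain ⟨α, hα, _, β, hβ, hzF⟩ := (hTmem δ z).1 (hδ hz)
    exact ⟨F β, ⟨β, hβ.trans_lt hα, rfl⟩, hzF⟩

/-- covered by countably many members. -/
def CtblCov {X I ι : Type u} (B : I → Set X) (O : ι → Set (ℕ → I → Bool))
    (S : Set (ℕ → I → Bool)) : Prop :=
  ∃ 𝒱 : Set ι, 𝒱.Countable ∧ ∀ f ∈ S, (∀ i, f i ∈ ZSet B) → ∃ u ∈ 𝒱, f ∈ O u

/-- good partial sequences. -/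
def GoodSeq {X I ι : Type u} [LinearOrder I] (B : I → Set X) (O : ι → Set (ℕ → I → Bool))
    (n : ℕ) (C : ℕ → Set (I → Bool)) : Prop :=
  (∀ i, IsClosed (C i) ∧ C i ⊆ ZSet B) ∧
  ∀ D : ℕ → Set (I → Bool), (∀ i < n, CDet (D i) ∧ C i ⊆ D i) →
    ¬ CtblCov B O {f | ∀ i < n, f i ∈ D i}

theorem good_step {X : Type u} [TopologicalSpace X] (hprod : ProductivelyQuasiLindelofSp X)
    {I ι : Type u} [LinearOrder I] [WellFoundedLT I]
    (hI : ∀ γ : I, (Iio γ).Countable) (hb : ∀ s : Set I, s.Countable → ∃ γ, ∀ ξ ∈ s, ξ < γ)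
    (hc : #I = Cardinal.continuum.{u}) (B : I → Set X) (hB : ∀ j, IsOpen (B j))
    (O : ι → Set (ℕ → I → Bool)) (n : ℕ) (C : ℕ → Set (I → Bool)) (hC : GoodSeq B O n C) :
    ∃ C', GoodSeq B O (n + 1) (Function.update C n C') := by
  by_contra hcon
  push Not at hcon
  obtain ⟨𝒟, h𝒟, hD, hZ⟩ := alster_s10 hprod hI hb hc B hB
    (fun D' => ∃ D : ℕ → Set (I → Bool), (∀ i < n, CDet (D i) ∧ C i ⊆ D i) ∧
      CtblCov B O {f | (∀ i < n, f i ∈ D i) ∧ f n ∈ D'}) (by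
    intro C' hC' hCZ
    have h := hcon C'
    unfold GoodSeq at h
    rw [not_and] at h
    have h2 := h (by
      intro i
      by_cases hi : i = n
      · subst hi; simpa using ⟨hC', hCZ⟩
      · simpa [Function.update_of_ne hi] using hC.1 i)
    push Not at h2
    obtain ⟨D, hD, hcv⟩ := h2
    have hn := hD n (Nat.lt_succ_self n)
    rw [Function.update_self] at hn
    refine ⟨D n, hn.1, hn.2, D, fun i hi => ?_, ?_⟩
    · have := hD i (hi.trans (Nat.lt_succ_self n))
      rwa [Function.update_of_ne hi.ne] at this
    · obtain ⟨𝒱, h1, h2⟩ := hcv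
      refine ⟨𝒱, h1, fun f hf hfZ => h2 f (fun i hi => ?_) hfZ⟩
      rcases Nat.lt_succ_iff_lt_or_eq.1 hi with h | h
      · exact hf.1 i h
      · rw [h]; exact hf.2)
  have hD2 : ∀ D' ∈ 𝒟, ∃ D : ℕ → Set (I → Bool), (∀ i < n, CDet (D i) ∧ C i ⊆ D i) ∧
      CtblCov B O {f | (∀ i < n, f i ∈ D i) ∧ f n ∈ D'} := fun D' h => (hD D' h).2
  choose! E hE hEc using hD2
  refine hC.2 (fun i => ⋂ D' ∈ 𝒟, E D' i) (fun i hi => ⟨⟨?_, ?_⟩, ?_⟩) ?_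
  · exact isClosed_biInter fun D' h => ((hE D' h) i hi).1.1
  · have h3 : ∀ D' ∈ 𝒟, ∃ η, DetBy η (E D' i) := fun D' h => ((hE D' h) i hi).1.2
    have : Nonempty I := let ⟨γ, _⟩ := hb ∅ countable_empty; ⟨γ⟩
    choose! e he using h3
    obtain ⟨γ, hγ⟩ := hb (e '' 𝒟) (h𝒟.image _)
    refine ⟨γ, fun x y hxy hx => ?_⟩
    simp only [mem_iInter] at hx ⊢
    intro D' h
    exact (he D' h).mono (hγ _ ⟨D', h, rfl⟩).le x y hxy (hx D' h)
  · exact subset_iInter₂ fun D' h => ((hE D' h) i hi).2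
  · have h4 : ∀ D' ∈ 𝒟, ∃ 𝒱 : Set ι, 𝒱.Countable ∧
      ∀ f ∈ {f | (∀ i < n, f i ∈ E D' i) ∧ f n ∈ D'},
        (∀ i, f i ∈ ZSet B) → ∃ u ∈ 𝒱, f ∈ O u := hEc
    choose! 𝒱 hV1 hV2 using h4
    refine ⟨⋃ D' ∈ 𝒟, 𝒱 D', h𝒟.biUnion hV1, fun f hf hfZ => ?_⟩
    obtain ⟨D', hD', hfD⟩ := hZ (hfZ n)
    obtain ⟨u, hu, hfu⟩ := hV2 D' hD' f ⟨fun i hi => by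
      have := hf i hi
      simp only [mem_iInter] at this
      exact this D' hD', hfD⟩ hfZ
    exact ⟨u, mem_biUnion hD' hu, hfu⟩

theorem satS_anti {I : Type u} [LinearOrder I] {η η' : I} (h : η ≤ η') (C : Set (I → Bool)) :
    satS η' C ⊆ satS η C := by
  rintro x ⟨y, hy, hxy⟩
  exact ⟨y, hy, resTo_eq.2 fun ξ hξ => resTo_eq.1 hxy ξ (hξ.trans_le h)⟩

theorem subset_satS {I : Type u} [LinearOrder I] (η : I) (C : Set (I → Bool)) :
    C ⊆ satS η C := subset_preimage_image _ _

theorem mem_of_satS {I : Type u} [LinearOrder I]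
    (hb : ∀ s : Set I, s.Countable → ∃ γ, ∀ ξ ∈ s, ξ < γ) {C : Set (I → Bool)}
    (hC : IsClosed C) {x : I → Bool} (hx : ∀ η, x ∈ satS η C) : x ∈ C := by
  by_contra hn
  have ho : Cᶜ ∈ 𝓝 x := hC.isOpen_compl.mem_nhds hn
  rw [nhds_pi, Filter.mem_pi] at ho
  obtain ⟨s, hs, t, ht, hst⟩ := ho
  obtain ⟨γ, hγ⟩ := hb s hs.countable
  obtain ⟨y, hy, hxy⟩ := hx γ
  refine hst (fun i hi => ?_ : y ∈ s.pi t) hy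
  rw [resTo_eq.1 hxy i (hγ i hi)]
  exact mem_of_mem_nhds (ht i)

theorem core {X : Type u} [TopologicalSpace X] (hprod : ProductivelyQuasiLindelofSp X)
    {I ι : Type u} [LinearOrder I] [WellFoundedLT I]
    (hI : ∀ γ : I, (Iio γ).Countable) (hb : ∀ s : Set I, s.Countable → ∃ γ, ∀ ξ ∈ s, ξ < γ)
    (hc : #I = Cardinal.continuum.{u}) (B : I → Set X) (hB : ∀ j, IsOpen (B j))
    (O : ι → Set (ℕ → I → Bool)) (hO : ∀ u, IsOpen (O u))
    (hcov : ∀ f : ℕ → I → Bool, (∀ i, f i ∈ ZSet B) → ∃ u, f ∈ O u) :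
    CtblCov B O univ := by
  by_contra hn
  have h0 : GoodSeq B O 0 (fun _ => ∅) := by
    refine ⟨fun i => ⟨isClosed_empty, empty_subset _⟩, fun D _ h => hn ?_⟩
    simpa using h
  choose nx hnx using fun (n : ℕ) (C : {C // GoodSeq B O n C}) =>
    good_step hprod hI hb hc B hB O n C.1 C.2
  let s : ∀ n, {C // GoodSeq B O n C} := fun n =>
    Nat.rec ⟨_, h0⟩ (fun n C => ⟨Function.update C.1 n (nx n C), hnx n C⟩) n
  have hs : ∀ n, (s (n+1)).1 = Function.update (s n).1 n (nx n (s n)) := fun n => rfl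
  let C : ℕ → Set (I → Bool) := fun i => (s (i+1)).1 i
  have hsC : ∀ n, ∀ i < n, (s n).1 i = C i := by
    intro n
    induction n with
    | zero => intro i hi; omega
    | succ n ih =>
      intro i hi
      rcases Nat.lt_succ_iff_lt_or_eq.1 hi with h | h
      · rw [hs, Function.update_of_ne h.ne]; exact ih i h
      · subst h; rfl
  have hCc : ∀ i, IsClosed (C i) := fun i => ((s (i+1)).2.1 i).1
  have hCZ : ∀ i, C i ⊆ ZSet B := fun i => ((s (i+1)).2.1 i).2
  have hne : Nonempty I := let ⟨γ, _⟩ := hb ∅ countable_empty; ⟨γ⟩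
  have hcomp : IsCompact (univ.pi C) := isCompact_univ_pi fun i => (hCc i).isCompact
  obtain ⟨t, ht⟩ := hcomp.elim_finite_subcover O hO (by
    intro f hf
    obtain ⟨u, hu⟩ := hcov f (fun i => hCZ i (hf i trivial))
    exact mem_iUnion.2 ⟨u, hu⟩)
  let V : ℕ × I → Set (ℕ → I → Bool) := fun p => {f | ∀ i < p.1, f i ∈ satS p.2 (C i)}
  have hVc : ∀ p, IsClosed (V p) := by
    intro p
    have : V p = ⋂ i, ⋂ (_ : i < p.1), (fun f : ℕ → I → Bool => f i) ⁻¹' satS p.2 (C i) := by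
      ext f; simp [V]
    rw [this]
    exact isClosed_iInter fun i => isClosed_iInter fun _ =>
      (satS_closed p.2 (hCc i)).preimage (continuous_apply i)
  obtain ⟨⟨n, η⟩, hp⟩ := exists_subset_nhds_of_isCompact' (V := V) (U := ⋃ u ∈ t, O u) (by
      rintro ⟨n, η⟩ ⟨m, θ⟩
      refine ⟨(max n m, max η θ), fun f hf i hi => ?_, fun f hf i hi => ?_⟩
      · exact satS_anti (le_max_left _ _) _ (hf i (lt_of_lt_of_le hi (le_max_left _ _)))
      · exact satS_anti (le_max_right _ _) _ (hf i (lt_of_lt_of_le hi (le_max_right _ _))))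
    (fun p => (hVc p).isCompact) hVc (by
      intro f hf
      refine (isOpen_biUnion fun u _ => hO u).mem_nhds (ht fun i _ => ?_)
      refine mem_of_satS hb (hCc i) fun η => ?_
      exact mem_iInter.1 hf (i+1, η) i (Nat.lt_succ_self i))
  refine (s n).2.2 (fun i => satS η (C i)) (fun i hi => ⟨⟨satS_closed _ (hCc i), η, satS_det _ _⟩, ?_⟩)
    ⟨(t : Set ι), t.countable_toSet, fun f hf _ => ?_⟩
  · rw [hsC n i hi]; exact subset_satS _ _
  · have := hp (show f ∈ V (n, η) from hf)
    simp only [mem_iUnion] at this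
    obtain ⟨u, hu, h⟩ := this
    exact ⟨u, hu, h⟩

theorem index_exists (hCH : Cardinal.continuum.{u} = Cardinal.aleph.{u} 1) :
    ∃ (I : Type u) (_ : LinearOrder I) (_ : WellFoundedLT I),
      (∀ γ : I, (Iio γ).Countable) ∧ (∀ s : Set I, s.Countable → ∃ γ, ∀ ξ ∈ s, ξ < γ) ∧
      #I = Cardinal.continuum.{u} := by
  have hI : ∀ γ : (Cardinal.aleph.{u} 1).ord.ToType, (Iio γ).Countable := by
    intro γ
    have := mk_Iio_toType_ord_lt γ
    rw [← Cardinal.le_aleph0_iff_set_countable]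
    rw [← Order.lt_succ_iff, Cardinal.succ_aleph0]
    exact this
  refine ⟨(Cardinal.aleph.{u} 1).ord.ToType, inferInstance, inferInstance, hI, ?_, ?_⟩
  · intro s hs
    by_contra hcon
    push Not at hcon
    have : (univ : Set (Cardinal.aleph.{u} 1).ord.ToType) ⊆ ⋃ ξ ∈ s, Iic ξ := by
      intro γ _
      obtain ⟨ξ, h1, h2⟩ := hcon γ
      exact mem_biUnion h1 h2
    have h2 : (univ : Set (Cardinal.aleph.{u} 1).ord.ToType).Countable := by
      refine (hs.biUnion fun ξ _ => ?_).mono this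
      rw [← Iio_insert]
      exact (hI ξ).insert _
    rw [← Cardinal.le_aleph0_iff_set_countable, Cardinal.mk_univ, Cardinal.mk_ord_toType] at h2
    exact absurd h2 (not_le.2 Cardinal.aleph0_lt_aleph_one)
  · rw [Cardinal.mk_ord_toType, hCH]

/-- Under CH, if X is productively quasi-Lindelöf, then every cover
of X^ω of size 𝔠 consisting of basic open sets has a countable subcover. -/
theorem stmt10 (hCH : Cardinal.continuum = Cardinal.aleph 1)
    (X : Type u) [TopologicalSpace X]
    (hprod : ProductivelyQuasiLindelofSp X)
    (𝒰 : Set (Set (ℕ → X))) (hbasic : ∀ U ∈ 𝒰, IsBasicOpen X U)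
    (hsize : #𝒰 ≤ Cardinal.continuum) (hcov : ⋃₀ 𝒰 = Set.univ) :
    ∃ 𝒱 ⊆ 𝒰, 𝒱.Countable ∧ ⋃₀ 𝒱 = Set.univ := by
  have hCH2 : Cardinal.continuum.{u} = Cardinal.aleph.{u} 1 := by
    have h := congrArg Cardinal.lift.{u} hCH
    rw [Cardinal.lift_continuum, Cardinal.lift_aleph, Ordinal.lift_one] at h
    apply Cardinal.lift_injective.{_, u}
    rw [Cardinal.lift_continuum, Cardinal.lift_aleph, Ordinal.lift_one]
    exact h
  obtain ⟨I, _, _, hI, hb, hc⟩ := index_exists hCH2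
  choose! V hVo hVf hVU using hbasic
  obtain ⟨B, hBP, hBs⟩ := exists_enum (I := I) (A := Set X)
    (fun S => S ∈ insert Set.univ (range fun p : 𝒰 × ℕ => V p.1.1 p.2)) ⟨Set.univ, mem_insert _ _⟩ (by
      rw [hc]
      refine (Cardinal.mk_insert_le).trans ?_
      refine Cardinal.add_le_of_le Cardinal.aleph0_le_continuum ?_
        (Cardinal.one_lt_aleph0.le.trans Cardinal.aleph0_le_continuum)
      refine Cardinal.mk_range_le.trans ?_
      rw [Cardinal.mk_prod, Cardinal.lift_uzero, Cardinal.mk_nat, Cardinal.lift_aleph0]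
      refine (mul_le_mul' hsize le_rfl).trans ?_
      exact Cardinal.continuum_mul_aleph0.le)
  have hB : ∀ j, IsOpen (B j) := by
    intro j
    rcases hBP j with h | ⟨p, h⟩
    · rw [h]; exact isOpen_univ
    · rw [← h]; exact hVo _ p.1.2 _
  have hj : ∀ (u : 𝒰) (i : ℕ), ∃ j, B j = V u.1 i := fun u i =>
    hBs _ (mem_insert_of_mem _ ⟨(u, i), rfl⟩)
  choose j hj using hj
  let O : 𝒰 → Set (ℕ → I → Bool) := fun u =>
    {f | ∀ i ∈ {i | V u.1 i ≠ Set.univ}, f i (j u i) = true}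
  have hO : ∀ u, IsOpen (O u) := by
    intro u
    have : O u = ⋂ i ∈ {i | V u.1 i ≠ Set.univ},
        (fun f : ℕ → I → Bool => f i (j u i)) ⁻¹' {true} := by
      ext f; simp [O]
    rw [this]
    exact (hVf _ u.2).isOpen_biInter fun i _ =>
      (isOpen_discrete _).preimage ((continuous_apply (j u i)).comp (continuous_apply i))
  obtain ⟨𝒱, hVc, hV⟩ := core hprod hI hb hc B hB O hO (by
    intro f hf
    choose x hx using hf
    have hxu : x ∈ ⋃₀ 𝒰 := by rw [hcov]; trivial
    obtain ⟨U, hU, hxU⟩ := hxu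
    refine ⟨⟨U, hU⟩, fun i _ => hx i _ ?_⟩
    rw [hj]
    rw [hVU U hU] at hxU
    exact hxU i trivial)
  refine ⟨Subtype.val '' 𝒱, by rintro _ ⟨u, _, rfl⟩; exact u.2, hVc.image _, ?_⟩
  apply eq_univ_of_forall
  intro x
  classical
  obtain ⟨u, hu, hxu⟩ := hV (fun i k => decide (x i ∈ B k)) trivial
    (fun i => ⟨x i, fun k hk => by simpa using hk⟩)
  refine ⟨u.1, ⟨u, hu, rfl⟩, ?_⟩
  rw [hVU _ u.2]
  intro i _
  by_cases hi : V u.1 i = Set.univ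
  · rw [hi]; trivial
  · have := hxu i hi
    rw [decide_eq_true_iff, hj] at this
    exact this
end
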